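/- arXiv:1702.03611 — 7 statements merged into one kernel-verified Lean document; each statement's English description precedes it below -/
import Mathlib

section
/- Sylvester's theorem: for every integer N ≥ 1 and every integer n ≥ 0, p_N(n) = ∑_{k=1}^{N} W_k(N,n). -/
/-!
The generating function of `p_N` is `F(x) = 1 / ∏_{j ≤ N} (1 - x ^ j)` (`prod_mul_genFun`), which
follows from the recursion `p_{N+1}(n) = p_N(n) + p_{N+1}(n - N - 1)`
(`pN_succ`). Over `ℂ` the denominator splits into factors `1 - s x` with `s` a root of unity of order
at most `N`, and under the
substitution `x = ρ⁻¹ e^{-z}` the integrand of the wave becomes `ρ ^ n e^{nz} F(x)`.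

The theorem is therefore a case of a formula for a general nonempty product
`F(x) = ∏_{s ∈ S} 1 / (1 - s x)` with nonzero `s` (`sum_residue`): its `n`-th Taylor coefficient is
the sum over `ρ` of the residues at `z = 0` of `ρ ^ n e^{nz} F(ρ⁻¹ e^{-z})`. Both sides are linear
in `F`, and the identity `(a - b) / ((1 - a x)(1 - b x)) = a / (1 - a x) - b / (1 - b x)` lowers the
number of factors as long as two of them differ. This leaves `F(x) = 1 / (1 - a x) ^ (m + 1)`,
where only `ρ = a` gives a pole, and both sides equal `a ^ n` times the binomial coefficient
`(m + n).choose m` (`residue_pow`, `coeff_geom_pow`).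
-/

open Finset

noncomputable section

/-- Integrand for the Sylvester wave `W_k(N,n)`. -/
def waveIntegrand (k N : ℕ) (n : ℤ) (z : ℂ) : ℂ :=
  ∑ ρ ∈ primitiveRoots k ℂ,
    ρ ^ n * Complex.exp ((n : ℂ) * z) /
      ∏ j ∈ Finset.Icc 1 N, (1 - ρ ^ (-(j : ℤ)) * Complex.exp (-(j : ℤ) * z))

/-- `W` is the value of the `k`-th Sylvester wave `W_k(N,n)`. -/
def IsWave (k N : ℕ) (n : ℤ) (W : ℂ) : Prop :=
  ∃ ε > (0 : ℝ), ∀ r : ℝ, 0 < r → r < ε →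
    (1 / (2 * (Real.pi : ℂ) * Complex.I)) * (∮ z in C(0, r), waveIntegrand k N n z) = W

/-- Number of partitions of `n` into at most `N` parts. -/
def pN (N n : ℕ) : ℕ :=
  Finset.card (Finset.univ.filter fun p : n.Partition => p.parts.card ≤ N)

/-! ### Generating function of restricted partitions -/

/-- Lower every part by one and drop the zeros: raising the remaining parts by one and adding back
a `1` for each dropped part recovers the original multiset. -/
lemma raise_lower (l : Multiset ℕ) (h : ∀ x ∈ l, 0 < x) :
    ((l.map Nat.pred).filter (0 < ·)).map Nat.succ +
      Multiset.replicate (l.card - ((l.map Nat.pred).filter (0 < ·)).card) 1 = l := by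
  induction l using Multiset.induction with
  | empty => simp
  | cons x l ih =>
    have ih := ih fun y hy => h y (Multiset.mem_cons_of_mem hy)
    have hx := h x (Multiset.mem_cons_self x l)
    have hc : ((l.map Nat.pred).filter (0 < ·)).card ≤ l.card := by
      simpa using Multiset.card_le_card (Multiset.filter_le (0 < ·) (l.map Nat.pred))
    rw [Multiset.map_cons]
    by_cases hp : 0 < Nat.pred x
    · rw [Multiset.filter_cons_of_pos _ hp, Multiset.map_cons, Multiset.card_cons,
        Multiset.card_cons, Nat.add_sub_add_right, Multiset.cons_add, ih,
        Nat.succ_pred_eq_of_pos hx]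
    · rw [Multiset.filter_cons_of_neg _ hp, Multiset.card_cons, Nat.succ_sub hc,
        Multiset.replicate_succ, Multiset.add_cons, ih]
      have : x = 1 := by rw [Nat.pred_eq_sub_one] at hp; omega
      rw [this]

lemma sum_lower (l : Multiset ℕ) (h : ∀ x ∈ l, 0 < x) :
    ((l.map Nat.pred).filter (0 < ·)).sum + l.card = l.sum := by
  induction l using Multiset.induction with
  | empty => simp
  | cons x l ih =>
    have ih := ih fun y hy => h y (Multiset.mem_cons_of_mem hy)
    have hx := h x (Multiset.mem_cons_self x l)
    have hpx : Nat.pred x = x - 1 := rfl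
    rw [Multiset.map_cons]
    by_cases hp : 0 < Nat.pred x
    · rw [Multiset.filter_cons_of_pos (p := fun y => 0 < y) _ hp, Multiset.sum_cons, Multiset.sum_cons, Multiset.card_cons]
      omega
    · rw [Multiset.filter_cons_of_neg (p := fun y => 0 < y) _ hp, Multiset.sum_cons, Multiset.card_cons]
      omega

lemma lower_raise (l : Multiset ℕ) (h : ∀ x ∈ l, 0 < x) (k : ℕ) :
    ((l.map Nat.succ + Multiset.replicate k 1).map Nat.pred).filter (0 < ·) = l := by
  rw [Multiset.map_add, Multiset.map_map, Multiset.map_replicate, Multiset.filter_add]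
  have h1 : (Multiset.replicate k (Nat.pred 1)).filter (0 < ·) = 0 := by
    rw [Multiset.filter_eq_nil]
    intro a ha
    simp [Multiset.eq_of_mem_replicate ha]
  rw [h1, add_zero]
  simpa using h

/-- Removing one from each part matches the partitions of `m + M` into exactly `M` parts with the
partitions of `m` into at most `M` parts. -/
lemma card_exact (M m : ℕ) :
    (univ.filter fun p : (m + M).Partition => p.parts.card = M).card = pN M m := by
  unfold pN
  refine Finset.card_bij'
    (fun p hp => ⟨(p.parts.map Nat.pred).filter (0 < ·), fun hi => (Multiset.mem_filter.1 hi).2, ?_⟩)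
    (fun q hq => ⟨q.parts.map Nat.succ + Multiset.replicate (M - q.parts.card) 1, ?_, ?_⟩)
    ?_ ?_ ?_ ?_
  · have h := sum_lower p.parts fun x hx => p.parts_pos hx
    rw [(mem_filter.1 hp).2, p.parts_sum] at h
    omega
  · intro i hi
    rcases Multiset.mem_add.1 hi with hi | hi
    · obtain ⟨a, -, rfl⟩ := Multiset.mem_map.1 hi
      exact Nat.succ_pos a
    · rw [Multiset.eq_of_mem_replicate hi]; exact one_pos
  · have h := (mem_filter.1 hq).2
    have h2 : (q.parts.map Nat.succ).sum = q.parts.sum + q.parts.card := by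
      simp [Nat.succ_eq_add_one, Multiset.sum_map_add]
    rw [Multiset.sum_add, h2, q.parts_sum, Multiset.sum_replicate, smul_eq_mul]
    omega
  · intro p hp
    refine mem_filter.2 ⟨mem_univ _, ?_⟩
    have := Multiset.card_le_card (Multiset.filter_le (0 < ·) (p.parts.map Nat.pred))
    rw [Multiset.card_map, (mem_filter.1 hp).2] at this
    exact this
  · intro q hq
    refine mem_filter.2 ⟨mem_univ _, ?_⟩
    have h := (mem_filter.1 hq).2
    simp only [Multiset.card_add, Multiset.card_map, Multiset.card_replicate]
    omega
  · intro p hp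
    apply Nat.Partition.ext
    have h := raise_lower p.parts fun x hx => p.parts_pos hx
    rw [(mem_filter.1 hp).2] at h
    exact h
  · intro q hq
    apply Nat.Partition.ext
    exact lower_raise q.parts (fun x hx => q.parts_pos hx) _

lemma pN_succ (N n : ℕ) :
    pN (N + 1) n = pN N n + if N + 1 ≤ n then pN (N + 1) (n - (N + 1)) else 0 := by
  have h1 : pN (N + 1) n = pN N n +
      (univ.filter fun p : n.Partition => p.parts.card = N + 1).card := by
    unfold pN
    rw [← card_union_of_disjoint]
    · congr 1
      ext p
      simp only [mem_filter, mem_univ, true_and, mem_union]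
      omega
    · rw [disjoint_filter]
      intro p _ h
      omega
  rw [h1]
  congr 1
  split_ifs with h
  · obtain ⟨m, rfl⟩ := Nat.exists_eq_add_of_le' h
    rw [card_exact, Nat.add_sub_cancel]
  · rw [card_eq_zero, filter_eq_empty_iff]
    intro p _ hp
    have := Multiset.card_nsmul_le_sum (s := p.parts) (a := 1) fun x hx => p.parts_pos hx
    rw [p.parts_sum, hp] at this
    simp at this
    omega

lemma pN_zero (n : ℕ) : pN 0 n = if n = 0 then 1 else 0 := by
  unfold pN
  split_ifs with h
  · subst h
    rw [card_eq_one]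
    refine ⟨default, ?_⟩
    ext p
    simp only [mem_filter, mem_univ, true_and, mem_singleton]
    exact ⟨fun _ => Subsingleton.elim _ _, fun h => by simp [h]⟩
  · rw [card_eq_zero, filter_eq_empty_iff]
    intro p _ hp
    have := p.parts_sum
    rw [Multiset.card_eq_zero.1 (Nat.le_zero.1 hp)] at this
    exact h this.symm

/-- The generating function of `p_N` is `1 / ∏_{j ≤ N} (1 - X ^ j)`. -/
lemma prod_mul_genFun (N : ℕ) :
    (∏ j ∈ Icc 1 N, (1 - (PowerSeries.X : PowerSeries ℂ) ^ j)) *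
      PowerSeries.mk (fun n => (pN N n : ℂ)) = 1 := by
  induction N with
  | zero =>
    ext n
    simp [pN_zero, PowerSeries.coeff_one]
  | succ N ih =>
    have h : (1 - (PowerSeries.X : PowerSeries ℂ) ^ (N + 1)) *
        PowerSeries.mk (fun n => (pN (N + 1) n : ℂ)) = PowerSeries.mk (fun n => (pN N n : ℂ)) := by
      ext n
      rw [sub_mul, one_mul, map_sub, PowerSeries.coeff_X_pow_mul', PowerSeries.coeff_mk,
        PowerSeries.coeff_mk, pN_succ]
      split_ifs <;> simp
    rw [Finset.prod_Icc_succ_top (by omega), mul_assoc, h, ih]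

/-! ### Taylor coefficients as sums of residues -/

/-- The geometric series `∑ sⁿ Xⁿ = 1 / (1 - s X)`. -/
def geom (s : ℂ) : PowerSeries ℂ := PowerSeries.mk fun n => s ^ n

lemma geom_mul (s : ℂ) : (1 - PowerSeries.C s * PowerSeries.X) * geom s = 1 := by
  ext n
  rw [sub_mul, one_mul, mul_assoc, map_sub, PowerSeries.coeff_C_mul]
  cases n with
  | zero => simp [geom]
  | succ n => simp [geom, PowerSeries.coeff_succ_X_mul, PowerSeries.coeff_one, pow_succ']

lemma geom_partial_fraction (a b : ℂ) :
    PowerSeries.C (a - b) * (geom a * geom b) =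
      PowerSeries.C a * geom a - PowerSeries.C b * geom b := by
  rw [map_sub]
  linear_combination (PowerSeries.C a * geom a) * geom_mul b -
    (PowerSeries.C b * geom b) * geom_mul a

lemma coeff_geom_pow (a : ℂ) (m n : ℕ) :
    PowerSeries.coeff n (geom a ^ (m + 1)) = a ^ n * ((m + n).choose m : ℂ) := by
  have : geom a = PowerSeries.rescale a (PowerSeries.mk 1) := by
    ext n; simp [geom]
  rw [this, ← map_pow, PowerSeries.mk_one_pow_eq_mk_choose_add, PowerSeries.coeff_rescale,
    PowerSeries.coeff_mk]

/-- The product of the `1 / (1 - s x)` over `s ∈ S`. -/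
def recip (S : Multiset ℂ) (x : ℂ) : ℂ := (S.map fun s => (1 - s * x)⁻¹).prod

/-- The integrand of the residue at the root `ρ`, in the coordinate `z` with `x = ρ⁻¹ e^{-z}`. -/
def localTerm (n : ℕ) (S : Multiset ℂ) (ρ z : ℂ) : ℂ :=
  ρ ^ n * Complex.exp (n * z) * recip S (ρ⁻¹ * Complex.exp (-z))

lemma exp_mul_pow_hasDerivAt (n m : ℕ) (z : ℂ) (hz : 1 - Complex.exp (-z) ≠ 0) :
    HasDerivAt (fun z => Complex.exp (n * z) * ((1 - Complex.exp (-z))⁻¹) ^ (m + 1))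
      ((n + m + 1) * (Complex.exp (n * z) * ((1 - Complex.exp (-z))⁻¹) ^ (m + 1)) -
        (m + 1) * (Complex.exp (n * z) * ((1 - Complex.exp (-z))⁻¹) ^ (m + 2))) z := by
  have h1 : HasDerivAt (fun z : ℂ => Complex.exp (n * z)) (Complex.exp (n * z) * n) z := by
    simpa using ((hasDerivAt_id z).const_mul (n : ℂ)).cexp
  have h2 : HasDerivAt (fun z : ℂ => 1 - Complex.exp (-z)) (Complex.exp (-z)) z := by
    simpa using ((hasDerivAt_id z).neg.cexp).const_sub 1
  have h3 := h1.mul ((h2.inv hz).pow (m + 1))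
  refine h3.congr_deriv ?_
  have h4 : Complex.exp (-z) = 1 - (1 - Complex.exp (-z)) := by ring
  simp only [Pi.pow_apply, Pi.inv_apply, Nat.add_sub_cancel]
  generalize hu : 1 - Complex.exp (-z) = u at *
  rw [h4, div_eq_mul_inv, ← inv_pow]
  have hu1 : u * u⁻¹ = 1 := mul_inv_cancel₀ hz
  push_cast
  linear_combination Complex.exp (n * z) * (m + 1) * u⁻¹ ^ m * u⁻¹ * hu1

/-- Simple pole: the residue at `0` of `e^{nz} / (1 - e^{-z})` is `1`. -/
lemma residue_simple (n : ℕ) (r : ℝ) (hr : 0 < r)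
    (h : ∀ z ∈ Metric.closedBall (0 : ℂ) r, z ≠ 0 → 1 - Complex.exp (-z) ≠ 0) :
    (∮ z in C(0, r), Complex.exp (n * z) * (1 - Complex.exp (-z))⁻¹) =
      2 * Real.pi * Complex.I := by
  -- `g` is `(1 - e^{-z}) / z` with the singularity removed, so `g 0 = 1`.
  set g : ℂ → ℂ := dslope (fun z => 1 - Complex.exp (-z)) 0 with hg
  have hd : Differentiable ℂ (fun z : ℂ => 1 - Complex.exp (-z)) := by fun_prop
  have hgd : Differentiable ℂ g := by
    rw [← differentiableOn_univ, hg, Complex.differentiableOn_dslope Filter.univ_mem]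
    exact hd.differentiableOn
  have hg0 : g 0 = 1 := by
    have h2 : HasDerivAt (fun z : ℂ => 1 - Complex.exp (-z)) (Complex.exp (-0)) 0 := by
      simpa using ((hasDerivAt_id (0 : ℂ)).neg.cexp).const_sub 1
    rw [hg, dslope_same, h2.deriv]; simp
  have hgz : ∀ z ≠ 0, g z = z⁻¹ * (1 - Complex.exp (-z)) := by
    intro z hz
    rw [hg, dslope_of_ne _ hz, slope_def_field]
    simp [div_eq_inv_mul]
  have hgne : ∀ z ∈ Metric.closedBall (0 : ℂ) r, g z ≠ 0 := by
    intro z hz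
    by_cases h0 : z = 0
    · rw [h0, hg0]; exact one_ne_zero
    · rw [hgz z h0]; exact mul_ne_zero (inv_ne_zero h0) (h z hz h0)
  have hf : DifferentiableOn ℂ (fun z => Complex.exp (n * z) * (g z)⁻¹)
      (Metric.closedBall 0 r) := by
    intro z hz
    have h1 : DifferentiableAt ℂ g z := hgd z
    have h2 := h1.inv (hgne z hz)
    have h3 : DifferentiableAt ℂ (fun z : ℂ => Complex.exp (n * z)) z := by fun_prop
    exact (h3.mul h2).differentiableWithinAt
  have key := hf.circleIntegral_sub_inv_smul (w := 0) (by simpa using hr)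
  simp only [hg0, smul_eq_mul, mul_zero, Complex.exp_zero, inv_one, mul_one, sub_zero] at key
  rw [← key]
  refine circleIntegral.integral_congr hr.le fun z hz => ?_
  have hz0 : z ≠ 0 := by
    rintro rfl; simp at hz; exact hr.ne hz
  simp only [hgz z hz0, mul_inv, inv_inv]
  field_simp

/-- The residue at `0` of `e^{nz} / (1 - e^{-z})^{m+1}`: integrating the derivative of one such
function to zero relates consecutive values of `m`. -/
lemma residue_pow (n m : ℕ) (r : ℝ) (hr : 0 < r)
    (h : ∀ z ∈ Metric.closedBall (0 : ℂ) r, z ≠ 0 → 1 - Complex.exp (-z) ≠ 0) :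
    (∮ z in C(0, r), Complex.exp (n * z) * ((1 - Complex.exp (-z))⁻¹) ^ (m + 1)) =
      2 * Real.pi * Complex.I * ((m + n).choose m : ℂ) := by
  have hs : ∀ z ∈ Metric.sphere (0 : ℂ) r, 1 - Complex.exp (-z) ≠ 0 := by
    intro z hz
    refine h z (Metric.sphere_subset_closedBall hz) ?_
    rintro rfl; simp at hz; exact hr.ne hz
  induction m with
  | zero => simpa using residue_simple n r hr h
  | succ m ih =>
    have hcont : ∀ k : ℕ, ContinuousOn
        (fun z => Complex.exp (n * z) * ((1 - Complex.exp (-z))⁻¹) ^ (k + 1))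
        (Metric.sphere 0 r) := fun k z hz => (exp_mul_pow_hasDerivAt n k z (hs z hz)).continuousAt.continuousWithinAt
    have h0 := circleIntegral.integral_eq_zero_of_hasDerivWithinAt hr.le
      fun z hz => (exp_mul_pow_hasDerivAt n m z (hs z hz)).hasDerivWithinAt
    rw [circleIntegral.integral_sub, circleIntegral.integral_const_mul,
      circleIntegral.integral_const_mul, ih] at h0
    · have hm : (m + 1 : ℂ) ≠ 0 := by exact_mod_cast m.succ_ne_zero
      apply mul_left_cancel₀ hm
      have hc : ((m + 1 + n).choose (m + 1) : ℂ) * (m + 1) = (n + m + 1) * ((m + n).choose m) := by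
        have := Nat.add_one_mul_choose_eq (m + n) m
        rw [show m + n + 1 = m + 1 + n by ring] at this
        have h2 : ((m + 1 + n : ℕ) : ℂ) * ((m + n).choose m) =
            ((m + 1 + n).choose (m + 1) : ℂ) * (m + 1) := by exact_mod_cast this
        rw [← h2]; push_cast; ring
      linear_combination -h0 - 2 * Real.pi * Complex.I * hc
    · exact ((hcont m).const_mul _).circleIntegrable hr.le
    · exact ((hcont (m + 1)).const_mul _).circleIntegrable hr.le

/-- The radius `r` is so small that, for `s, ρ ∈ T`, the function `1 - s ρ⁻¹ e^{-z}` vanishes in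
the closed disc of radius `r` at most at the origin. -/
def SmallRadius (T : Finset ℂ) (r : ℝ) : Prop :=
  ∀ s ∈ T, ∀ ρ ∈ T, ∀ z ∈ Metric.closedBall (0 : ℂ) r, z ≠ 0 →
    1 - s * (ρ⁻¹ * Complex.exp (-z)) ≠ 0

lemma exists_smallRadius (T : Finset ℂ) (hT : ∀ s ∈ T, s ≠ 0) :
    ∃ δ > 0, ∀ r < δ, SmallRadius T r := by
  have h : ∀ᶠ z in nhdsWithin (0 : ℂ) {0}ᶜ, ∀ s ∈ T, ∀ ρ ∈ T,
      1 - s * (ρ⁻¹ * Complex.exp (-z)) ≠ 0 := by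
    rw [Filter.eventually_all_finset]
    intro s hs
    rw [Filter.eventually_all_finset]
    intro ρ hρ
    have hd : HasDerivAt (fun z : ℂ => 1 - s * (ρ⁻¹ * Complex.exp (-z))) (s * ρ⁻¹) 0 := by
      have h1 : HasDerivAt (fun z : ℂ => Complex.exp (-z)) (-1) 0 := by
        simpa using (hasDerivAt_id (0 : ℂ)).neg.cexp
      simpa using ((h1.const_mul ρ⁻¹).const_mul s).const_sub 1
    exact hd.eventually_ne (mul_ne_zero (hT s hs) (inv_ne_zero (hT ρ hρ)))
  rw [eventually_nhdsWithin_iff, Metric.eventually_nhds_iff] at h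
  obtain ⟨δ, hδ, h⟩ := h
  refine ⟨δ, hδ, fun r hr s hs ρ hρ z hz hz0 => h ?_ hz0 s hs ρ hρ⟩
  exact lt_of_le_of_lt (Metric.mem_closedBall.1 hz) hr

lemma continuousOn_localTerm {T : Finset ℂ} {r : ℝ} (hr : 0 < r) (hT : SmallRadius T r) (n : ℕ)
    (S : Multiset ℂ) (hS : ∀ s ∈ S, s ∈ T) {ρ : ℂ} (hρ : ρ ∈ T) :
    ContinuousOn (localTerm n S ρ) (Metric.sphere 0 r) := by
  unfold localTerm recip
  refine ContinuousOn.mul (by fun_prop) ?_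
  refine continuousOn_multiset_prod S fun s hs => ?_
  refine ContinuousOn.inv₀ (by fun_prop) fun z hz => ?_
  refine hT s (hS s hs) ρ hρ z (Metric.sphere_subset_closedBall hz) ?_
  rintro rfl; simp at hz; exact hr.ne hz

lemma localTerm_partial_fraction (n : ℕ) (S : Multiset ℂ) (ρ z a b : ℂ) (hab : a ≠ b)
    (ha : 1 - a * (ρ⁻¹ * Complex.exp (-z)) ≠ 0) (hb : 1 - b * (ρ⁻¹ * Complex.exp (-z)) ≠ 0) :
    localTerm n (a ::ₘ b ::ₘ S) ρ z =
      (a / (a - b)) * localTerm n (a ::ₘ S) ρ z - (b / (a - b)) * localTerm n (b ::ₘ S) ρ z := by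
  have hab' := sub_ne_zero.2 hab
  simp only [localTerm, recip, Multiset.map_cons, Multiset.prod_cons]
  generalize ρ⁻¹ * Complex.exp (-z) = x at *
  generalize (S.map fun s => (1 - s * x)⁻¹).prod = P
  have hA := mul_inv_cancel₀ ha
  have hB := mul_inv_cancel₀ hb
  have hd := mul_inv_cancel₀ hab'
  rw [div_eq_mul_inv, div_eq_mul_inv]
  linear_combination ρ ^ n * Complex.exp (n * z) * P *
    (-(1 - a * x)⁻¹ * (1 - b * x)⁻¹ * hd + (a - b)⁻¹ *
      (a * (1 - a * x)⁻¹ * hB - b * (1 - b * x)⁻¹ * hA))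

/-- When all the factors coincide, only `ρ = a` contributes to the sum of residues. -/
lemma sum_residue_replicate {T : Finset ℂ} (hT0 : ∀ s ∈ T, s ≠ 0) {r : ℝ} (hr : 0 < r)
    (hT : SmallRadius T r) (n m : ℕ) {a : ℂ} (ha : a ∈ T) :
    ∑ ρ ∈ T, (∮ z in C(0, r), localTerm n (Multiset.replicate (m + 1) a) ρ z) =
      2 * Real.pi * Complex.I *
        PowerSeries.coeff n (((Multiset.replicate (m + 1) a).map geom).prod) := by
  simp only [localTerm, recip, Multiset.map_replicate, Multiset.prod_replicate, coeff_geom_pow]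
  rw [Finset.sum_eq_single_of_mem a ha]
  · have ha0 := hT0 a ha
    have h1 : ∀ z, a * (a⁻¹ * Complex.exp (-z)) = Complex.exp (-z) := fun z => by field_simp
    simp only [h1, mul_assoc]
    rw [circleIntegral.integral_const_mul, residue_pow n m r hr]
    · ring
    · intro z hz hz0
      simpa only [h1] using hT a ha a ha z hz hz0
  · intro ρ hρ hne
    have hρ0 := hT0 ρ hρ
    have hd : ∀ z ∈ Metric.closedBall (0 : ℂ) r, DifferentiableAt ℂ (fun z => ρ ^ n *
        Complex.exp (n * z) * (1 - a * (ρ⁻¹ * Complex.exp (-z)))⁻¹ ^ (m + 1)) z := by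
      intro z hz
      have hz1 : 1 - a * (ρ⁻¹ * Complex.exp (-z)) ≠ 0 := by
        by_cases hz0 : z = 0
        · rw [hz0, neg_zero, Complex.exp_zero, mul_one, sub_ne_zero]
          intro h
          apply hne
          field_simp at h
          exact h
        · exact hT a ha ρ hρ z hz hz0
      refine DifferentiableAt.mul (by fun_prop) (DifferentiableAt.pow ?_ _)
      exact DifferentiableAt.fun_inv (by fun_prop) hz1
    exact Complex.circleIntegral_eq_zero_of_differentiable_on_off_countable hr.le
      Set.countable_empty (fun z hz => (hd z hz).continuousAt.continuousWithinAt)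
      fun z hz => hd z (Metric.ball_subset_closedBall hz.1)

/-- The `n`-th Taylor coefficient of `∏ 1 / (1 - s X)` is a sum of residues. Splitting off partial
fractions reduces the number of factors until all of them are equal. -/
lemma sum_residue {T : Finset ℂ} (hT0 : ∀ s ∈ T, s ≠ 0) {r : ℝ} (hr : 0 < r)
    (hT : SmallRadius T r) (n : ℕ) (m : ℕ) : ∀ S : Multiset ℂ, S.card = m + 1 →
    (∀ s ∈ S, s ∈ T) →
    ∑ ρ ∈ T, (∮ z in C(0, r), localTerm n S ρ z) =
      2 * Real.pi * Complex.I * PowerSeries.coeff n ((S.map geom).prod) := by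
  induction m with
  | zero =>
    intro S hc hS
    obtain ⟨a, rfl⟩ := Multiset.card_eq_one.1 hc
    exact sum_residue_replicate hT0 hr hT n 0 (hS a (by simp))
  | succ m ih =>
    intro S hc hS
    obtain ⟨a, ha⟩ := Multiset.card_pos_iff_exists_mem.1 (by omega : 0 < S.card)
    by_cases hall : ∀ b ∈ S, b = a
    · rw [Multiset.eq_replicate.2 ⟨hc, hall⟩]
      exact sum_residue_replicate hT0 hr hT n _ (hS a ha)
    · push Not at hall
      obtain ⟨b, hb, hba⟩ := hall
      obtain ⟨S, rfl⟩ := Multiset.exists_cons_of_mem ha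
      obtain ⟨S, rfl⟩ := Multiset.exists_cons_of_mem ((Multiset.mem_cons.1 hb).resolve_left hba)
      have hab' := sub_ne_zero.2 hba.symm
      simp only [Multiset.card_cons] at hc
      have hSa : ∀ s ∈ a ::ₘ S, s ∈ T := fun s hs => hS s (by
        simp only [Multiset.mem_cons] at hs ⊢; tauto)
      have hSb : ∀ s ∈ b ::ₘ S, s ∈ T := fun s hs => hS s (by
        simp only [Multiset.mem_cons] at hs ⊢; tauto)
      have iha := ih (a ::ₘ S) (by rw [Multiset.card_cons]; omega) hSa
      have ihb := ih (b ::ₘ S) (by rw [Multiset.card_cons]; omega) hSb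
      have hI : ∀ ρ ∈ T, (∮ z in C(0, r), localTerm n (a ::ₘ b ::ₘ S) ρ z) =
          (a / (a - b)) * (∮ z in C(0, r), localTerm n (a ::ₘ S) ρ z) -
            (b / (a - b)) * (∮ z in C(0, r), localTerm n (b ::ₘ S) ρ z) := by
        intro ρ hρ
        rw [← circleIntegral.integral_const_mul, ← circleIntegral.integral_const_mul,
          ← circleIntegral.integral_sub]
        · refine circleIntegral.integral_congr hr.le fun z hz => ?_
          have hz0 : z ≠ 0 := by
            rintro rfl; simp at hz; exact hr.ne hz
          have hz1 := Metric.sphere_subset_closedBall hz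
          exact localTerm_partial_fraction n S ρ z a b hba.symm
            (hT a (hSa a (by simp)) ρ hρ z hz1 hz0) (hT b (hSb b (by simp)) ρ hρ z hz1 hz0)
        · exact ((continuousOn_localTerm hr hT n _ hSa hρ).const_mul _).circleIntegrable hr.le
        · exact ((continuousOn_localTerm hr hT n _ hSb hρ).const_mul _).circleIntegrable hr.le
      rw [Finset.sum_congr rfl hI, Finset.sum_sub_distrib, ← Finset.mul_sum, ← Finset.mul_sum,
        iha, ihb]
      have hps : (a - b) * PowerSeries.coeff n (((a ::ₘ b ::ₘ S).map geom).prod) =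
          a * PowerSeries.coeff n (((a ::ₘ S).map geom).prod) -
            b * PowerSeries.coeff n (((b ::ₘ S).map geom).prod) := by
        simp only [Multiset.map_cons, Multiset.prod_cons]
        rw [← PowerSeries.coeff_C_mul, ← PowerSeries.coeff_C_mul, ← PowerSeries.coeff_C_mul,
          ← map_sub]
        congr 1
        linear_combination (S.map geom).prod * geom_partial_fraction a b
      field_simp
      linear_combination -hps

/-! ### Roots of unity and the waves -/

/-- The roots, with multiplicity, of the denominator `∏_{j ≤ N} (1 - x ^ j)`. -/
def denomRoots (N : ℕ) : Multiset ℂ :=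
  (Icc 1 N).val.bind fun j => (Polynomial.nthRootsFinset j (1 : ℂ)).val

/-- The roots of unity of order at most `N`. -/
def rootsUpTo (N : ℕ) : Finset ℂ := (Icc 1 N).biUnion fun k => primitiveRoots k ℂ

lemma mem_rootsUpTo_of_mem_denomRoots {N : ℕ} {s : ℂ} (hs : s ∈ denomRoots N) :
    s ∈ rootsUpTo N := by
  obtain ⟨j, hj, hsj⟩ := Multiset.mem_bind.1 hs
  have hj := Finset.mem_Icc.1 (show j ∈ Icc 1 N from hj)
  have hsj := (Polynomial.mem_nthRootsFinset hj.1 1).1 hsj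
  have hpos : 0 < orderOf s := orderOf_pos_iff.2 (isOfFinOrder_iff_pow_eq_one.2 ⟨j, hj.1, hsj⟩)
  refine Finset.mem_biUnion.2 ⟨orderOf s, Finset.mem_Icc.2 ⟨hpos, ?_⟩, ?_⟩
  · exact (Nat.le_of_dvd hj.1 (orderOf_dvd_of_pow_eq_one hsj)).trans hj.2
  · exact (mem_primitiveRoots hpos).2 (IsPrimitiveRoot.orderOf s)

lemma ne_zero_of_mem_rootsUpTo {N : ℕ} {s : ℂ} (hs : s ∈ rootsUpTo N) : s ≠ 0 := by
  obtain ⟨k, hk, hsk⟩ := Finset.mem_biUnion.1 hs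
  have hk := (Finset.mem_Icc.1 hk).1
  exact ((mem_primitiveRoots hk).1 hsk).ne_zero (by omega)

lemma prod_nthRoots (j : ℕ) (hj : 0 < j) (x : ℂ) :
    ∏ ζ ∈ Polynomial.nthRootsFinset j (1 : ℂ), (1 - ζ * x) = 1 - x ^ j := by
  have := (Complex.isPrimitiveRoot_exp j hj.ne').pow_sub_pow_eq_prod_sub_mul 1 x hj
  rw [← this, one_pow]

lemma prod_nthRoots_powerSeries (j : ℕ) (hj : 0 < j) :
    ∏ ζ ∈ Polynomial.nthRootsFinset j (1 : ℂ), (1 - PowerSeries.C ζ * PowerSeries.X) =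
      1 - (PowerSeries.X : PowerSeries ℂ) ^ j := by
  have h : ∏ ζ ∈ Polynomial.nthRootsFinset j (1 : ℂ), (1 - Polynomial.C ζ * Polynomial.X) =
      1 - (Polynomial.X : Polynomial ℂ) ^ j := by
    refine Polynomial.funext fun x => ?_
    simpa [Polynomial.eval_prod] using prod_nthRoots j hj x
  have h2 := congrArg (Polynomial.coeToPowerSeries.ringHom (R := ℂ)) h
  simpa [map_prod] using h2

lemma recip_denomRoots (N : ℕ) (x : ℂ) :
    recip (denomRoots N) x = (∏ j ∈ Icc 1 N, (1 - x ^ j))⁻¹ := by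
  rw [recip, denomRoots, Multiset.map_bind, Multiset.prod_bind, ← Finset.prod_inv_distrib]
  refine Finset.prod_congr rfl fun j hj => ?_
  rw [← prod_nthRoots j (Finset.mem_Icc.1 hj).1 x, ← Finset.prod_inv_distrib]
  rfl

lemma denomRoots_prod_geom (N : ℕ) :
    ((denomRoots N).map geom).prod = PowerSeries.mk fun n => (pN N n : ℂ) := by
  have h1 : ((denomRoots N).map fun s => 1 - PowerSeries.C s * PowerSeries.X).prod =
      ∏ j ∈ Icc 1 N, (1 - (PowerSeries.X : PowerSeries ℂ) ^ j) := by
    rw [denomRoots, Multiset.map_bind, Multiset.prod_bind]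
    refine Finset.prod_congr rfl fun j hj => ?_
    exact prod_nthRoots_powerSeries j (Finset.mem_Icc.1 hj).1
  have h2 : ((denomRoots N).map fun s => 1 - PowerSeries.C s * PowerSeries.X).prod *
      ((denomRoots N).map geom).prod = 1 := by
    rw [← Multiset.prod_map_mul]
    simp [geom_mul]
  rw [h1] at h2
  have h3 := prod_mul_genFun N
  calc _ = ((denomRoots N).map geom).prod * 1 := (mul_one _).symm
    _ = _ := by rw [← h3, ← mul_assoc, mul_comm _ (∏ j ∈ Icc 1 N, _), h2, one_mul]

lemma waveIntegrand_eq (k N n : ℕ) (z : ℂ) :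
    waveIntegrand k N n z = ∑ ρ ∈ primitiveRoots k ℂ, localTerm n (denomRoots N) ρ z := by
  unfold waveIntegrand localTerm
  refine Finset.sum_congr rfl fun ρ _ => ?_
  rw [recip_denomRoots, div_eq_mul_inv, zpow_natCast, Int.cast_natCast]
  congr 2
  refine Finset.prod_congr rfl fun j _ => ?_
  rw [mul_pow, inv_pow, zpow_neg, zpow_natCast, ← Complex.exp_nat_mul]
  congr 3
  push_cast
  ring

/-- **Sylvester's theorem**: `p_N(n) = ∑_{k=1}^N W_k(N,n)`. -/
theorem sylvester_theorem
    (W : ℕ → ℕ → ℤ → ℂ)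
    (hW : ∀ k N : ℕ, ∀ n : ℤ, 1 ≤ k → 1 ≤ N → IsWave k N n (W k N n)) :
    ∀ N : ℕ, 1 ≤ N → ∀ n : ℕ,
      (pN N n : ℂ) = ∑ k ∈ Finset.Icc 1 N, W k N (n : ℤ) := by
  intro N hN n
  -- One radius at which all the waves involved are computed simultaneously.
  obtain ⟨δ, hδ, hsmall⟩ := exists_smallRadius (rootsUpTo N) fun s => ne_zero_of_mem_rootsUpTo
  choose! ε hε hwave using fun k (hk : 1 ≤ k) => hW k N n hk hN
  obtain ⟨r, hr, hrδ, hrε⟩ : ∃ r : ℝ, 0 < r ∧ r < δ ∧ ∀ k ∈ Icc 1 N, r < ε k := by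
    have h1 : ∀ᶠ r in nhdsWithin (0 : ℝ) (Set.Ioi 0), ∀ k ∈ Icc 1 N, r < ε k := by
      rw [Filter.eventually_all_finset]
      intro k hk
      exact nhdsWithin_le_nhds (eventually_lt_nhds (hε k (Finset.mem_Icc.1 hk).1))
    have h2 : ∀ᶠ r in nhdsWithin (0 : ℝ) (Set.Ioi 0), r < δ :=
      nhdsWithin_le_nhds (eventually_lt_nhds hδ)
    obtain ⟨r, ⟨hr1, hr2⟩, hr0⟩ := ((h1.and h2).and self_mem_nhdsWithin).exists
    exact ⟨r, hr0, hr2, hr1⟩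
  have hT := hsmall r hrδ
  have hpos : 0 < (denomRoots N).card := by
    refine Multiset.card_pos_iff_exists_mem.2 ⟨1, Multiset.mem_bind.2 ⟨1, ?_, ?_⟩⟩
    · exact Finset.mem_Icc.2 ⟨le_rfl, hN⟩
    · exact (Polynomial.mem_nthRootsFinset one_pos 1).2 (one_pow 1)
  obtain ⟨m, hm⟩ := Nat.exists_eq_add_of_le' hpos
  have key := sum_residue (fun s => ne_zero_of_mem_rootsUpTo) hr hT n m (denomRoots N) hm
    fun s => mem_rootsUpTo_of_mem_denomRoots
  have hsum : ∑ ρ ∈ rootsUpTo N, (∮ z in C(0, r), localTerm n (denomRoots N) ρ z) =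
      ∑ k ∈ Icc 1 N, ∮ z in C(0, r), waveIntegrand k N n z := by
    rw [rootsUpTo, Finset.sum_biUnion fun k _ l _ hkl => IsPrimitiveRoot.disjoint hkl]
    refine Finset.sum_congr rfl fun k hk => ?_
    simp only [waveIntegrand_eq]
    rw [circleIntegral.integral_fun_sum]
    intro ρ hρ
    exact (continuousOn_localTerm hr hT n _ (fun s => mem_rootsUpTo_of_mem_denomRoots)
      (Finset.mem_biUnion.2 ⟨k, hk, hρ⟩)).circleIntegrable hr.le
  rw [denomRoots_prod_geom, PowerSeries.coeff_mk, hsum] at key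
  rw [← Finset.sum_congr rfl fun k hk =>
    hwave k (Finset.mem_Icc.1 hk).1 r hr (hrε k hk), ← Finset.mul_sum, key,
    one_div, inv_mul_cancel_left₀ Complex.two_pi_I_ne_zero]

end
end

section
/- For all integers k, N ≥ 1 and all n ∈ ℤ, W_k(N,n) = − ∑_{0 ≤ h < k, gcd(h,k)=1} Q_{hk(−n)}(N). -/
/-!
The substitution `z = -2πi (w - h/k)` turns the summand of the wave integrand at the primitive root
`ρ = e^{-2πih/k}` into `Q(w; N, -n)` (`waveTerm_eq_Qfun`). It maps a circle of radius `r` about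
`h/k` onto the circle of radius `2πr` about `0`, traversed in the same direction but started at
another point, so the two circle integrals differ exactly by the factor `dz/dw = -2πi`
(`circleIntegral_waveTerm`). Summing over `h` runs through all primitive `k`-th roots of unity
(`sum_primitiveRoots_eq`). The circle integral may be exchanged with the sum over the roots because
each summand is meromorphic, hence continuous on every small enough circle about `0`
(`eventually_circleIntegrable`).
-/

open Finset

noncomputable section

/-- `Q(z; N, σ) = e^{2πiσz} / ∏_{j=1}^N (1 - e^{2πijz})`. -/
def Qfun (N : ℕ) (σ : ℂ) (z : ℂ) : ℂ :=
  Complex.exp (2 * (Real.pi : ℂ) * Complex.I * σ * z) /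
    ∏ j ∈ Finset.Icc 1 N, (1 - Complex.exp (2 * (Real.pi : ℂ) * Complex.I * (j : ℂ) * z))

/-- `Q` equals `Q_{hkσ}(N) = 2πi Res_{z=h/k} Q(z;N,σ)`, i.e. the common value of
the circle integrals of `Q(z;N,σ)` over all sufficiently small circles about `h/k`. -/
def IsQ (N h k : ℕ) (σ : ℂ) (Q : ℂ) : Prop :=
  ∃ ε > (0 : ℝ), ∀ r : ℝ, 0 < r → r < ε →
    (∮ z in C((h : ℂ) / (k : ℂ), r), Qfun N σ z) = Q

/-- The summand of `waveIntegrand` belonging to the root of unity `ρ`. -/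
def waveTerm (N : ℕ) (n : ℤ) (ρ z : ℂ) : ℂ :=
  ρ ^ n * Complex.exp ((n : ℂ) * z) /
    ∏ j ∈ Finset.Icc 1 N, (1 - ρ ^ (-(j : ℤ)) * Complex.exp (-(j : ℤ) * z))

/-- The primitive `k`-th root of unity matched with the pole `h/k` of `Q` when `gcd(h, k) = 1`:
the `h`-th power of `e^{-2πi/k}`. -/
def poleRoot (k h : ℕ) : ℂ :=
  (Complex.exp (2 * (Real.pi : ℂ) * Complex.I / (k : ℂ)))⁻¹ ^ h

lemma poleRoot_eq_exp (k h : ℕ) :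
    poleRoot k h = Complex.exp (-(2 * (Real.pi : ℂ) * Complex.I * ((h : ℂ) / (k : ℂ)))) := by
  rw [poleRoot, ← Complex.exp_neg, ← Complex.exp_nat_mul]
  congr 1
  ring

lemma sum_primitiveRoots_eq {k : ℕ} (hk : 1 ≤ k) (F : ℂ → ℂ) :
    ∑ ρ ∈ primitiveRoots k ℂ, F ρ =
      ∑ h ∈ (Finset.range k).filter (fun h => Nat.gcd h k = 1), F (poleRoot k h) := by
  have hζ := (Complex.isPrimitiveRoot_exp k (by omega)).inv
  have : NeZero k := ⟨by omega⟩
  symm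
  refine Finset.sum_bij (fun h _ => poleRoot k h) ?_ ?_ ?_ (fun _ _ => rfl)
  · intro h hh
    rw [Finset.mem_filter] at hh
    exact (mem_primitiveRoots hk).2 (hζ.pow_of_coprime h hh.2)
  · intro a ha b hb hab
    rw [Finset.mem_filter, Finset.mem_range] at ha hb
    exact hζ.pow_inj ha.1 hb.1 hab
  · intro ρ hρ
    obtain ⟨i, hi, hc, rfl⟩ := hζ.isPrimitiveRoot_iff.1 ((mem_primitiveRoots hk).1 hρ)
    exact ⟨i, by simpa using ⟨hi, hc⟩, rfl⟩

lemma waveTerm_eq_Qfun (N : ℕ) (n : ℤ) (k h : ℕ) (w : ℂ) :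
    waveTerm N n (poleRoot k h)
      (-(2 * (Real.pi : ℂ) * Complex.I) * (w - (h : ℂ) / (k : ℂ))) = Qfun N (-(n : ℂ)) w := by
  rw [waveTerm, Qfun, poleRoot_eq_exp]
  congr 1
  · rw [← Complex.exp_int_mul, ← Complex.exp_add]
    congr 1
    ring
  · refine Finset.prod_congr rfl fun j _ => ?_
    rw [← Complex.exp_int_mul, ← Complex.exp_add]
    congr 2
    push_cast
    ring

/-- Integral substitution `z = -2πi (w - c)` on circles. It needs no regularity of `f`: the rotation
by `-π/2` only shifts the angular parameter, over a full period of the integrand. -/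
lemma circleIntegral_rotate (f : ℂ → ℂ) (c : ℂ) (r : ℝ) :
    (∮ z in C(0, 2 * Real.pi * r), f z) =
      -(2 * (Real.pi : ℂ) * Complex.I) *
        ∮ w in C(c, r), f (-(2 * (Real.pi : ℂ) * Complex.I) * (w - c)) := by
  set g : ℝ → ℂ := fun θ =>
    deriv (circleMap 0 (2 * Real.pi * r)) θ • f (circleMap 0 (2 * Real.pi * r) θ) with hg
  have hper : Function.Periodic g (2 * Real.pi) := by
    intro θ
    simp only [hg, deriv_circleMap, periodic_circleMap 0 (2 * Real.pi * r) θ]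
  have hrot : ∀ θ : ℝ, circleMap 0 (2 * Real.pi * r) (θ - Real.pi / 2) =
      -(2 * (Real.pi : ℂ) * Complex.I) * (circleMap c r θ - c) := by
    intro θ
    simp only [circleMap]
    push_cast
    rw [sub_mul, Complex.exp_sub, Complex.exp_pi_div_two_mul_I, div_eq_mul_inv, Complex.inv_I]
    ring
  have h1 : (∮ z in C(0, 2 * Real.pi * r), f z) = ∫ θ in (0 : ℝ)..2 * Real.pi, g θ := rfl
  have h2 : (∫ θ in (0 : ℝ)..2 * Real.pi, g θ) =
      ∫ θ in (0 : ℝ)..2 * Real.pi, g (θ - Real.pi / 2) := by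
    rw [intervalIntegral.integral_comp_sub_right]
    have := hper.intervalIntegral_add_eq 0 (0 - Real.pi / 2)
    rw [zero_add] at this
    rw [this]
    congr 1
    ring
  rw [h1, h2, circleIntegral, ← intervalIntegral.integral_const_mul]
  refine intervalIntegral.integral_congr fun θ _ => ?_
  simp only [hg, deriv_circleMap, hrot, smul_eq_mul]
  rw [circleMap_sub_center]
  ring

lemma circleIntegral_waveTerm (N : ℕ) (n : ℤ) (k h : ℕ) (r : ℝ) :
    (∮ z in C(0, 2 * Real.pi * r), waveTerm N n (poleRoot k h) z) =
      -(2 * (Real.pi : ℂ) * Complex.I) *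
        ∮ w in C((h : ℂ) / (k : ℂ), r), Qfun N (-(n : ℂ)) w := by
  rw [circleIntegral_rotate _ ((h : ℂ) / (k : ℂ))]
  simp only [waveTerm_eq_Qfun]

lemma meromorphicAt_waveTerm (N : ℕ) (n : ℤ) (ρ : ℂ) : MeromorphicAt (waveTerm N n ρ) 0 := by
  refine MeromorphicAt.div (AnalyticAt.meromorphicAt (by fun_prop)) (AnalyticAt.meromorphicAt ?_)
  exact Finset.analyticAt_fun_prod _ fun j _ => by fun_prop

lemma eventually_circleIntegrable (N : ℕ) (n : ℤ) (ρ : ℂ) :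
    ∃ ε > (0 : ℝ), ∀ r : ℝ, 0 < r → r < ε → CircleIntegrable (waveTerm N n ρ) 0 r := by
  have h := (meromorphicAt_waveTerm N n ρ).eventually_analyticAt
  rw [eventually_nhdsWithin_iff, Metric.eventually_nhds_iff] at h
  obtain ⟨ε, hε, h⟩ := h
  refine ⟨ε, hε, fun r hr hrε => ContinuousOn.circleIntegrable hr.le fun z hz => ?_⟩
  rw [mem_sphere_iff_norm, sub_zero] at hz
  refine (h (by simpa [hz] using hrε) ?_).continuousAt.continuousWithinAt
  rintro rfl
  simp at hz
  linarith

/-- **Proposition 2.1**: `W_k(N,n) = -∑_{0 ≤ h < k, (h,k)=1} Q_{hk(-n)}(N)`. -/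
theorem wave_eq_neg_sum_residues
    (W : ℕ → ℕ → ℤ → ℂ)
    (hW : ∀ k N : ℕ, ∀ n : ℤ, 1 ≤ k → 1 ≤ N → IsWave k N n (W k N n))
    (Q : ℕ → ℕ → ℕ → ℂ → ℂ)
    (hQ : ∀ N h k : ℕ, ∀ σ : ℂ, 1 ≤ N → h < k → Nat.gcd h k = 1 →
      IsQ N h k σ (Q N h k σ)) :
    ∀ k N : ℕ, 1 ≤ k → 1 ≤ N → ∀ n : ℤ,
      W k N n =
        -∑ h ∈ (Finset.range k).filter (fun h => Nat.gcd h k = 1),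
            Q N h k (-(n : ℂ)) := by
  intro k N hk hN n
  set S := (Finset.range k).filter (fun h => Nat.gcd h k = 1) with hS
  obtain ⟨ε, hε, hWε⟩ := hW k N n hk hN
  have hQ' : ∀ h ∈ S, IsQ N h k (-(n : ℂ)) (Q N h k (-(n : ℂ))) := by
    intro h hh
    rw [hS, Finset.mem_filter, Finset.mem_range] at hh
    exact hQ N h k _ hN hh.1 hh.2
  -- One radius has to be small enough for the wave, all the `Q`'s and all integrability claims.
  have hsmall : ∀ᶠ r : ℝ in nhdsWithin 0 (Set.Ioi 0),
      (1 / (2 * (Real.pi : ℂ) * Complex.I)) *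
          (∮ z in C(0, 2 * Real.pi * r), waveIntegrand k N n z) = W k N n ∧
      (∀ h ∈ S, (∮ z in C((h : ℂ) / (k : ℂ), r), Qfun N (-(n : ℂ)) z) = Q N h k (-(n : ℂ))) ∧
      (∀ ρ ∈ primitiveRoots k ℂ, CircleIntegrable (waveTerm N n ρ) 0 (2 * Real.pi * r)) := by
    have hsc : ∀ δ > (0 : ℝ), ∀ᶠ r : ℝ in nhdsWithin 0 (Set.Ioi 0),
        0 < 2 * Real.pi * r ∧ 2 * Real.pi * r < δ := by
      intro δ hδ
      filter_upwards [Ioo_mem_nhdsGT (show 0 < δ / (2 * Real.pi) by positivity)] with r hr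
      have hr0 := hr.1
      exact ⟨by positivity, by rw [mul_comm]; exact (lt_div_iff₀ (by positivity)).1 hr.2⟩
    refine Filter.Eventually.and ?_ (Filter.Eventually.and ?_ ?_)
    · filter_upwards [hsc ε hε] with r hr using hWε _ hr.1 hr.2
    · refine (Filter.eventually_all_finset S).2 fun h hh => ?_
      obtain ⟨δ, hδ, H⟩ := hQ' h hh
      filter_upwards [Ioo_mem_nhdsGT hδ] with r hr using H r hr.1 hr.2
    · refine (Filter.eventually_all_finset _).2 fun ρ _ => ?_
      obtain ⟨δ, hδ, H⟩ := eventually_circleIntegrable N n ρ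
      filter_upwards [hsc δ hδ] with r hr using H _ hr.1 hr.2
  obtain ⟨r, hWr, hQr, hint⟩ := hsmall.exists
  have hsum : (∮ z in C(0, 2 * Real.pi * r), waveIntegrand k N n z) =
      ∑ ρ ∈ primitiveRoots k ℂ, ∮ z in C(0, 2 * Real.pi * r), waveTerm N n ρ z :=
    circleIntegral.integral_fun_sum hint
  rw [← hWr, hsum, sum_primitiveRoots_eq hk, ← hS]
  simp only [circleIntegral_waveTerm]
  rw [Finset.sum_congr rfl fun h hh => by rw [hQr h hh], ← Finset.mul_sum]
  have := Complex.two_pi_I_ne_zero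
  field_simp

end
end

section
/- For every integer N ≥ 1 and every n ∈ ℤ: −∑_{h/k ∈ F_N} Q_{hk(−n)}(N) equals p_N(n) if n ≥ 0; equals 0 if −N(N+1)/2 < n < 0; and equals (−1)^{N+1} · p_N(−n − N(N+1)/2) if n ≤ −N(N+1)/2. -/
/-!
Put `q = e^{2πiz}`. The integrand is `q^{-n} / ∏_{j ≤ N} (1 - q^j)`, a rational function of `q`, and
minus the sum of its residues (times `2πi`) is the coefficient of `q^0` in its expansion at `q = 0`
minus the one at `q = ∞`. No contour shift is used: all circles get a common small radius `r`, so
that `resSum`, minus the sum of the circle integrals, is linear on functions that are regular on the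
circles, and it is evaluated through recurrences.

For a multiset `s` of roots of unity let `A_s(n)` be `resSum` of `q^{-n} ∏_{ζ ∈ s} (1 - ζq)⁻¹`. Then
`A_{ζ,s}(n) - ζ A_{ζ,s}(n - 1) = A_s(n)` (`resSum_prodInv_cons`). If `s` is not empty, then
`A_s(0) = 1` and `A_s(n) = 0` for `-|s| < n < 0` (`resSum_prodInv`), by induction on `|s|`:

* if `s` has two distinct elements, comparing the recurrences that remove either of them determines
  `A_s(n)` and `A_s(n - 1)`;
* if `s` is `m` copies of `ζ`, then `u = (1 - ζq)⁻¹` satisfies `(u^m)' = 2πi m (u^{m+1} - u^m)`, so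
  `A_s(0)` does not depend on `m ≥ 1`, and for `m = 1` there is a single simple pole.

Finally, both the residue sum for `N` and the claimed value satisfy `f_N(n) - f_N(n - N) =
f_{N-1}(n)`; for the latter this is `p_N(n) = p_{N-1}(n) + p_N(n - N)`. By induction on `N` their
difference is periodic in `n` with period `N`. It vanishes for `-N(N+1)/2 < n ≤ 0`, which contains a
full period, so it vanishes everywhere (`resSum_Qfun`).
-/

open Finset

noncomputable section

/-- Farey fractions of order `N` in `[0,1)`, as pairs `(h,k)` with
`0 ≤ h < k ≤ N` and `gcd(h,k) = 1`. -/
def farey (N : ℕ) : Finset (ℕ × ℕ) :=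
  (Finset.range (N + 1) ×ˢ Finset.range (N + 1)).filter
    fun p => p.1 < p.2 ∧ Nat.gcd p.1 p.2 = 1

/-! ### Partitions into at most `N` parts -/

lemma sum_map_pred_add_card (s : Multiset ℕ) (hs : ∀ i ∈ s, 0 < i) :
    (s.map (· - 1)).sum + s.card = s.sum := by
  induction s using Multiset.induction_on with
  | empty => simp
  | cons a s ih =>
    have ha := hs a (by simp)
    have := ih fun i hi => hs i (Multiset.mem_cons_of_mem hi)
    simp only [Multiset.map_cons, Multiset.sum_cons, Multiset.card_cons]
    omega

lemma map_succ_filter_map_pred (s : Multiset ℕ) (hs : ∀ i ∈ s, 0 < i) :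
    ((s.map (· - 1)).filter (· ≠ 0)).map (· + 1) +
      Multiset.replicate (s.card - ((s.map (· - 1)).filter (· ≠ 0)).card) 1 = s := by
  induction s using Multiset.induction_on with
  | empty => simp
  | cons a s ih =>
    have ha := hs a (by simp)
    have ih := ih fun i hi => hs i (Multiset.mem_cons_of_mem hi)
    have hle : ((s.map (· - 1)).filter (· ≠ 0)).card ≤ s.card := by
      simpa using Multiset.card_le_card (Multiset.filter_le (· ≠ 0) (s.map (· - 1)))
    rw [Multiset.map_cons, Multiset.card_cons]
    by_cases h1 : a = 1
    · subst h1
      rw [Multiset.filter_cons_of_neg _ (by simp), Nat.succ_sub hle, Multiset.replicate_succ,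
        Multiset.add_cons, ih]
    · rw [Multiset.filter_cons_of_pos _ (by omega), Multiset.card_cons, Multiset.map_cons,
        Nat.add_sub_add_right, Multiset.cons_add, ih]
      congr 1
      omega

/-- Subtracting `1` from every part matches the partitions of `n + N` into exactly `N` parts with
the partitions of `n` into at most `N` parts. -/
lemma card_partition_eq (N n : ℕ) :
    (univ.filter fun p : (n + N).Partition => p.parts.card = N).card = pN N n := by
  unfold pN
  refine Finset.card_bij'
    (fun p hp => Nat.Partition.ofSums n (p.parts.map (· - 1)) ?_)
    (fun q hq => ⟨q.parts.map (· + 1) + Multiset.replicate (N - q.parts.card) 1, ?_, ?_⟩)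
    ?_ ?_ ?_ ?_
  · have h := sum_map_pred_add_card p.parts fun i hi => p.parts_pos hi
    simp only [mem_filter, mem_univ, true_and] at hp
    rw [p.parts_sum, hp] at h
    omega
  · intro i hi
    rcases Multiset.mem_add.1 hi with hi | hi
    · obtain ⟨a, -, rfl⟩ := Multiset.mem_map.1 hi
      omega
    · rw [Multiset.eq_of_mem_replicate hi]
      exact one_pos
  · simp only [mem_filter, mem_univ, true_and] at hq
    simp only [Multiset.sum_add, Multiset.sum_map_add, Multiset.map_id', Multiset.map_const',
      Multiset.sum_replicate, q.parts_sum, smul_eq_mul]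
    omega
  · intro p hp
    simp only [mem_filter, mem_univ, true_and] at hp ⊢
    rw [Nat.Partition.ofSums_parts]
    refine (Multiset.card_le_card (Multiset.filter_le _ _)).trans ?_
    simp [hp]
  · intro q hq
    simp only [mem_filter, mem_univ, true_and] at hq ⊢
    simp only [Multiset.card_add, Multiset.card_map, Multiset.card_replicate]
    omega
  · intro p hp
    simp only [mem_filter, mem_univ, true_and] at hp
    ext1
    simp only [Nat.Partition.ofSums_parts]
    conv_rhs => rw [← map_succ_filter_map_pred p.parts fun i hi => p.parts_pos hi, hp]
  · intro q hq
    ext1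
    simp only [Nat.Partition.ofSums_parts, Multiset.map_add, Multiset.map_map,
      Multiset.map_replicate, Multiset.filter_add, Function.comp_def, Nat.add_sub_cancel,
      Multiset.map_id', Nat.sub_self]
    have h1 : Multiset.filter (· ≠ 0) q.parts = q.parts :=
      Multiset.filter_eq_self.2 fun i hi => (q.parts_pos hi).ne'
    have h2 : Multiset.filter (· ≠ 0) (Multiset.replicate (N - q.parts.card) 0) = 0 :=
      Multiset.filter_eq_nil.2 fun i hi => by simp [Multiset.eq_of_mem_replicate hi]
    rw [h1, h2, add_zero]

/-- `p_N` extended by zero to negative arguments, with complex values. -/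
def pZ (N : ℕ) (m : ℤ) : ℂ := if 0 ≤ m then (pN N m.toNat : ℂ) else 0

lemma pN_succ_add (N n : ℕ) : pN (N + 1) (n + (N + 1)) = pN N (n + (N + 1)) + pN (N + 1) n := by
  rw [← card_partition_eq (N + 1) n]
  unfold pN
  rw [← Finset.card_union_of_disjoint]
  · congr 1
    ext p
    simp only [mem_filter, mem_univ, true_and, mem_union]
    omega
  · refine Finset.disjoint_filter.2 fun p _ h h' => ?_
    omega

lemma pN_succ_of_lt {N n : ℕ} (h : n < N + 1) : pN (N + 1) n = pN N n := by
  unfold pN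
  congr 1
  ext p
  simp only [mem_filter, mem_univ, true_and]
  have h1 := sum_map_pred_add_card p.parts fun i hi => p.parts_pos hi
  rw [p.parts_sum] at h1
  omega

lemma pZ_succ (N : ℕ) (m : ℤ) : pZ (N + 1) m - pZ (N + 1) (m - (N + 1 : ℕ)) = pZ N m := by
  unfold pZ
  by_cases h0 : 0 ≤ m
  · obtain ⟨n, rfl⟩ := Int.eq_ofNat_of_zero_le h0
    by_cases h1 : N + 1 ≤ n
    · obtain ⟨k, rfl⟩ := Nat.exists_eq_add_of_le' h1
      have h2 : ((k + (N + 1) : ℕ) : ℤ) - (N + 1 : ℕ) = k := by push_cast; ring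
      rw [h2, if_pos h0, if_pos (Int.natCast_nonneg k), if_pos h0, Int.toNat_natCast,
        Int.toNat_natCast, pN_succ_add]
      push_cast
      ring
    · rw [if_pos h0, if_neg (by omega), if_pos h0, Int.toNat_natCast,
        pN_succ_of_lt (by omega), sub_zero]
  · rw [if_neg h0, if_neg (by omega), if_neg h0, sub_zero]

lemma pZ_zero_right (N : ℕ) : pZ N 0 = 1 := by
  simp [pZ, pN]

lemma pZ_of_neg {N : ℕ} {m : ℤ} (h : m < 0) : pZ N m = 0 := if_neg (not_le.2 h)

lemma pZ_zero_left {m : ℤ} (h : m ≠ 0) : pZ 0 m = 0 := by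
  unfold pZ
  split_ifs with h0
  · rw [Nat.cast_eq_zero, pN, Finset.card_eq_zero, Finset.filter_eq_empty_iff]
    intro p _ hp
    have h1 : p.parts = 0 := Multiset.card_eq_zero.1 (Nat.le_zero.1 hp)
    have h2 := p.parts_sum
    rw [h1, Multiset.sum_zero] at h2
    omega
  · rfl

/-- The degree `1 + 2 + ⋯ + N` of the denominator `∏_{j ≤ N} (1 - q^j)`. -/
def tri (N : ℕ) : ℕ := ∑ j ∈ Icc 1 N, j

lemma tri_succ (N : ℕ) : tri (N + 1) = tri N + (N + 1) :=
  Finset.sum_Icc_succ_top (by omega) _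

lemma le_tri (N : ℕ) : N ≤ tri N := by
  cases N with
  | zero => exact Nat.zero_le _
  | succ N => rw [tri_succ]; omega

lemma tri_eq (N : ℕ) : (N : ℤ) * (N + 1) / 2 = tri N := by
  have h : (N : ℤ) * (N + 1) = 2 * tri N := by
    induction N with
    | zero => simp [tri]
    | succ N ih => rw [tri_succ]; push_cast; linarith
  rw [h]
  exact Int.mul_ediv_cancel_left _ two_ne_zero

/-- The claimed value of the residue sum: the difference of the coefficients of `q^n` in the
expansions of `1 / ∏_{j ≤ N} (1 - q^j)` at `q = 0` and at `q = ∞`. -/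
def expected (N : ℕ) (n : ℤ) : ℂ := pZ N n + (-1) ^ (N + 1) * pZ N (-n - tri N)

lemma expected_succ (N : ℕ) (n : ℤ) : expected (N + 1) n - expected (N + 1) (n - (N + 1 : ℕ)) = expected N n := by
  have h1 := pZ_succ N n
  have h2 := pZ_succ N (-n - tri N)
  have e1 : -n - (tri (N + 1) : ℤ) = -n - tri N - (N + 1 : ℕ) := by
    rw [tri_succ]; push_cast; ring
  have e2 : -(n - (N + 1 : ℕ)) - (tri (N + 1) : ℤ) = -n - tri N := by
    rw [tri_succ]; push_cast; ring
  unfold expected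
  rw [e1, e2]
  linear_combination h1 + (-1) ^ (N + 1) * h2

lemma expected_zero (n : ℤ) : expected 0 n = 0 := by
  have ht : tri 0 = 0 := rfl
  rcases eq_or_ne n 0 with rfl | hn
  · simp [expected, ht, pZ_zero_right]
  · rw [expected, pZ_zero_left hn, ht, pZ_zero_left (by simpa using hn)]
    simp

/-! ### Circle integrals of rational functions of `e^{2πiz}` -/

/-- The nome `q = e^{2πiz}`. -/
def nome (z : ℂ) : ℂ := Complex.exp (2 * (Real.pi : ℂ) * Complex.I * z)

/-- `q^{-n} ∏_{ζ ∈ s} (1 - ζ q)⁻¹` with `q = e^{2πiz}`. -/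
def prodInv (s : Multiset ℂ) (n : ℤ) (z : ℂ) : ℂ :=
  nome z ^ (-n) * (s.map fun ζ => (1 - ζ * nome z)⁻¹).prod

/-- The Farey fraction `h/k` as a complex number. -/
def pt (p : ℕ × ℕ) : ℂ := (p.1 : ℂ) / (p.2 : ℂ)

/-- The sum over the Farey fractions of `-∮ f` over circles of a common radius `r`. For small `r`
this is minus the sum of the residues, times `2πi`. -/
def resSum (N : ℕ) (r : ℝ) (f : ℂ → ℂ) : ℂ := -∑ p ∈ farey N, ∮ z in C(pt p, r), f z

/-- Roots of unity of order at most `N`. -/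
def roots (N : ℕ) : Set ℂ := {ζ | ∃ j, 1 ≤ j ∧ j ≤ N ∧ ζ ^ j = 1}

/-- The radius `r` is so small that the closed disc of radius `r` around a Farey fraction contains
no pole of any `(1 - ζ q)⁻¹`, `ζ ∈ roots N`, except possibly its centre. -/
structure GoodRadius (N : ℕ) (r : ℝ) : Prop where
  pos : 0 < r
  eq_pt : ∀ ζ ∈ roots N, ∀ p ∈ farey N, ∀ z ∈ Metric.closedBall (pt p) r,
    ζ * nome z = 1 → z = pt p

lemma nome_ne_zero (z : ℂ) : nome z ≠ 0 := Complex.exp_ne_zero _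

lemma differentiable_nome : Differentiable ℂ nome := by
  unfold nome; fun_prop

lemma hasDerivAt_nome (z : ℂ) :
    HasDerivAt nome (2 * (Real.pi : ℂ) * Complex.I * nome z) z := by
  have h := ((hasDerivAt_id z).const_mul (2 * (Real.pi : ℂ) * Complex.I)).cexp
  simp only [id, mul_one] at h
  rw [mul_comm]
  exact h

lemma ne_zero_of_mem_roots {N : ℕ} {ζ : ℂ} (h : ζ ∈ roots N) : ζ ≠ 0 := by
  rintro rfl
  obtain ⟨j, hj, -, h⟩ := h
  rw [zero_pow (by omega)] at h
  exact zero_ne_one h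

lemma mem_farey {N : ℕ} {p : ℕ × ℕ} :
    p ∈ farey N ↔ p.1 < p.2 ∧ p.2 ≤ N ∧ Nat.gcd p.1 p.2 = 1 := by
  simp only [farey, mem_filter, mem_product, mem_range]
  omega

lemma isPrimitiveRoot_nome {p : ℕ × ℕ} (h : p.1 < p.2) (hg : Nat.gcd p.1 p.2 = 1) :
    IsPrimitiveRoot (nome (pt p)) p.2 :=
  (Complex.isPrimitiveRoot_iff _ _ (by omega)).2 ⟨p.1, h, hg, rfl⟩

lemma nome_pt (p : ℕ × ℕ) : nome (pt p) = nome (1 / (p.2 : ℂ)) ^ p.1 := by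
  unfold nome pt
  rw [← Complex.exp_nat_mul]
  congr 1
  ring

/-- Every root of unity of order at most `N` has its pole at exactly one Farey fraction. -/
lemma exists_farey {N : ℕ} {ζ : ℂ} (h : ζ ∈ roots N) :
    ∃ p ∈ farey N, ζ * nome (pt p) = 1 ∧ ∀ p' ∈ farey N, ζ * nome (pt p') = 1 → p' = p := by
  have h0 := ne_zero_of_mem_roots h
  obtain ⟨j, hj1, hjN, hj⟩ := h
  have hj' : ζ⁻¹ ^ j = 1 := by rw [inv_pow, hj, inv_one]
  have hk : orderOf ζ⁻¹ ≠ 0 := by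
    have := orderOf_pos_iff.2 (isOfFinOrder_iff_pow_eq_one.2 ⟨j, hj1, hj'⟩)
    omega
  obtain ⟨i, hi, hc, he⟩ := (Complex.isPrimitiveRoot_iff _ _ hk).1 (IsPrimitiveRoot.orderOf ζ⁻¹)
  have hle : orderOf ζ⁻¹ ≤ N := (Nat.le_of_dvd hj1 (orderOf_dvd_of_pow_eq_one hj')).trans hjN
  have he' : nome (pt (i, orderOf ζ⁻¹)) = ζ⁻¹ := he
  refine ⟨(i, orderOf ζ⁻¹), mem_farey.2 ⟨hi, hle, hc⟩, ?_, ?_⟩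
  · rw [he', mul_inv_cancel₀ h0]
  · rintro ⟨i', k'⟩ hp' h'
    obtain ⟨hi', -, hc'⟩ := mem_farey.1 hp'
    have h1 : nome (pt (i', k')) = ζ⁻¹ := eq_inv_of_mul_eq_one_right h'
    have h2 := isPrimitiveRoot_nome hi' hc'
    rw [h1] at h2
    have h3 : k' = orderOf ζ⁻¹ := h2.unique (IsPrimitiveRoot.orderOf ζ⁻¹)
    subst h3
    have h4 : IsPrimitiveRoot (nome (1 / (orderOf ζ⁻¹ : ℂ))) (orderOf ζ⁻¹) := by
      simpa only [nome, mul_one_div] using Complex.isPrimitiveRoot_exp _ hk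
    have h5 : i' = i := by
      refine h4.pow_inj hi' hi ?_
      have e1 := nome_pt (i', orderOf ζ⁻¹)
      have e2 := nome_pt (i, orderOf ζ⁻¹)
      exact e1.symm.trans ((h1.trans he'.symm).trans e2)
    rw [h5]

lemma finite_roots (N : ℕ) : (roots N).Finite := by
  have : roots N ⊆ ⋃ j ∈ Icc 1 N, (Polynomial.nthRootsFinset j (1 : ℂ) : Set ℂ) := by
    rintro ζ ⟨j, h1, h2, h⟩
    simp only [Set.mem_iUnion, Finset.mem_coe]
    exact ⟨j, mem_Icc.2 ⟨h1, h2⟩, (Polynomial.mem_nthRootsFinset h1 1).2 h⟩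
  exact (Set.Finite.biUnion (Finset.finite_toSet _) fun _ _ => Finset.finite_toSet _).subset this

lemma eventually_pole (ζ a : ℂ) :
    ∀ᶠ r : ℝ in nhdsWithin 0 (Set.Ioi 0), ∀ z ∈ Metric.closedBall a r, ζ * nome z = 1 → z = a := by
  have key : ∀ᶠ z in nhds a, ζ * nome z = 1 → z = a := by
    by_cases h : ζ * nome a = 1
    · filter_upwards [Metric.ball_mem_nhds a one_pos] with z hz h'
      have h1 : nome (z - a) = 1 := by
        have h2 : nome (z - a) = nome z / nome a := by
          unfold nome; rw [← Complex.exp_sub]; congr 1; ring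
        have h0 : ζ ≠ 0 := by rintro rfl; simp at h
        rw [h2, div_eq_one_iff_eq (nome_ne_zero a)]
        exact mul_left_cancel₀ h0 (h'.trans h.symm)
      obtain ⟨m, hm⟩ := Complex.exp_eq_one_iff.1 h1
      have h2 : z - a = m := by
        have := Complex.two_pi_I_ne_zero
        rw [mul_comm] at hm
        exact mul_right_cancel₀ this hm
      have h3 : ‖z - a‖ < 1 := by simpa [dist_eq_norm] using hz
      rw [h2, Complex.norm_intCast] at h3
      have h4 : m = 0 := Int.abs_lt_one_iff.1 (by exact_mod_cast h3)
      rw [h4, Int.cast_zero] at h2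
      exact sub_eq_zero.1 h2
    · have hc : ContinuousAt (fun z => ζ * nome z) a :=
        (differentiable_nome.continuous.const_mul ζ).continuousAt (x := a)
      filter_upwards [hc.eventually_ne h] with z hz h'
      exact absurd h' hz
  obtain ⟨ε, hε, H⟩ := Metric.eventually_nhds_iff.1 key
  filter_upwards [Ioo_mem_nhdsGT hε] with r hr z hz
  exact H (lt_of_le_of_lt (Metric.mem_closedBall.1 hz) hr.2)

lemma eventually_goodRadius (N : ℕ) :
    ∀ᶠ r : ℝ in nhdsWithin 0 (Set.Ioi 0), GoodRadius N r := by
  have h : ∀ᶠ r : ℝ in nhdsWithin 0 (Set.Ioi 0), ∀ ζ ∈ roots N, ∀ p ∈ farey N,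
      ∀ z ∈ Metric.closedBall (pt p) r, ζ * nome z = 1 → z = pt p :=
    (Filter.eventually_all_finite (finite_roots N)).2 fun ζ _ =>
      (Filter.eventually_all_finset _).2 fun p _ => eventually_pole ζ (pt p)
  filter_upwards [h, self_mem_nhdsWithin] with r hr h0
  exact ⟨h0, hr⟩

section

variable {N : ℕ} {r : ℝ}

lemma GoodRadius.ne_zero (hr : GoodRadius N r) {ζ : ℂ} (hζ : ζ ∈ roots N) {p : ℕ × ℕ}
    (hp : p ∈ farey N) {z : ℂ} (hz : z ∈ Metric.sphere (pt p) r) : 1 - ζ * nome z ≠ 0 := by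
  intro h
  have h1 := hr.eq_pt ζ hζ p hp z (Metric.sphere_subset_closedBall hz) (sub_eq_zero.1 h).symm
  rw [h1, Metric.mem_sphere, dist_self] at hz
  exact hr.pos.ne hz

lemma resSum_congr (hr : 0 ≤ r) {f g : ℂ → ℂ}
    (h : ∀ p ∈ farey N, ∀ z ∈ Metric.sphere (pt p) r, f z = g z) :
    resSum N r f = resSum N r g := by
  unfold resSum
  congr 1
  exact Finset.sum_congr rfl fun p hp => circleIntegral.integral_congr hr (h p hp)

lemma resSum_sub (hr : 0 ≤ r) {f g : ℂ → ℂ}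
    (hf : ∀ p ∈ farey N, ContinuousOn f (Metric.sphere (pt p) r))
    (hg : ∀ p ∈ farey N, ContinuousOn g (Metric.sphere (pt p) r)) :
    resSum N r (fun z => f z - g z) = resSum N r f - resSum N r g := by
  unfold resSum
  rw [neg_sub_neg, ← neg_sub, ← Finset.sum_sub_distrib]
  congr 1
  exact Finset.sum_congr rfl fun p hp =>
    circleIntegral.integral_sub ((hf p hp).circleIntegrable hr) ((hg p hp).circleIntegrable hr)

lemma resSum_const_mul (c : ℂ) (f : ℂ → ℂ) :
    resSum N r (fun z => c * f z) = c * resSum N r f := by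
  simp only [resSum, circleIntegral.integral_const_mul, ← Finset.mul_sum, mul_neg]

lemma continuousOn_prodInv (hr : GoodRadius N r) {s : Multiset ℂ} (hs : ∀ ζ ∈ s, ζ ∈ roots N)
    (n : ℤ) {p : ℕ × ℕ} (hp : p ∈ farey N) :
    ContinuousOn (prodInv s n) (Metric.sphere (pt p) r) := by
  have hc : ContinuousOn nome (Metric.sphere (pt p) r) :=
    differentiable_nome.continuous.continuousOn
  refine (hc.zpow₀ _ fun z _ => Or.inl (nome_ne_zero z)).mul ?_
  induction s using Multiset.induction_on with
  | empty => simpa using continuousOn_const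
  | cons ζ s ih =>
    simp only [Multiset.map_cons, Multiset.prod_cons]
    refine ContinuousOn.mul ?_ (ih fun ξ hξ => hs ξ (Multiset.mem_cons_of_mem hξ))
    exact (continuousOn_const.sub (continuousOn_const.mul hc)).inv₀ fun z hz =>
      hr.ne_zero (hs ζ (Multiset.mem_cons_self ζ s)) hp hz

/-- Multiplication by `1 - ζ q` removes a factor from the product. -/
lemma resSum_prodInv_cons (hr : GoodRadius N r) {s : Multiset ℂ} {ζ : ℂ} (hζ : ζ ∈ roots N)
    (hs : ∀ ξ ∈ s, ξ ∈ roots N) (n : ℤ) :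
    resSum N r (prodInv (ζ ::ₘ s) n) - ζ * resSum N r (prodInv (ζ ::ₘ s) (n - 1)) =
      resSum N r (prodInv s n) := by
  have hs' : ∀ ξ ∈ ζ ::ₘ s, ξ ∈ roots N := by
    intro ξ hξ
    rcases Multiset.mem_cons.1 hξ with rfl | h
    exacts [hζ, hs ξ h]
  rw [← resSum_const_mul, ← resSum_sub hr.pos.le
    (fun p hp => continuousOn_prodInv hr hs' n hp)
    (g := fun z => ζ * prodInv (ζ ::ₘ s) (n - 1) z)
    (fun p hp => continuousOn_const.mul (continuousOn_prodInv hr hs' _ hp))]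
  refine resSum_congr hr.pos.le fun p hp z hz => ?_
  have h1 := hr.ne_zero hζ hp hz
  have h2 : nome z ^ (-(n - 1)) = nome z ^ (-n) * nome z := by
    rw [← zpow_add_one₀ (nome_ne_zero z)]
    congr 1
    ring
  simp only [prodInv, Multiset.map_cons, Multiset.prod_cons, h2]
  field_simp

/-- `u = (1 - ζ q)⁻¹` satisfies `u' = 2πi (u² - u)`, so `u^{m+1}` and `u^m` differ by a derivative
of a function that is regular on the circles. -/
lemma resSum_pow_succ (hr : GoodRadius N r) {ζ : ℂ} (hζ : ζ ∈ roots N) (m : ℕ) :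
    resSum N r (fun z => ((1 - ζ * nome z)⁻¹) ^ (m + 2)) =
      resSum N r (fun z => ((1 - ζ * nome z)⁻¹) ^ (m + 1)) := by
  have hc : ∀ k : ℕ, ∀ p ∈ farey N, ContinuousOn (fun z => ((1 - ζ * nome z)⁻¹) ^ k)
      (Metric.sphere (pt p) r) := fun k p hp =>
    ((continuousOn_const.sub (continuousOn_const.mul
      differentiable_nome.continuous.continuousOn)).inv₀ fun z hz => hr.ne_zero hζ hp hz).pow k
  rw [← sub_eq_zero, ← resSum_sub hr.pos.le (hc _) (hc _)]
  unfold resSum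
  rw [neg_eq_zero]
  refine Finset.sum_eq_zero fun p hp => ?_
  set c : ℂ := ((m + 1 : ℕ) : ℂ) * (2 * (Real.pi : ℂ) * Complex.I) with hcdef
  have hc0 : c ≠ 0 := mul_ne_zero (Nat.cast_ne_zero.2 (Nat.succ_ne_zero m))
    Complex.two_pi_I_ne_zero
  refine circleIntegral.integral_eq_zero_of_hasDerivWithinAt
    (f := fun z => c⁻¹ * ((1 - ζ * nome z)⁻¹) ^ (m + 1)) hr.pos.le fun z hz => ?_
  have h1 := hr.ne_zero hζ hp hz
  have hd := (((((hasDerivAt_nome z).const_mul ζ).const_sub 1).inv h1).pow (m + 1)).const_mul c⁻¹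
  refine (hd.congr_deriv ?_).hasDerivWithinAt
  have h3 : ((m : ℂ) + 1) ≠ 0 := Nat.cast_add_one_ne_zero m
  have h4 := Complex.two_pi_I_ne_zero
  rw [hcdef]
  simp only [Pi.inv_apply, Nat.add_sub_cancel]
  push_cast
  rw [inv_mul_eq_iff_eq_mul₀ (mul_ne_zero h3 h4)]
  rw [show ((1 - ζ * nome z)⁻¹) ^ (m + 2) = ((1 - ζ * nome z)⁻¹) ^ m * ((1 - ζ * nome z)⁻¹) ^ 2 by
    ring, show ((1 - ζ * nome z)⁻¹) ^ (m + 1) = ((1 - ζ * nome z)⁻¹) ^ m * (1 - ζ * nome z)⁻¹ by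
    ring]
  generalize ((1 - ζ * nome z)⁻¹) ^ m = X
  field_simp
  ring

/-- The only contribution comes from the simple pole `q = ζ⁻¹`, where `2πi` times the residue is
`-1`. -/
lemma resSum_simple (hr : GoodRadius N r) {ζ : ℂ} (hζ : ζ ∈ roots N) :
    resSum N r (fun z => (1 - ζ * nome z)⁻¹) = 1 := by
  obtain ⟨p₀, hp₀, h1, huniq⟩ := exists_farey hζ
  unfold resSum
  rw [Finset.sum_eq_single_of_mem p₀ hp₀]
  · set a := pt p₀ with ha
    set g : ℂ → ℂ := dslope (fun z => 1 - ζ * nome z) a with hg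
    have hF : Differentiable ℂ fun z => 1 - ζ * nome z :=
      (differentiable_nome.const_mul ζ).const_sub 1
    have hgd : Differentiable ℂ g := by
      rw [← differentiableOn_univ]
      exact (Complex.differentiableOn_dslope Filter.univ_mem).2 hF.differentiableOn
    have hga : g a = -(2 * (Real.pi : ℂ) * Complex.I) := by
      rw [hg, dslope_same, (((hasDerivAt_nome a).const_mul ζ).const_sub 1).deriv]
      linear_combination (-(2 * (Real.pi : ℂ) * Complex.I)) * h1
    have hmul : ∀ z, (z - a) * g z = 1 - ζ * nome z := by
      intro z
      have := sub_smul_dslope (fun z => 1 - ζ * nome z) a z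
      rw [smul_eq_mul] at this
      rw [this, h1, sub_self, sub_zero]
    have hg0 : ∀ z ∈ Metric.closedBall a r, g z ≠ 0 := by
      intro z hz h0
      have h2 := hmul z
      rw [h0, mul_zero] at h2
      have h3 := hr.eq_pt ζ hζ p₀ hp₀ z hz (sub_eq_zero.1 h2.symm).symm
      rw [h3, ← ha, hga, neg_eq_zero] at h0
      exact Complex.two_pi_I_ne_zero h0
    have hI := DifferentiableOn.circleIntegral_sub_inv_smul (f := fun z => (g z)⁻¹)
      (hgd.differentiableOn.inv hg0) (Metric.mem_ball_self hr.pos)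
    have e : (∮ z in C(a, r), (1 - ζ * nome z)⁻¹) = ∮ z in C(a, r), (z - a)⁻¹ • (g z)⁻¹ := by
      refine circleIntegral.integral_congr hr.pos.le fun z _ => ?_
      simp only [← hmul z, mul_inv, smul_eq_mul]
    rw [e, hI, hga, smul_eq_mul, inv_neg, mul_neg, mul_inv_cancel₀ Complex.two_pi_I_ne_zero,
      neg_neg]
  · intro p hp hne
    have hd : DifferentiableOn ℂ (fun z => (1 - ζ * nome z)⁻¹) (Metric.closedBall (pt p) r) := by
      refine ((differentiable_nome.const_mul ζ).const_sub 1).differentiableOn.inv fun z hz h0 => ?_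
      have h2 := hr.eq_pt ζ hζ p hp z hz (sub_eq_zero.1 h0).symm
      rw [h2] at h0
      exact hne (huniq p hp (sub_eq_zero.1 h0).symm)
    exact (hd.diffContOnCl_ball subset_rfl).circleIntegral_eq_zero hr.pos.le

lemma resSum_pow (hr : GoodRadius N r) {ζ : ℂ} (hζ : ζ ∈ roots N) (m : ℕ) :
    resSum N r (fun z => ((1 - ζ * nome z)⁻¹) ^ (m + 1)) = 1 := by
  induction m with
  | zero => simpa using resSum_simple hr hζ
  | succ m ih => rw [resSum_pow_succ hr hζ, ih]

/-- Case of a single pole: the value at `n = 0` is that of the powers of `(1 - ζ q)⁻¹`, and the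
values below it follow by descending recurrence. -/
lemma resSum_replicate (hr : GoodRadius N r) {ζ : ℂ} (hζ : ζ ∈ roots N) (i : ℕ) :
    ∀ m : ℕ, i < m →
      resSum N r (prodInv (Multiset.replicate m ζ) (-i)) = if i = 0 then 1 else 0 := by
  induction i with
  | zero =>
    intro m hm
    obtain ⟨m, rfl⟩ := Nat.exists_eq_succ_of_ne_zero hm.ne'
    rw [if_pos rfl, ← resSum_pow hr hζ m]
    congr 1
    funext z
    simp [prodInv, -inv_pow, -mul_inv_rev, pow_succ']
  | succ i ih =>
    intro m hm
    obtain ⟨m, rfl⟩ := Nat.exists_eq_succ_of_ne_zero (Nat.ne_zero_of_lt hm)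
    have h := resSum_prodInv_cons hr hζ (s := Multiset.replicate m ζ)
      (fun ξ hξ => Multiset.eq_of_mem_replicate hξ ▸ hζ) (-i)
    rw [← Multiset.replicate_succ, ih (m + 1) (by omega), ih m (by omega), sub_eq_self] at h
    rw [if_neg (Nat.succ_ne_zero i)]
    have e : (-(i + 1 : ℕ) : ℤ) = -i - 1 := by push_cast; ring
    rw [e]
    exact (mul_eq_zero.1 h).resolve_left (ne_zero_of_mem_roots hζ)

/-- When two distinct factors are present, removing either of them gives the same lower-order
value, which determines two consecutive values of the residue sum. -/
lemma resSum_prodInv (hr : GoodRadius N r) (c : ℕ) :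
    ∀ s : Multiset ℂ, s.card = c → (∀ ζ ∈ s, ζ ∈ roots N) → ∀ i : ℕ, i < c →
      resSum N r (prodInv s (-i)) = if i = 0 then 1 else 0 := by
  induction c with
  | zero => intro s _ _ i hi; omega
  | succ c ih =>
    intro s hc hs i hi
    obtain ⟨ζ, hζs⟩ := Multiset.card_pos_iff_exists_mem.1 (by omega : 0 < s.card)
    obtain ⟨t, rfl⟩ := Multiset.exists_cons_of_mem hζs
    have hζ := hs ζ (Multiset.mem_cons_self _ _)
    by_cases hall : ∀ ξ ∈ t, ξ = ζ
    · have ht : t = Multiset.replicate c ζ :=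
        Multiset.eq_replicate.2 ⟨by simpa using hc, hall⟩
      rw [ht, ← Multiset.replicate_succ]
      exact resSum_replicate hr hζ i (c + 1) hi
    · push Not at hall
      obtain ⟨ξ, hξt, hne⟩ := hall
      obtain ⟨t, rfl⟩ := Multiset.exists_cons_of_mem hξt
      have hξ : ξ ∈ roots N := hs ξ (by simp)
      have ht : ∀ η ∈ t, η ∈ roots N := fun η hη => hs η (by simp [hη])
      have hct : t.card + 1 = c := by simpa using hc
      have h1t : ∀ η ∈ ξ ::ₘ t, η ∈ roots N := fun η hη => hs η (Multiset.mem_cons_of_mem hη)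
      have h2t : ∀ η ∈ ζ ::ₘ t, η ∈ roots N := by
        intro η hη
        rcases Multiset.mem_cons.1 hη with rfl | h
        exacts [hζ, ht η h]
      -- The two equations for the pair of values at `-j` and `-j - 1`.
      have key : ∀ j : ℕ, j < c →
          resSum N r (prodInv (ζ ::ₘ ξ ::ₘ t) (-j)) = (if j = 0 then 1 else 0) ∧
          resSum N r (prodInv (ζ ::ₘ ξ ::ₘ t) (-j - 1)) = 0 := by
        intro j hj
        have e1 := resSum_prodInv_cons hr hζ h1t (-j)
        have e2 := resSum_prodInv_cons hr hξ h2t (-j)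
        rw [ih _ (by simpa using hct) h1t j hj] at e1
        rw [ih _ (by simpa using hct) h2t j hj, Multiset.cons_swap] at e2
        have h0 : resSum N r (prodInv (ζ ::ₘ ξ ::ₘ t) (-j - 1)) = 0 := by
          have : (ξ - ζ) * resSum N r (prodInv (ζ ::ₘ ξ ::ₘ t) (-j - 1)) = 0 := by
            linear_combination e1 - e2
          exact (mul_eq_zero.1 this).resolve_left (sub_ne_zero.2 hne)
        rw [h0, mul_zero, sub_zero] at e1
        exact ⟨e1, h0⟩
      by_cases hic : i < c
      · exact (key i hic).1
      · obtain rfl : i = t.card + 1 := by omega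
        have := (key t.card (by omega)).2
        rw [if_neg (Nat.succ_ne_zero _)]
        convert this using 3
        push_cast
        ring

end

/-! ### The function `Q(z; N, -n)` -/

/-- All reciprocal roots of `∏_{j ≤ M} (1 - q^j)`, with multiplicity. -/
def allRoots (M : ℕ) : Multiset ℂ := ∑ j ∈ Icc 1 M, (Polynomial.nthRootsFinset j (1 : ℂ)).val

lemma mem_roots_of_mem_allRoots {M N : ℕ} (h : M ≤ N) {ζ : ℂ} (hζ : ζ ∈ allRoots M) :
    ζ ∈ roots N := by
  obtain ⟨j, hj, hζ⟩ := Multiset.mem_sum.1 hζ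
  obtain ⟨h1, h2⟩ := mem_Icc.1 hj
  exact ⟨j, h1, h2.trans h, (Polynomial.mem_nthRootsFinset h1 1).1 hζ⟩

lemma card_allRoots (M : ℕ) : (allRoots M).card = tri M := by
  unfold allRoots tri
  rw [Multiset.card_sum]
  refine Finset.sum_congr rfl fun j hj => ?_
  exact (Complex.isPrimitiveRoot_exp j (by have := mem_Icc.1 hj; omega)).card_nthRootsFinset

lemma exp_nat_eq (j : ℕ) (z : ℂ) :
    Complex.exp (2 * (Real.pi : ℂ) * Complex.I * (j : ℂ) * z) = nome z ^ j := by
  unfold nome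
  rw [← Complex.exp_nat_mul]
  congr 1
  ring

lemma exp_neg_int_eq (n : ℤ) (z : ℂ) :
    Complex.exp (2 * (Real.pi : ℂ) * Complex.I * (-(n : ℂ)) * z) = nome z ^ (-n) := by
  unfold nome
  rw [← Complex.exp_int_mul]
  congr 1
  push_cast
  ring

lemma Qfun_eq_prodInv (M : ℕ) (n : ℤ) : Qfun M (-(n : ℂ)) = prodInv (allRoots M) n := by
  funext z
  unfold Qfun prodInv
  rw [exp_neg_int_eq, div_eq_mul_inv, ← Finset.prod_inv_distrib]
  congr 1
  unfold allRoots
  have hsum : (Multiset.map (fun ζ => (1 - ζ * nome z)⁻¹)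
      (∑ j ∈ Icc 1 M, (Polynomial.nthRootsFinset j (1 : ℂ)).val)).prod =
      ∏ j ∈ Icc 1 M, (((Polynomial.nthRootsFinset j (1 : ℂ)).val).map
        (fun ζ => (1 - ζ * nome z)⁻¹)).prod := by
    induction (Icc 1 M) using Finset.induction_on with
    | empty => simp
    | insert a t ha ih =>
      rw [Finset.sum_insert ha, Finset.prod_insert ha, Multiset.map_add, Multiset.prod_add, ih]
  rw [hsum]
  refine Finset.prod_congr rfl fun j hj => ?_
  have hj1 := (mem_Icc.1 hj).1
  have h := (Complex.isPrimitiveRoot_exp j (by omega)).pow_sub_pow_eq_prod_sub_mul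
    1 (nome z) hj1
  rw [one_pow] at h
  rw [exp_nat_eq, h, ← Finset.prod_inv_distrib]
  rfl

/-- Analytic counterpart of the recurrence `expected_succ`. -/
lemma resSum_Qfun_succ {N : ℕ} {r : ℝ} (hr : GoodRadius N r) {M : ℕ} (hM : M + 1 ≤ N) (n : ℤ) :
    resSum N r (Qfun (M + 1) (-(n : ℂ))) -
      resSum N r (Qfun (M + 1) (-((n - (M + 1 : ℕ) : ℤ) : ℂ))) =
      resSum N r (Qfun M (-(n : ℂ))) := by
  have hc : ∀ m : ℤ, ∀ p ∈ farey N,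
      ContinuousOn (Qfun (M + 1) (-(m : ℂ))) (Metric.sphere (pt p) r) := fun m p hp => by
    rw [Qfun_eq_prodInv]
    exact continuousOn_prodInv hr (fun ζ hζ => mem_roots_of_mem_allRoots hM hζ) m hp
  rw [← resSum_sub hr.pos.le (hc _) (hc _)]
  refine resSum_congr hr.pos.le fun p hp z hz => ?_
  have h1 : 1 - nome z ^ (M + 1) ≠ 0 := by
    rw [← one_pow (M + 1), (Complex.isPrimitiveRoot_exp (M + 1)
      (Nat.succ_ne_zero M)).pow_sub_pow_eq_prod_sub_mul 1 (nome z) (Nat.succ_pos M)]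
    exact Finset.prod_ne_zero_iff.2 fun ζ hζ => hr.ne_zero
      ⟨M + 1, by omega, hM, (Polynomial.mem_nthRootsFinset (Nat.succ_pos M) 1).1 hζ⟩ hp hz
  have h2 : nome z ^ (-(n - (M + 1 : ℕ))) = nome z ^ (-n) * nome z ^ (M + 1) := by
    rw [← zpow_natCast, ← zpow_add₀ (nome_ne_zero z)]
    congr 1
    ring
  unfold Qfun
  rw [exp_neg_int_eq, exp_neg_int_eq, h2, Finset.prod_Icc_succ_top (by omega), exp_nat_eq,
    ← sub_div, ← mul_one_sub, mul_div_mul_right _ _ h1]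

lemma resSum_Qfun {N : ℕ} {r : ℝ} (hr : GoodRadius N r) (M : ℕ) :
    M ≤ N → ∀ n : ℤ, resSum N r (Qfun M (-(n : ℂ))) = expected M n := by
  induction M with
  | zero =>
    intro _ n
    rw [expected_zero]
    unfold resSum
    rw [neg_eq_zero]
    refine Finset.sum_eq_zero fun p _ => ?_
    have hd : Differentiable ℂ (Qfun 0 (-(n : ℂ))) := by
      unfold Qfun
      simp only [show Icc 1 0 = (∅ : Finset ℕ) from rfl, Finset.prod_empty, div_one]
      fun_prop
    exact (hd.diffContOnCl).circleIntegral_eq_zero hr.pos.le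
  | succ M ih =>
    intro hM n
    set D : ℤ → ℂ := fun n => resSum N r (Qfun (M + 1) (-(n : ℂ))) - expected (M + 1) n with hD
    have hper : Function.Periodic D ((M + 1 : ℕ) : ℤ) := by
      intro m
      have h1 := resSum_Qfun_succ hr hM (m + (M + 1 : ℕ))
      have h2 := expected_succ M (m + (M + 1 : ℕ))
      rw [ih (by omega)] at h1
      rw [add_sub_cancel_right] at h1 h2
      simp only [hD]
      linear_combination h1 - h2
    -- In the gap `-tri (M + 1) < m ≤ 0`, which covers a full period, both sides are known.
    have hgap : ∀ i : ℕ, i < tri (M + 1) → D (-i) = 0 := by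
      intro i hi
      simp only [hD]
      rw [Qfun_eq_prodInv, resSum_prodInv hr _ _ (card_allRoots (M + 1))
        (fun ζ hζ => mem_roots_of_mem_allRoots hM hζ) i hi, expected,
        pZ_of_neg (show -(-(i : ℤ)) - tri (M + 1) < 0 by omega), mul_zero, add_zero]
      split_ifs with h0
      · rw [h0, Nat.cast_zero, neg_zero, pZ_zero_right, sub_self]
      · rw [pZ_of_neg (by omega), sub_zero]
    have hpos : (0 : ℤ) < (M + 1 : ℕ) := by omega
    obtain ⟨i, hi⟩ := Int.eq_ofNat_of_zero_le (Int.emod_nonneg (-n) hpos.ne')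
    have hlt : i < M + 1 := by
      have := Int.emod_lt_of_pos (-n) hpos
      omega
    have hn : D n = D (-i) := by
      rw [← (hper.int_mul ((-n) / (M + 1 : ℕ))) n]
      congr 1
      have := Int.emod_add_mul_ediv (-n) (M + 1 : ℕ)
      rw [hi] at this
      simp only [Int.cast_id]
      linear_combination this
    exact sub_eq_zero.1 (hn.trans (hgap i (hlt.trans_le (le_tri _))))

/-- The three cases of the theorem in one formula. -/
lemma sum_eq_expected (Q : ℕ → ℕ → ℕ → ℂ → ℂ)
    (hQ : ∀ N h k : ℕ, ∀ σ : ℂ, 1 ≤ N → h < k → Nat.gcd h k = 1 →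
      IsQ N h k σ (Q N h k σ)) {N : ℕ} (hN : 1 ≤ N) (n : ℤ) :
    -∑ p ∈ farey N, Q N p.1 p.2 (-(n : ℂ)) = expected N n := by
  have h1 : ∀ᶠ r : ℝ in nhdsWithin 0 (Set.Ioi 0), ∀ p ∈ farey N,
      (∮ z in C(pt p, r), Qfun N (-(n : ℂ)) z) = Q N p.1 p.2 (-(n : ℂ)) := by
    refine (Filter.eventually_all_finset _).2 fun p hp => ?_
    obtain ⟨hlt, -, hg⟩ := mem_farey.1 hp
    obtain ⟨ε, hε, H⟩ := hQ N p.1 p.2 (-(n : ℂ)) hN hlt hg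
    filter_upwards [Ioo_mem_nhdsGT hε] with r hr using H r hr.1 hr.2
  obtain ⟨r, hr, hr'⟩ := ((eventually_goodRadius N).and h1).exists
  rw [← resSum_Qfun hr N le_rfl n]
  unfold resSum
  rw [Finset.sum_congr rfl hr']

/-- **Theorem 2.2**: evaluation of `-∑_{h/k ∈ F_N} Q_{hk(-n)}(N)`. -/
theorem farey_residue_sum
    (Q : ℕ → ℕ → ℕ → ℂ → ℂ)
    (hQ : ∀ N h k : ℕ, ∀ σ : ℂ, 1 ≤ N → h < k → Nat.gcd h k = 1 →
      IsQ N h k σ (Q N h k σ)) :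
    ∀ N : ℕ, 1 ≤ N → ∀ n : ℤ,
      (0 ≤ n →
        -∑ p ∈ farey N, Q N p.1 p.2 (-(n : ℂ)) = (pN N n.toNat : ℂ)) ∧
      (-((N : ℤ) * ((N : ℤ) + 1) / 2) < n → n < 0 →
        -∑ p ∈ farey N, Q N p.1 p.2 (-(n : ℂ)) = 0) ∧
      (n ≤ -((N : ℤ) * ((N : ℤ) + 1) / 2) →
        -∑ p ∈ farey N, Q N p.1 p.2 (-(n : ℂ)) =
          (-1 : ℂ) ^ (N + 1) *
            (pN N (-n - (N : ℤ) * ((N : ℤ) + 1) / 2).toNat : ℂ)) := by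
  intro N hN n
  have h := sum_eq_expected Q hQ hN n
  rw [tri_eq, h, expected]
  have ht : 0 < tri N := hN.trans (le_tri N)
  refine ⟨fun hn => ?_, fun h1 h2 => ?_, fun hn => ?_⟩
  · rw [pZ_of_neg (show -n - (tri N : ℤ) < 0 by omega), mul_zero, add_zero, pZ, if_pos hn]
  · rw [pZ_of_neg h2, pZ_of_neg (show -n - (tri N : ℤ) < 0 by omega), mul_zero, add_zero]
  · rw [pZ_of_neg (show n < 0 by omega), zero_add, pZ, if_pos (by omega)]

end
end

section
/- For all integers N ≥ k ≥ 1 there exist polynomials w_{k,0}, w_{k,1}, …, w_{k,k−1} ∈ ℚ[x], each of degree at most ⌊N/k⌋ − 1, such that for every n ∈ ℤ one has W_k(N,n) = w_{k, n mod k}(n); moreover, for every factorization k = b·c with integers b ≥ 1, c ≥ 2 and every 0 ≤ ℓ ≤ b−1, the polynomial identity w_{k,ℓ} + w_{k,ℓ+b} + w_{k,ℓ+2b} + ⋯ + w_{k,ℓ+(c−1)b} = 0 holds (in particular, taking b = 1: w_{k,0} + w_{k,1} + ⋯ + w_{k,k−1} = 0 whenever k ≥ 2). -/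
/-!
Fix `k ≤ N`, put `M = ⌊N/k⌋`, and let `ζ` be a primitive `k`-th root of unity in the cyclotomic
field `K = ℚ(ζ_k)`.

Among the factors `1 - ζ^{-j} e^{-jX}`, `1 ≤ j ≤ N`, exactly the `M` ones with `k ∣ j` vanish at
`X = 0`, each to first order. Hence in `K⟦X⟧` the product of all factors is `X ^ M * U` with `U`
invertible (`exists_denomSeries_eq`). An embedding `σ : K → ℂ` carries this identity to the Taylor
expansion of the denominator belonging to the root `ρ = σ ζ`, and therefore the residue of the
corresponding summand is `σ` of the coefficient of `X ^ (M - 1)` in `ζ^n e^{nX} U⁻¹`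
(`hasResidue_div`).

The primitive `k`-th roots of unity in `ℂ` are the values `σ ζ`, one for each embedding, so summing
over them yields a trace from `K` to `ℚ` (`hasResidue_waveIntegrand`):
`W_k(N,n) = ∑_{i < M} n^i / i! * Tr (ζ^n a_{M-1-i})`, where `U⁻¹ = ∑ a_m X^m`. Since `ζ^n` depends
only on `n` mod `k`, replacing it by `ζ^l` gives the rational polynomials `w_l`, of degree at most
`M - 1`. If `k = b c` with `c ≥ 2`, then `∑_{i < c} ζ^{l + i b} = 0` because `ζ^b` is a primitive
`c`-th root of unity, and linearity of the trace gives `∑_i w_{l + i b} = 0`.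
-/

open Finset

noncomputable section

open Filter Topology

/-! ### Power series representing a function near `0` -/

/-- The formal power series `F` converges to the function `f` on a neighbourhood of `0`. -/
def Represents (F : PowerSeries ℂ) (f : ℂ → ℂ) : Prop :=
  ∀ᶠ z in 𝓝 (0 : ℂ), HasSum (fun n => PowerSeries.coeff n F * z ^ n) (f z)

namespace Represents

variable {F G : PowerSeries ℂ} {f g : ℂ → ℂ}

lemma analyticAt (h : Represents F f) : AnalyticAt ℂ f 0 := by
  refine ⟨FormalMultilinearSeries.ofScalars ℂ (fun n => PowerSeries.coeff n F), ?_⟩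
  rw [hasFPowerSeriesAt_iff]
  filter_upwards [h] with z hz
  simpa [FormalMultilinearSeries.coeff_ofScalars, mul_comm] using hz

lemma apply_zero (h : Represents F f) : f 0 = PowerSeries.constantCoeff F := by
  have h0 := h.self_of_nhds
  have h1 := hasSum_single (f := fun n => PowerSeries.coeff n F * (0 : ℂ) ^ n) 0
    (fun n hn => by simp [hn])
  simpa using h0.unique h1

lemma sub (hf : Represents F f) (hg : Represents G g) :
    Represents (F - G) (fun z => f z - g z) := by
  filter_upwards [hf, hg] with z h1 h2
  simpa [sub_mul] using h1.sub h2

/-- Products are the Cauchy products of absolutely convergent series. -/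
lemma mul (hf : Represents F f) (hg : Represents G g) :
    Represents (F * G) (fun z => f z * g z) := by
  filter_upwards [hf, hg] with z h1 h2
  have s1 := h1.summable.norm
  have s2 := h2.summable.norm
  have key := tsum_mul_tsum_eq_tsum_sum_antidiagonal_of_summable_norm s1 s2
  have hs := (summable_norm_sum_mul_antidiagonal_of_summable_norm s1 s2).of_norm
  rw [h1.tsum_eq, h2.tsum_eq] at key
  rw [key]
  refine (congrArg (HasSum · _) (funext fun n => ?_)).mpr hs.hasSum
  rw [PowerSeries.coeff_mul, Finset.sum_mul]
  refine Finset.sum_congr rfl fun p hp => ?_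
  rw [← Finset.HasAntidiagonal.mem_antidiagonal.1 hp, pow_add]
  ring

lemma coe (p : Polynomial ℂ) : Represents (p : PowerSeries ℂ) (fun z => p.eval z) := by
  refine Eventually.of_forall fun z => ?_
  simp only [Polynomial.coeff_coe, Polynomial.eval_eq_sum_range]
  refine hasSum_sum_of_ne_finset_zero fun n hn => ?_
  rw [Polynomial.coeff_eq_zero_of_natDegree_lt (by simpa using hn), zero_mul]

lemma const (c : ℂ) : Represents (PowerSeries.C c) (fun _ => c) := by
  simpa using coe (Polynomial.C c)

lemma prod {ι : Type*} (s : Finset ι) {F : ι → PowerSeries ℂ} {f : ι → ℂ → ℂ}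
    (h : ∀ i ∈ s, Represents (F i) (f i)) :
    Represents (∏ i ∈ s, F i) (fun z => ∏ i ∈ s, f i z) := by
  classical
  induction s using Finset.induction_on with
  | empty => simpa using const 1
  | insert a s ha ih =>
    simp only [Finset.prod_insert ha]
    exact (h a (by simp)).mul (ih fun i hi => h i (by simp [hi]))

/-- A function represented by `X ^ M * F` is, near `0`, `z ^ M` times a function represented
by `F`. -/
lemma exists_of_X_pow_mul {M : ℕ} (h : Represents (PowerSeries.X ^ M * F) f) :
    ∃ g : ℂ → ℂ, Represents F g ∧ ∀ᶠ z in 𝓝 (0 : ℂ), f z = z ^ M * g z := by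
  have key : ∀ᶠ z in 𝓝 (0 : ℂ), Summable (fun n => PowerSeries.coeff n F * z ^ n) ∧
      f z = z ^ M * ∑' n, PowerSeries.coeff n F * z ^ n := by
    filter_upwards [h] with z hz
    have hlow : ∑ i ∈ Finset.range M,
        PowerSeries.coeff i (PowerSeries.X ^ M * F) * z ^ i = 0 :=
      Finset.sum_eq_zero fun i hi => by
        rw [PowerSeries.coeff_X_pow_mul', if_neg (by simpa using hi), zero_mul]
    have hz' : HasSum (fun n => z ^ M * (PowerSeries.coeff n F * z ^ n)) (f z) := by
      have := (hasSum_nat_add_iff' M).2 hz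
      rw [hlow, sub_zero] at this
      refine (congrArg (HasSum · _) (funext fun n => ?_)).mpr this
      rw [PowerSeries.coeff_X_pow_mul, pow_add]
      ring
    have hs : Summable (fun n => PowerSeries.coeff n F * z ^ n) := by
      by_cases h0 : z = 0
      · exact (hasSum_single 0 (fun n hn => by simp [h0, hn])).summable
      · exact (summable_mul_left_iff (pow_ne_zero M h0)).1 hz'.summable
    exact ⟨hs, by rw [← hz'.tsum_eq, tsum_mul_left]⟩
  exact ⟨fun z => ∑' n, PowerSeries.coeff n F * z ^ n, key.mono fun z hz => hz.1.hasSum,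
    key.mono fun z hz => hz.2⟩

end Represents

/-- The formal exponential series `exp (c X)`. -/
def expSeries {K : Type*} [Field K] (c : K) : PowerSeries K :=
  PowerSeries.mk fun n => c ^ n / (n.factorial : K)

lemma map_expSeries {K L : Type*} [Field K] [Field L] (σ : K →+* L) (c : K) :
    PowerSeries.map σ (expSeries c) = expSeries (σ c) := by
  ext n
  simp [expSeries]

lemma Represents.exp (c : ℂ) : Represents (expSeries c) (fun z => Complex.exp (c * z)) := by
  refine Eventually.of_forall fun z => ?_
  have h := NormedSpace.expSeries_div_hasSum_exp (c * z)
  rw [← Complex.exp_eq_exp_ℂ] at h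
  refine (congrArg (HasSum · _) (funext fun n => ?_)).mpr h
  simp only [expSeries, PowerSeries.coeff_mk, mul_pow]
  ring

/-! ### Residues at `0` -/

/-- `c` is the residue of `f` at `0`, computed by integration over all sufficiently small
circles; integrability is included, so that residues add up. -/
def HasResidue (f : ℂ → ℂ) (c : ℂ) : Prop :=
  ∀ᶠ r in 𝓝[>] (0 : ℝ), CircleIntegrable f 0 r ∧
    (∮ z in C(0, r), f z) = 2 * (Real.pi : ℂ) * Complex.I * c

/-- A property of all small `z` holds on all small closed disks. -/
lemma eventually_closedBall {p : ℂ → Prop} (h : ∀ᶠ z in 𝓝 (0 : ℂ), p z) :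
    ∀ᶠ r in 𝓝[>] (0 : ℝ), 0 < r ∧ ∀ z ∈ Metric.closedBall (0 : ℂ) r, p z := by
  obtain ⟨ε, hε, hp⟩ := Metric.eventually_nhds_iff_ball.1 h
  filter_upwards [Ioo_mem_nhdsGT hε] with r hr
  exact ⟨hr.1, fun z hz => hp z (Metric.closedBall_subset_ball hr.2 hz)⟩

namespace HasResidue

variable {f g : ℂ → ℂ} {c d : ℂ}

lemma congr (hf : HasResidue f c) (h : ∀ᶠ z in 𝓝 (0 : ℂ), z ≠ 0 → g z = f z) :
    HasResidue g c := by
  filter_upwards [hf, eventually_closedBall h] with r hr hr'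
  have heq : Set.EqOn g f (Metric.sphere (0 : ℂ) r) := fun z hz =>
    hr'.2 z (Metric.sphere_subset_closedBall hz) (Metric.ne_of_mem_sphere hz hr'.1.ne')
  refine ⟨(circleIntegrable_congr ?_).2 hr.1, ?_⟩
  · rwa [abs_of_pos hr'.1]
  · rw [circleIntegral.integral_congr hr'.1.le heq, hr.2]

lemma add (hf : HasResidue f c) (hg : HasResidue g d) :
    HasResidue (fun z => f z + g z) (c + d) := by
  filter_upwards [hf, hg] with r h1 h2
  refine ⟨h1.1.add h2.1, ?_⟩
  rw [circleIntegral.integral_add h1.1 h2.1, h1.2, h2.2]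
  ring

lemma of_analyticAt (hf : AnalyticAt ℂ f 0) : HasResidue f 0 := by
  filter_upwards [eventually_closedBall hf.eventually_analyticAt] with r hr
  have hc : ContinuousOn f (Metric.closedBall 0 r) := fun z hz =>
    (hr.2 z hz).continuousAt.continuousWithinAt
  refine ⟨(hc.mono Metric.sphere_subset_closedBall).circleIntegrable hr.1.le, ?_⟩
  rw [mul_zero]
  exact Complex.circleIntegral_eq_zero_of_differentiable_on_off_countable hr.1.le
    Set.countable_empty hc fun z hz => (hr.2 z (Metric.ball_subset_closedBall hz.1)).differentiableAt

lemma sum {ι : Type*} (s : Finset ι) {f : ι → ℂ → ℂ} {c : ι → ℂ}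
    (h : ∀ i ∈ s, HasResidue (f i) (c i)) :
    HasResidue (fun z => ∑ i ∈ s, f i z) (∑ i ∈ s, c i) := by
  classical
  induction s using Finset.induction_on with
  | empty => simpa using of_analyticAt (f := fun _ => 0) analyticAt_const
  | insert a s ha ih =>
    simp only [Finset.sum_insert ha]
    exact (h a (by simp)).add (ih fun i hi => h i (by simp [hi]))

lemma const_mul_zpow (a : ℂ) (m : ℤ) :
    HasResidue (fun z => a * z ^ m) (if m = -1 then a else 0) := by
  filter_upwards [self_mem_nhdsWithin] with r (hr : 0 < r)
  have hint : CircleIntegrable (fun z : ℂ => a * z ^ m) 0 r := by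
    refine ContinuousOn.circleIntegrable hr.le fun z hz => ?_
    exact (continuousAt_const.mul
      (continuousAt_zpow₀ z m (Or.inl (Metric.ne_of_mem_sphere hz hr.ne')))).continuousWithinAt
  refine ⟨hint, ?_⟩
  rw [circleIntegral.integral_const_mul]
  split_ifs with hm
  · have := circleIntegral.integral_sub_center_inv 0 hr.ne'
    simp only [sub_zero] at this
    simp only [hm, zpow_neg_one, this]
    ring
  · have := circleIntegral.integral_sub_zpow_of_ne hm 0 0 r
    simp only [sub_zero] at this
    rw [this]
    simp

end HasResidue

/-- The residue of `f / D`, where the denominator has the expansion `X ^ M * U` with `U`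
invertible, is the coefficient of `X ^ (M - 1)` in the formal quotient `F / U`. -/
lemma hasResidue_div {F U : PowerSeries ℂ} {f D : ℂ → ℂ} {M : ℕ} (hM : 1 ≤ M)
    (hf : Represents F f) (hD : Represents (PowerSeries.X ^ M * U) D)
    (hU : PowerSeries.constantCoeff U ≠ 0) :
    HasResidue (fun z => f z / D z) (PowerSeries.coeff (M - 1) (F * U⁻¹)) := by
  obtain ⟨g, hg, hDg⟩ := hD.exists_of_X_pow_mul
  -- `P` is the principal part of the quotient, multiplied by `z ^ M`.
  set P : Polynomial ℂ := PowerSeries.trunc M (F * U⁻¹) with hP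
  have hdvd : (PowerSeries.X ^ M : PowerSeries ℂ) ∣ F - (P : PowerSeries ℂ) * U := by
    have h1 : F - (P : PowerSeries ℂ) * U = (F * U⁻¹ - (P : PowerSeries ℂ)) * U := by
      rw [sub_mul, mul_assoc, PowerSeries.inv_mul_cancel U hU, mul_one]
    rw [h1]
    refine Dvd.dvd.mul_right (PowerSeries.X_pow_dvd_iff.2 fun m hm => ?_) _
    rw [map_sub, Polynomial.coeff_coe, hP, PowerSeries.coeff_trunc, if_pos hm, sub_self]
  obtain ⟨H, hH⟩ := hdvd
  have hrem := hf.sub ((Represents.coe P).mul hg)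
  rw [hH] at hrem
  obtain ⟨h, hh, hrem⟩ := hrem.exists_of_X_pow_mul
  have hg0 : g 0 ≠ 0 := by rwa [hg.apply_zero]
  have hgne : ∀ᶠ z in 𝓝 (0 : ℂ), g z ≠ 0 := hg.analyticAt.continuousAt.eventually_ne hg0
  have hres := (HasResidue.sum (Finset.range M) fun i _ =>
    HasResidue.const_mul_zpow (P.coeff i) ((i : ℤ) - M)).add
      (HasResidue.of_analyticAt (hh.analyticAt.div hg.analyticAt hg0))
  have hval : (∑ i ∈ Finset.range M, if (i : ℤ) - M = -1 then P.coeff i else 0) + 0 =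
      PowerSeries.coeff (M - 1) (F * U⁻¹) := by
    rw [add_zero, Finset.sum_eq_single (M - 1)]
    · rw [if_pos (by omega), hP, PowerSeries.coeff_trunc, if_pos (by omega)]
    · intro i _ hi
      rw [if_neg (by omega)]
    · intro hi
      exact absurd (Finset.mem_range.2 (by omega)) hi
  rw [hval] at hres
  refine hres.congr ?_
  filter_upwards [hDg, hrem, hgne] with z h1 h2 h3 hz
  have hPz : P.eval z = ∑ i ∈ Finset.range M, P.coeff i * z ^ i :=
    Polynomial.eval_eq_sum_range' (by
      have := PowerSeries.natDegree_trunc_lt (F * U⁻¹) (M - 1)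
      rwa [Nat.sub_add_cancel hM] at this) z
  have hsum : ∑ i ∈ Finset.range M, P.coeff i * z ^ ((i : ℤ) - M) = P.eval z / z ^ M := by
    rw [hPz, Finset.sum_div]
    refine Finset.sum_congr rfl fun i _ => ?_
    rw [zpow_sub₀ hz, zpow_natCast, zpow_natCast, mul_div_assoc]
  have hzM : z ^ M ≠ 0 := pow_ne_zero M hz
  simp only [Pi.div_apply]
  rw [hsum, h1]
  have h4 : f z = P.eval z * g z + z ^ M * h z := by rw [← h2]; ring
  rw [h4]
  field_simp

/-! ### The denominator as a formal power series -/

/-- The expansion `∏_{j ≤ N} (1 - ζ ^ (-j) exp (-j X))` of the denominator. -/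
def denomSeries {K : Type*} [Field K] (N : ℕ) (ζ : K) : PowerSeries K :=
  ∏ j ∈ Finset.Icc 1 N, (1 - PowerSeries.C (ζ ^ (-(j : ℤ))) * expSeries (-(j : K)))

lemma map_denomSeries {K L : Type*} [Field K] [Field L] (σ : K →+* L) (N : ℕ) (ζ : K) :
    PowerSeries.map σ (denomSeries N ζ) = denomSeries N (σ ζ) := by
  simp [denomSeries, map_prod, map_expSeries]

lemma represents_denomSeries (N : ℕ) (ρ : ℂ) :
    Represents (denomSeries N ρ) (fun z =>
      ∏ j ∈ Finset.Icc 1 N, (1 - ρ ^ (-(j : ℤ)) * Complex.exp (-(j : ℤ) * z))) := by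
  refine Represents.prod _ fun j _ => ?_
  have h := (Represents.const 1).sub
    ((Represents.const (ρ ^ (-(j : ℤ)))).mul (Represents.exp (-(j : ℂ))))
  simpa using h

/-- A single factor vanishes at `0` exactly when `k ∣ j`, and then to first order. -/
lemma exists_factor {K : Type*} [Field K] [CharZero K] {k : ℕ} {ζ : K}
    (hζ : IsPrimitiveRoot ζ k) {j : ℕ} (hj : 1 ≤ j) :
    ∃ u : PowerSeries K, PowerSeries.constantCoeff u ≠ 0 ∧
      1 - PowerSeries.C (ζ ^ (-(j : ℤ))) * expSeries (-(j : K)) =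
        PowerSeries.X ^ (if k ∣ j then 1 else 0) * u := by
  have hc : PowerSeries.constantCoeff
      (1 - PowerSeries.C (ζ ^ (-(j : ℤ))) * expSeries (-(j : K))) = 1 - ζ ^ (-(j : ℤ)) := by
    rw [map_sub, map_mul, map_one, PowerSeries.constantCoeff_C,
      ← PowerSeries.coeff_zero_eq_constantCoeff_apply (expSeries _)]
    simp [expSeries]
  split_ifs with hkj
  · have h1 : ζ ^ (-(j : ℤ)) = 1 := by
      rw [zpow_neg, zpow_natCast, (hζ.pow_eq_one_iff_dvd j).2 hkj, inv_one]
    rw [h1, sub_self, ← h1] at hc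
    obtain ⟨u, hu⟩ := PowerSeries.X_dvd_iff.2 hc
    refine ⟨u, ?_, by rw [pow_one, hu]⟩
    have h2 := congrArg (PowerSeries.coeff 1) hu
    rw [show (1 : ℕ) = 0 + 1 from rfl, PowerSeries.coeff_succ_X_mul] at h2
    rw [← PowerSeries.coeff_zero_eq_constantCoeff_apply, ← h2, h1]
    have : (j : K) ≠ 0 := by exact_mod_cast (by omega : j ≠ 0)
    simpa [expSeries, PowerSeries.coeff_one] using this
  · refine ⟨_, ?_, by rw [pow_zero, one_mul]⟩
    rw [hc, sub_ne_zero, zpow_neg, zpow_natCast, ne_comm, inv_ne_one]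
    exact fun h => hkj ((hζ.pow_eq_one_iff_dvd j).1 h)

lemma exists_denomSeries_eq {K : Type*} [Field K] [CharZero K] {k : ℕ} {ζ : K}
    (hζ : IsPrimitiveRoot ζ k) (N : ℕ) :
    ∃ U : PowerSeries K, PowerSeries.constantCoeff U ≠ 0 ∧
      denomSeries N ζ = PowerSeries.X ^ (N / k) * U := by
  classical
  have h : ∀ j : ℕ, ∃ u : PowerSeries K, PowerSeries.constantCoeff u ≠ 0 ∧
      (1 ≤ j → 1 - PowerSeries.C (ζ ^ (-(j : ℤ))) * expSeries (-(j : K)) =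
        PowerSeries.X ^ (if k ∣ j then 1 else 0) * u) := fun j => by
    by_cases hj : 1 ≤ j
    · obtain ⟨u, hu, h⟩ := exists_factor hζ hj
      exact ⟨u, hu, fun _ => h⟩
    · exact ⟨1, by simp, fun h => absurd h hj⟩
  choose u hu h using h
  refine ⟨∏ j ∈ Finset.Icc 1 N, u j, ?_, ?_⟩
  · rw [map_prod]
    exact Finset.prod_ne_zero_iff.2 fun j _ => hu j
  · rw [denomSeries, Finset.prod_congr rfl fun j hj => h j (Finset.mem_Icc.1 hj).1,
      Finset.prod_mul_distrib, Finset.prod_pow_eq_pow_sum, ← Finset.card_filter]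
    congr 2
    rw [← Nat.Ioc_filter_dvd_card_eq_div]
    rfl

/-! ### The wave as a trace -/

/-- The sum over primitive `k`-th roots of unity of the conjugates of an element of the
cyclotomic field is its trace. -/
lemma sum_primitiveRoots_eq_trace {k : ℕ} [NeZero k] {K : Type*} [Field K] [Algebra ℚ K]
    [IsCyclotomicExtension {k} ℚ K] {ζ : K}
    (hζ : IsPrimitiveRoot ζ k) (c : ℂ → ℂ) (x : K)
    (h : ∀ σ : K →ₐ[ℚ] ℂ, c (σ ζ) = σ x) :
    ∑ ρ ∈ primitiveRoots k ℂ, c ρ = ((Algebra.trace ℚ K x : ℚ) : ℂ) := by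
  have hirr := Polynomial.cyclotomic.irreducible_rat (NeZero.pos k)
  have : FiniteDimensional ℚ K :=
    IsCyclotomicExtension.finiteDimensional {k} ℚ _
  have htr := trace_eq_sum_embeddings (K := ℚ) (L := K) ℂ (x := x)
  rw [eq_ratCast] at htr
  rw [htr, ← Finset.sum_coe_sort]
  refine (Fintype.sum_equiv (hζ.embeddingsEquivPrimitiveRoots ℂ hirr) _ _ fun σ => ?_).symm
  rw [hζ.embeddingsEquivPrimitiveRoots_apply_coe, h σ]

lemma hasResidue_waveIntegrand {k N : ℕ} [NeZero k] (hkN : k ≤ N) {K : Type*} [Field K]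
    [Algebra ℚ K] [IsCyclotomicExtension {k} ℚ K] {ζ : K}
    (hζ : IsPrimitiveRoot ζ k) {U : PowerSeries K}
    (hU : PowerSeries.constantCoeff U ≠ 0)
    (hUd : denomSeries N ζ = PowerSeries.X ^ (N / k) * U) (n : ℤ) :
    HasResidue (waveIntegrand k N n) ((Algebra.trace ℚ K
      (PowerSeries.coeff (N / k - 1)
        (PowerSeries.C (ζ ^ n) * expSeries (n : K) * U⁻¹)) : ℚ) : ℂ) := by
  have hM : 1 ≤ N / k := (Nat.one_le_div_iff (NeZero.pos k)).2 hkN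
  have hirr := Polynomial.cyclotomic.irreducible_rat (NeZero.pos k)
  set x := PowerSeries.coeff (N / k - 1)
        (PowerSeries.C (ζ ^ n) * expSeries (n : K) * U⁻¹) with hx
  have key : ∀ σ : K →ₐ[ℚ] ℂ, HasResidue (fun z =>
      (σ ζ) ^ n * Complex.exp ((n : ℂ) * z) /
      ∏ j ∈ Finset.Icc 1 N, (1 - (σ ζ) ^ (-(j : ℤ)) * Complex.exp (-(j : ℤ) * z))) (σ x) := by
    intro σ
    set s : K →+* ℂ := σ.toRingHom with hs
    have hsU : PowerSeries.constantCoeff (PowerSeries.map s U) ≠ 0 := by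
      rw [← PowerSeries.coeff_zero_eq_constantCoeff_apply, PowerSeries.coeff_map,
        PowerSeries.coeff_zero_eq_constantCoeff_apply]
      exact (map_ne_zero s).2 hU
    have hD := represents_denomSeries N (s ζ)
    rw [← map_denomSeries, hUd, map_mul, map_pow, PowerSeries.map_X] at hD
    have hF := (Represents.const ((s ζ) ^ n)).mul (Represents.exp (n : ℂ))
    have hres := hasResidue_div hM hF hD hsU
    have hinv : (PowerSeries.map s U)⁻¹ = PowerSeries.map s U⁻¹ := by
      rw [PowerSeries.inv_eq_iff_mul_eq_one hsU, ← map_mul, PowerSeries.inv_mul_cancel U hU,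
        map_one]
    have hcoe : PowerSeries.coeff (N / k - 1)
        (PowerSeries.C ((s ζ) ^ n) * expSeries (n : ℂ) * (PowerSeries.map s U)⁻¹) = s x := by
      rw [hx, ← PowerSeries.coeff_map, hinv]
      congr 1
      rw [map_mul, map_mul, map_expSeries, PowerSeries.map_C, map_zpow₀ s, map_intCast]
    rw [hcoe] at hres
    exact hres
  -- Every primitive root is a conjugate of `ζ`, so `key` gives a residue for each summand.
  have hex : ∀ ρ : ℂ, ∃ c : ℂ, ρ ∈ primitiveRoots k ℂ →
      ∃ σ : K →ₐ[ℚ] ℂ, σ ζ = ρ ∧ c = σ x := fun ρ => by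
    by_cases hρ : ρ ∈ primitiveRoots k ℂ
    · obtain ⟨σ, hσ⟩ := (hζ.embeddingsEquivPrimitiveRoots ℂ hirr).surjective ⟨ρ, hρ⟩
      refine ⟨σ x, fun _ => ⟨σ, ?_, rfl⟩⟩
      rw [← hζ.embeddingsEquivPrimitiveRoots_apply_coe ℂ hirr, hσ]
    · exact ⟨0, fun h => absurd h hρ⟩
  choose c hc using hex
  have hcσ : ∀ σ : K →ₐ[ℚ] ℂ, c (σ ζ) = σ x := fun σ => by
    obtain ⟨τ, hτ, h⟩ := hc (σ ζ) (by
      rw [← hζ.embeddingsEquivPrimitiveRoots_apply_coe ℂ hirr]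
      exact Subtype.coe_prop _)
    have : τ = σ := (hζ.embeddingsEquivPrimitiveRoots ℂ hirr).injective (Subtype.ext hτ)
    rw [h, this]
  rw [← sum_primitiveRoots_eq_trace hζ c x hcσ]
  refine HasResidue.sum _ fun ρ hρ => ?_
  obtain ⟨σ, rfl, h⟩ := hc ρ hρ
  rw [h]
  exact key σ

lemma IsWave.eq_of_hasResidue {k N : ℕ} {n : ℤ} {W c : ℂ} (hW : IsWave k N n W)
    (h : HasResidue (waveIntegrand k N n) c) : W = c := by
  obtain ⟨ε, hε, hW⟩ := hW
  obtain ⟨r, hr, hr'⟩ := (h.and (Ioo_mem_nhdsGT hε)).exists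
  rw [← hW r hr'.1 hr'.2, hr.2]
  have := Complex.two_pi_I_ne_zero
  field_simp

/-- **Proposition 2.3**: each wave `W_k(N,·)` is given by `k` rational polynomials
of degree at most `⌊N/k⌋ - 1`, selected according to `n mod k`, and for every
factorization `k = b·c` with `c ≥ 2` the polynomials in each congruence class
mod `b` sum to zero. -/
theorem wave_polynomials
    (W : ℕ → ℕ → ℤ → ℂ)
    (hW : ∀ k N : ℕ, ∀ n : ℤ, 1 ≤ k → 1 ≤ N → IsWave k N n (W k N n)) :
    ∀ N k : ℕ, 1 ≤ k → k ≤ N →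
      ∃ w : ℕ → Polynomial ℚ,
        (∀ j : ℕ, j < k → (w j).natDegree ≤ N / k - 1) ∧
        (∀ n : ℤ, W k N n = (((w (n % (k : ℤ)).toNat).eval (n : ℚ) : ℚ) : ℂ)) ∧
        (∀ b c : ℕ, 1 ≤ b → 2 ≤ c → k = b * c → ∀ l : ℕ, l < b →
          ∑ i ∈ Finset.range c, w (l + i * b) = 0) := by
  intro N k hk hkN
  have : NeZero k := ⟨by omega⟩
  -- Taking the field abstract leaves a single `ℚ`-algebra structure in scope.
  obtain ⟨K, _, _, _⟩ : ∃ (K : Type) (_ : Field K) (_ : Algebra ℚ K),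
      IsCyclotomicExtension {k} ℚ K :=
    ⟨_, _, _, CyclotomicField.isCyclotomicExtension k ℚ⟩
  have : CharZero K := algebraRat.charZero K
  have hζ := IsCyclotomicExtension.zeta_spec k ℚ K
  set ζ := IsCyclotomicExtension.zeta k ℚ K with hζdef
  obtain ⟨U, hU, hUd⟩ := exists_denomSeries_eq hζ N
  have hM : 1 ≤ N / k := (Nat.one_le_div_iff (by omega)).2 hkN
  refine ⟨fun l => ∑ i ∈ Finset.range (N / k), Polynomial.monomial i
    (Algebra.trace ℚ K
      (ζ ^ l * PowerSeries.coeff (N / k - 1 - i) U⁻¹) / (i.factorial : ℚ)), ?_, ?_, ?_⟩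
  · intro j _
    refine Polynomial.natDegree_sum_le_of_forall_le _ _ fun i hi => ?_
    exact (Polynomial.natDegree_monomial_le _).trans (by have := Finset.mem_range.1 hi; omega)
  · intro n
    rw [(hW k N n hk (by omega)).eq_of_hasResidue (hasResidue_waveIntegrand hkN hζ hU hUd n)]
    congr 1
    have hpow : ζ ^ n = ζ ^ (n % (k : ℤ)).toNat := by
      rw [← zpow_natCast, Int.toNat_of_nonneg (Int.emod_nonneg _ (by omega))]
      conv_lhs => rw [← Int.emod_add_mul_ediv n k]
      rw [zpow_add₀ (hζ.ne_zero (by omega)), zpow_mul, zpow_natCast, hζ.pow_eq_one, one_zpow,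
        mul_one]
    rw [mul_assoc, PowerSeries.coeff_C_mul, hpow, PowerSeries.coeff_mul,
      Finset.Nat.sum_antidiagonal_eq_sum_range_succ_mk, Nat.succ_eq_add_one,
      Nat.sub_add_cancel hM, Finset.mul_sum, map_sum, Polynomial.eval_finsetSum]
    refine Finset.sum_congr rfl fun i _ => ?_
    rw [Polynomial.eval_monomial]
    -- The factor `n ^ i / i!` is rational, so it comes out of the trace.
    have : ζ ^ (n % (k : ℤ)).toNat * (PowerSeries.coeff i (expSeries (n : K)) *
        PowerSeries.coeff (N / k - 1 - i) U⁻¹) = ((n : ℚ) ^ i / (i.factorial : ℚ)) •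
        (ζ ^ (n % (k : ℤ)).toNat * PowerSeries.coeff (N / k - 1 - i) U⁻¹) := by
      rw [Algebra.smul_def, expSeries, PowerSeries.coeff_mk]
      simp only [map_div₀, map_pow, map_intCast, map_natCast]
      ring
    rw [this, map_smul, smul_eq_mul]
    ring
  · intro b c hb hc hkbc l _
    rw [Finset.sum_comm]
    refine Finset.sum_eq_zero fun i _ => ?_
    -- `ζ ^ b` is a primitive `c`-th root of unity, so its powers sum to zero.
    have hgeom : ∑ x ∈ Finset.range c, ζ ^ (l + x * b) = 0 := by
      have hζb : IsPrimitiveRoot (ζ ^ b) c := hζ.pow (by omega) hkbc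
      have h0 := hζb.geom_sum_eq_zero (by omega)
      simp only [pow_add, mul_comm _ b, pow_mul]
      rw [← Finset.mul_sum, h0, mul_zero]
    rw [← map_sum, ← Finset.sum_div, ← map_sum, ← Finset.sum_mul, hgeom, zero_mul, map_zero,
      zero_div, map_zero]

end
end

section
/- For every integer k ≥ 1 and every n ∈ ℤ, W_k(k,n) = c_k(n)/k²; and for every integer k ≥ 2 and every n ∈ ℤ, W_k(k+1,n) = −(1/k²) · ∑_{j=0}^{k−1} B_1(j/k) · c_k(j − n). -/
/-!
At `z = 0` the factor `1 - ρ^{-j} e^{-jz}` vanishes only when `k ∣ j`. For `N = k`, and for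
`N = k + 1` when `k ≥ 2`, the index `j = k` is the only such one, so every summand of the
integrand has at most a simple pole, and Cauchy's formula (`IsWave.eq_sum`) gives
`W_k(N,n) = ∑_ρ ρ^n / (k ∏_{j ≠ k} (1 - ρ^{-j}))`.

Since `∏_{0 < j < k} (1 - ρ^{-j}) = k`, this is `c_k(n) / k²` for `N = k`. For `N = k + 1` there is
the extra factor `1 - ρ^{-(k+1)} = 1 - ρ^{-1}` in the denominator; after the substitution
`ρ ↦ ρ⁻¹`, the identity `∑_{j<k} B₁(j/k) ρ^j = 1 / (ρ - 1)`
(`IsPrimitiveRoot.sum_bernoulli_mul_pow`) expands `1 / (1 - ρ)` into the stated sum.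
-/

open Finset

noncomputable section

/-- Ramanujan sum `c_k(n) = ∑_ρ ρ^n` over primitive `k`-th roots of unity. -/
def ramanujanSum (k : ℕ) (n : ℤ) : ℂ := ∑ ρ ∈ primitiveRoots k ℂ, ρ ^ n

/-- Cauchy's integral formula in the form needed here: if `z` times the integrand extends across `0`
to a function `G` analytic at `0`, the wave is `G 0`. -/
lemma IsWave.eq_of_analyticAt {k N : ℕ} {n : ℤ} {W : ℂ} (h : IsWave k N n W) {G : ℂ → ℂ}
    (hG : AnalyticAt ℂ G 0) (hGW : ∀ z ≠ 0, waveIntegrand k N n z = z⁻¹ * G z) : W = G 0 := by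
  obtain ⟨ε, hε, h⟩ := h
  obtain ⟨δ, hδ, hd⟩ := Metric.eventually_nhds_iff.1 hG.eventually_analyticAt
  have hm : 0 < min ε δ := lt_min hε hδ
  have hr : 0 < min ε δ / 2 := half_pos hm
  have hrε : min ε δ / 2 < ε := (half_lt_self hm).trans_le (min_le_left _ _)
  have hrδ : min ε δ / 2 < δ := (half_lt_self hm).trans_le (min_le_right _ _)
  rw [← h _ hr hrε]
  have hcongr : (∮ z in C(0, min ε δ / 2), waveIntegrand k N n z) =
      ∮ z in C(0, min ε δ / 2), (z - 0)⁻¹ • G z := by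
    refine circleIntegral.integral_congr hr.le fun z hz => ?_
    have hz0 : z ≠ 0 := by
      rintro rfl
      simp at hz
      linarith
    simp [hGW z hz0]
  have hdiff : DifferentiableOn ℂ G (Metric.closedBall 0 (min ε δ / 2)) := fun z hz =>
    (hd (lt_of_le_of_lt hz hrδ)).differentiableAt.differentiableWithinAt
  rw [hcongr, hdiff.circleIntegral_sub_inv_smul (Metric.mem_ball_self hr), smul_eq_mul,
    ← mul_assoc, one_div_mul_cancel Complex.two_pi_I_ne_zero, one_mul]

/-- When `j = k` is the only index in `1, …, N` divisible by `k`, each summand of the integrand has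
a simple pole at `0`, coming from the factor `1 - e^{-kz} ~ kz`. -/
lemma IsWave.eq_sum {k N : ℕ} {n : ℤ} {W : ℂ} (h : IsWave k N n W) (hk : 1 ≤ k) (hkN : k ≤ N)
    (hN : ∀ j ∈ (Finset.Icc 1 N).erase k, ¬ k ∣ j) :
    W = ∑ ρ ∈ primitiveRoots k ℂ,
      ρ ^ n / (k * ∏ j ∈ (Finset.Icc 1 N).erase k, (1 - ρ⁻¹ ^ j)) := by
  have hk0 : (k : ℂ) ≠ 0 := by exact_mod_cast (by omega : k ≠ 0)
  set e : ℂ → ℂ := fun z => 1 - Complex.exp (-k * z) with he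
  have hder : HasDerivAt e k 0 := by
    have h1 : HasDerivAt (fun z : ℂ => -(k : ℂ) * z) (-k) 0 := by
      simpa using (hasDerivAt_id (0 : ℂ)).const_mul (-(k : ℂ))
    simpa [he] using h1.cexp.const_sub 1
  -- `g z = (1 - e^{-kz}) / z`, extended by `g 0 = k`.
  set g : ℂ → ℂ := dslope e 0 with hg
  have hg0 : g 0 = k := by rw [hg, dslope_same, hder.deriv]
  have hgan : AnalyticAt ℂ g 0 := by
    have hd : DifferentiableOn ℂ g Set.univ := by
      rw [hg, Complex.differentiableOn_dslope Filter.univ_mem]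
      exact Differentiable.differentiableOn (by fun_prop)
    exact hd.analyticAt Filter.univ_mem
  have hge : ∀ z, e z = z * g z := fun z => by
    have := sub_smul_dslope e 0 z
    simp only [sub_zero, smul_eq_mul] at this
    rw [hg, this]
    simp [he]
  set P : ℂ → ℂ → ℂ := fun ρ z =>
    ∏ j ∈ (Finset.Icc 1 N).erase k, (1 - ρ⁻¹ ^ j * Complex.exp (-j * z)) with hP
  have hPan : ∀ ρ, AnalyticAt ℂ (P ρ) 0 := fun ρ => by
    have hd : Differentiable ℂ (P ρ) := by
      rw [hP]
      fun_prop
    exact hd.analyticAt 0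
  have hP0 : ∀ ρ, P ρ 0 = ∏ j ∈ (Finset.Icc 1 N).erase k, (1 - ρ⁻¹ ^ j) := fun ρ => by
    simp [hP]
  have key := h.eq_of_analyticAt
    (G := fun z => ∑ ρ ∈ primitiveRoots k ℂ, ρ ^ n * Complex.exp (n * z) / (g z * P ρ z)) ?_ ?_
  · simpa [hg0, hP0] using key
  · refine Finset.analyticAt_fun_sum _ fun ρ hρ => ?_
    have hρ' := (isPrimitiveRoot_of_mem_primitiveRoots hρ).inv
    refine AnalyticAt.div ?_ (hgan.mul (hPan ρ)) ?_
    · have hd : Differentiable ℂ fun z : ℂ => ρ ^ n * Complex.exp (n * z) := by fun_prop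
      exact hd.analyticAt 0
    · simp only [hg0, hP0]
      refine mul_ne_zero hk0 (Finset.prod_ne_zero_iff.2 fun j hj h0 => hN j hj ?_)
      exact (hρ'.pow_eq_one_iff_dvd j).1 (sub_eq_zero.1 h0).symm
  · intro z _
    rw [waveIntegrand, Finset.mul_sum]
    refine Finset.sum_congr rfl fun ρ hρ => ?_
    have hρ' := (isPrimitiveRoot_of_mem_primitiveRoots hρ).inv
    have hprod : ∏ j ∈ Finset.Icc 1 N,
        (1 - ρ ^ (-(j : ℤ)) * Complex.exp (-(j : ℤ) * z)) = z * (g z * P ρ z) := by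
      rw [← Finset.mul_prod_erase _ _ (Finset.mem_Icc.2 ⟨hk, hkN⟩), ← mul_assoc, ← hge]
      simp only [← inv_zpow', zpow_natCast, Int.cast_natCast, hρ'.pow_eq_one, one_mul, he, hP]
    rw [hprod]
    simp only [div_eq_mul_inv, mul_inv]
    ring

lemma IsPrimitiveRoot.prod_erase_one_sub_pow {k : ℕ} (hk : 1 ≤ k) {ζ : ℂ}
    (hζ : IsPrimitiveRoot ζ k) : ∏ j ∈ (Finset.Icc 1 k).erase k, (1 - ζ ^ j) = k := by
  obtain ⟨m, rfl⟩ : ∃ m, k = m + 1 := ⟨k - 1, by omega⟩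
  have hset : (Finset.Icc 1 (m + 1)).erase (m + 1) = Finset.Ico 1 (m + 1) := by
    ext j
    simp only [Finset.mem_erase, Finset.mem_Icc, Finset.mem_Ico]
    omega
  rw [hset, Finset.prod_Ico_eq_prod_range]
  simpa [add_comm] using hζ.prod_one_sub_pow_eq_order

lemma sum_range_mul_pow_mul_sub_one (x : ℂ) (m : ℕ) :
    (∑ j ∈ Finset.range m, (j : ℂ) * x ^ j) * (x - 1) =
      m * x ^ m - x * ∑ j ∈ Finset.range m, x ^ j := by
  induction m with
  | zero => simp
  | succ m ih =>
    rw [Finset.sum_range_succ, Finset.sum_range_succ, add_mul, ih]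
    push_cast
    ring

/-- The discrete Fourier transform of `B₁(j/k)` at a nontrivial frequency. -/
lemma IsPrimitiveRoot.sum_bernoulli_mul_pow {k : ℕ} (hk : 2 ≤ k) {ζ : ℂ}
    (hζ : IsPrimitiveRoot ζ k) :
    ∑ j ∈ Finset.range k, ((j : ℂ) / k - 1 / 2) * ζ ^ j = 1 / (ζ - 1) := by
  have hk0 : (k : ℂ) ≠ 0 := by exact_mod_cast (by omega : k ≠ 0)
  have h1 : ζ - 1 ≠ 0 := sub_ne_zero.2 (hζ.ne_one (by omega))
  have hs := sum_range_mul_pow_mul_sub_one ζ k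
  have hgeom := hζ.geom_sum_eq_zero (by omega)
  rw [hgeom, hζ.pow_eq_one] at hs
  have hsplit : ∑ j ∈ Finset.range k, ((j : ℂ) / k - 1 / 2) * ζ ^ j =
      (∑ j ∈ Finset.range k, (j : ℂ) * ζ ^ j) / k - 1 / 2 * ∑ j ∈ Finset.range k, ζ ^ j := by
    rw [Finset.sum_div, Finset.mul_sum, ← Finset.sum_sub_distrib]
    exact Finset.sum_congr rfl fun j _ => by ring
  rw [hsplit, hgeom, eq_div_iff h1, mul_zero, sub_zero, div_mul_eq_mul_div, hs]
  field_simp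
  simp

lemma sum_primitiveRoots_inv {k : ℕ} (hk : 1 ≤ k) (f : ℂ → ℂ) :
    ∑ ρ ∈ primitiveRoots k ℂ, f ρ = ∑ ρ ∈ primitiveRoots k ℂ, f ρ⁻¹ := by
  have hinv : ∀ ρ ∈ primitiveRoots k ℂ, ρ⁻¹ ∈ primitiveRoots k ℂ := fun ρ hρ =>
    (mem_primitiveRoots hk).2 (isPrimitiveRoot_of_mem_primitiveRoots hρ).inv
  exact Finset.sum_nbij' (·⁻¹) (·⁻¹) hinv hinv (by simp) (by simp) (by simp)

/-- **Proposition 2.5, first two identities**: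
`W_k(k,n) = c_k(n)/k²` and
`W_k(k+1,n) = -(1/k²) ∑_{j=0}^{k-1} B₁(j/k) c_k(j-n)` where `B₁(x) = x - 1/2`. -/
theorem wave_kk_and_wave_k_kplus1
    (W : ℕ → ℕ → ℤ → ℂ)
    (hW : ∀ k N : ℕ, ∀ n : ℤ, 1 ≤ k → 1 ≤ N → IsWave k N n (W k N n)) :
    (∀ k : ℕ, 1 ≤ k → ∀ n : ℤ,
      W k k n = ramanujanSum k n / (k : ℂ) ^ 2) ∧
    (∀ k : ℕ, 2 ≤ k → ∀ n : ℤ,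
      W k (k + 1) n =
        -(1 / (k : ℂ) ^ 2) *
          ∑ j ∈ Finset.range k,
            ((j : ℂ) / (k : ℂ) - 1 / 2) * ramanujanSum k ((j : ℤ) - n)) := by
  constructor
  · intro k hk n
    rw [(hW k k n hk hk).eq_sum hk le_rfl fun j hj hd => ?_, ramanujanSum, Finset.sum_div]
    · refine Finset.sum_congr rfl fun ρ hρ => ?_
      rw [(isPrimitiveRoot_of_mem_primitiveRoots hρ).inv.prod_erase_one_sub_pow hk, sq]
    · simp only [Finset.mem_erase, Finset.mem_Icc] at hj
      have := Nat.le_of_dvd (by omega) hd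
      omega
  · intro k hk n
    have hk1 : 1 ≤ k := by omega
    have hk0 : (k : ℂ) ≠ 0 := by exact_mod_cast (by omega : k ≠ 0)
    rw [(hW k (k + 1) n hk1 (by omega)).eq_sum hk1 (by omega) fun j hj hd => ?_]
    · have hset : (Finset.Icc 1 (k + 1)).erase k =
          insert (k + 1) ((Finset.Icc 1 k).erase k) := by
        ext j
        simp only [Finset.mem_erase, Finset.mem_Icc, Finset.mem_insert]
        omega
      simp only [ramanujanSum, Finset.mul_sum]
      rw [sum_primitiveRoots_inv hk1, Finset.sum_comm]
      refine Finset.sum_congr rfl fun ρ hρ => ?_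
      have hρ' := isPrimitiveRoot_of_mem_primitiveRoots hρ
      have hρ0 : ρ ≠ 0 := hρ'.ne_zero (by omega)
      have h1 : ρ - 1 ≠ 0 := sub_ne_zero.2 (hρ'.ne_one (by omega))
      have h2 : 1 - ρ ≠ 0 := sub_ne_zero.2 (hρ'.ne_one (by omega)).symm
      have hterm : ∑ j ∈ Finset.range k,
          -(1 / (k : ℂ) ^ 2) * (((j : ℂ) / k - 1 / 2) * ρ ^ ((j : ℤ) - n)) =
          -(1 / (k : ℂ) ^ 2) * (ρ ^ n)⁻¹ * (1 / (ρ - 1)) := by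
        rw [← hρ'.sum_bernoulli_mul_pow hk, Finset.mul_sum]
        refine Finset.sum_congr rfl fun j _ => ?_
        rw [zpow_sub₀ hρ0, zpow_natCast]
        ring
      rw [hterm, hset, Finset.prod_insert (by simp), inv_inv,
        hρ'.prod_erase_one_sub_pow hk1, pow_succ, hρ'.pow_eq_one, one_mul, inv_zpow,
        ← neg_sub 1 ρ]
      field_simp
    · -- `k ∣ k + 1` would force `k = 1`; every other index is smaller than `k`.
      simp only [Finset.mem_erase, Finset.mem_Icc] at hj
      have hle := Nat.le_of_dvd (by omega) hd
      obtain rfl : j = k + 1 := by omega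
      have := Nat.le_of_dvd one_pos ((Nat.dvd_add_right (dvd_refl k)).1 hd)
      omega

end
end

section
/- For every integer k ≥ 3 and every n ∈ ℤ, W_k(k+2,n) = −(1/(4k²)) · ∑_{j=0}^{k−1} [3·B_1(j/k) + k·B_2(j/k)] · c_k(j − n) − ((−1)^n/(4k²)) · ∑_{j=0}^{ℓ−1} B_1(j/ℓ) · c_ℓ(j − n), where ℓ := k if k ≡ 0 (mod 4), ℓ := k/2 if k ≡ 2 (mod 4), and ℓ := 2k if k is odd. -/
/-! For `k ≥ 3` the only index `1 ≤ j ≤ k + 2` with `ρ ^ j = 1` is `j = k`, so the integrand has a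
simple pole at `0`. Writing `1 - exp (-k z) = z φ(z)` with `φ(0) = k` and using
`∏_{j=1}^{k-1} (1 - ρ⁻ʲ) = k`, the residue is
`k⁻² ∑_ρ ρⁿ / ((1 - ρ⁻¹) (1 - ρ⁻²)) = k⁻² ∑_ρ ρ⁻ⁿ / ((1 - ρ) (1 - ρ²))`
(`IsWave.eq_residue`, `residue_eq_sum`). The partial fraction decomposition
`1 / ((1 - x) (1 - x²)) = (1/2) / (1 - x)² + (1/4) / (1 - x) + (1/4) / (1 + x)`
is then matched with the finite Fourier expansions
`∑_{j<m} B₁(j/m) xʲ = 1 / (x - 1)` and `m ∑_{j<m} B₂(j/m) xʲ = -2 x / (x - 1)²`, valid for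
`x ^ m = 1`, `x ≠ 1`. The first two fractions give the sum over `j < k`. The last one is `B₁`
evaluated at `-ρ`, and `ρ ↦ -ρ` maps the primitive `k`-th roots of unity bijectively onto the
primitive `l`-th ones, which yields the sum over `j < l` and the sign `(-1) ^ n`. -/

open Finset

noncomputable section

/-! ### The residue at the simple pole -/

/-- Residue of a function with at most a simple pole at `0`. -/
lemma circleIntegral_eq_of_simple_pole {f H : ℂ → ℂ} (hH : AnalyticAt ℂ H 0)
    (hf : ∀ z, z ≠ 0 → f z = z⁻¹ * H z) :
    ∃ δ > (0 : ℝ), ∀ r : ℝ, 0 < r → r < δ →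
      (∮ z in C(0, r), f z) = 2 * (Real.pi : ℂ) * Complex.I * H 0 := by
  obtain ⟨δ, hδ, hball⟩ := Metric.eventually_nhds_iff_ball.1 hH.eventually_analyticAt
  refine ⟨δ, hδ, fun r hr hrδ => ?_⟩
  have hd : DifferentiableOn ℂ H (Metric.closedBall 0 r) := fun z hz =>
    (hball z (Metric.closedBall_subset_ball hrδ hz)).differentiableAt.differentiableWithinAt
  have h := hd.circleIntegral_sub_inv_smul (w := 0) (Metric.mem_ball_self hr)
  rw [smul_eq_mul] at h
  rw [← h]
  refine circleIntegral.integral_congr hr.le fun z hz => ?_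
  have hz0 : z ≠ 0 := by
    rintro rfl
    simp at hz
    exact hr.ne hz
  simp [hf z hz0]

lemma IsWave.eq_residue {k N : ℕ} {n : ℤ} {W : ℂ} (hW : IsWave k N n W) {H : ℂ → ℂ}
    (hH : AnalyticAt ℂ H 0) (hf : ∀ z, z ≠ 0 → waveIntegrand k N n z = z⁻¹ * H z) :
    W = H 0 := by
  obtain ⟨ε, hε, h1⟩ := hW
  obtain ⟨δ, hδ, h2⟩ := circleIntegral_eq_of_simple_pole hH hf
  have hm : 0 < min ε δ := lt_min hε hδ
  have hr : min ε δ / 2 < min ε δ := half_lt_self hm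
  rw [← h1 _ (half_pos hm) (hr.trans_le (min_le_left _ _)),
    h2 _ (half_pos hm) (hr.trans_le (min_le_right _ _))]
  have hpi : (Real.pi : ℂ) ≠ 0 := by exact_mod_cast Real.pi_ne_zero
  field_simp [Complex.I_ne_zero]

/-- The analytic function `(1 - exp (-k z)) / z`, extended to `z = 0` by its limit `k`. -/
def poleFactor (k : ℕ) : ℂ → ℂ := dslope (fun z => 1 - Complex.exp (-(k : ℂ) * z)) 0

lemma poleFactor_zero (k : ℕ) : poleFactor k 0 = k := by
  have h : HasDerivAt (fun z : ℂ => 1 - Complex.exp (-(k : ℂ) * z))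
      (-(Complex.exp (-(k : ℂ) * 0) * (-(k : ℂ) * 1))) 0 :=
    (((hasDerivAt_id (0 : ℂ)).const_mul (-(k : ℂ))).cexp).const_sub 1
  rw [poleFactor, dslope_same, h.deriv]
  simp

lemma mul_poleFactor (k : ℕ) (z : ℂ) :
    z * poleFactor k z = 1 - Complex.exp (-(k : ℂ) * z) := by
  have h := sub_smul_dslope (fun z : ℂ => 1 - Complex.exp (-(k : ℂ) * z)) 0 z
  simpa [poleFactor] using h

lemma analyticAt_poleFactor (k : ℕ) : AnalyticAt ℂ (poleFactor k) 0 := by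
  have hd : Differentiable ℂ (fun z : ℂ => 1 - Complex.exp (-(k : ℂ) * z)) := by fun_prop
  have : DifferentiableOn ℂ (poleFactor k) Set.univ :=
    (Complex.differentiableOn_dslope Filter.univ_mem).2 hd.differentiableOn
  exact this.analyticAt Filter.univ_mem

/-- The denominators with `j ≠ k`, evaluated at the pole. -/
lemma prod_erase_eq {k : ℕ} (hk : 3 ≤ k) {ρ : ℂ} (hρ : IsPrimitiveRoot ρ k) :
    ∏ j ∈ (Finset.Icc 1 (k + 2)).erase k, (1 - ρ ^ (-(j : ℤ))) =
      k * ((1 - ρ⁻¹) * (1 - (ρ⁻¹) ^ 2)) := by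
  obtain ⟨m, rfl⟩ : ∃ m, k = m + 1 := ⟨k - 1, by omega⟩
  have hset : (Finset.Icc 1 (m + 1 + 2)).erase (m + 1) =
      insert (m + 2) (insert (m + 3) ((Finset.range m).image (· + 1))) := by
    ext j
    simp only [Finset.mem_erase, Finset.mem_Icc, Finset.mem_insert, Finset.mem_image,
      Finset.mem_range]
    constructor
    · rintro ⟨h1, h2, h3⟩
      by_cases h : j ≤ m
      · exact Or.inr (Or.inr ⟨j - 1, by omega, by omega⟩)
      · omega
    · rintro (h | h | ⟨i, hi, rfl⟩) <;> omega
  have hp : (ρ⁻¹) ^ (m + 1) = 1 := hρ.inv.pow_eq_one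
  have h2 : (ρ⁻¹) ^ (m + 2) = ρ⁻¹ := by rw [pow_succ, hp, one_mul]
  have h3 : (ρ⁻¹) ^ (m + 3) = (ρ⁻¹) ^ 2 := by
    rw [show m + 3 = m + 1 + 2 by rfl, pow_add, hp, one_mul]
  have hz : ∀ j : ℕ, ρ ^ (-(j : ℤ)) = (ρ⁻¹) ^ j := fun j => by
    rw [zpow_neg, zpow_natCast, inv_pow]
  simp only [hz]
  rw [hset, Finset.prod_insert, Finset.prod_insert, Finset.prod_image, h2, h3,
    hρ.inv.prod_one_sub_pow_eq_order]
  · push_cast; ring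
  · intro a _ b _ h; simpa using h
  · simp
  · simp

/-- The wave `W_k(k+2,n)` as a sum over roots of unity, with `ρ` replaced by `ρ⁻¹`. -/
lemma residue_eq_sum {k : ℕ} (hk : 3 ≤ k) {n : ℤ} {W : ℂ} (hW : IsWave k (k + 2) n W) :
    W = 1 / (k : ℂ) ^ 2 * ∑ ρ ∈ primitiveRoots k ℂ, ρ ^ (-n) / ((1 - ρ) * (1 - ρ ^ 2)) := by
  have hk0 : (k : ℂ) ≠ 0 := by exact_mod_cast (by omega : k ≠ 0)
  have hpr : ∀ ρ ∈ primitiveRoots k ℂ, IsPrimitiveRoot ρ k := fun ρ h =>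
    (mem_primitiveRoots (by omega)).1 h
  have hne : ∀ ρ ∈ primitiveRoots k ℂ, (1 - ρ) * (1 - ρ ^ 2) ≠ 0 := fun ρ h =>
    mul_ne_zero (sub_ne_zero.2 ((hpr ρ h).ne_one (by omega)).symm)
      (sub_ne_zero.2 ((hpr ρ h).pow_ne_one_of_pos_of_lt (by omega) (by omega)).symm)
  have hinv : ∀ ρ ∈ primitiveRoots k ℂ, ρ⁻¹ ∈ primitiveRoots k ℂ := fun ρ h =>
    (mem_primitiveRoots (by omega)).2 (hpr ρ h).inv
  let H : ℂ → ℂ := fun z => ∑ ρ ∈ primitiveRoots k ℂ, ρ ^ n * Complex.exp ((n : ℂ) * z) /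
      (poleFactor k z * ∏ j ∈ (Finset.Icc 1 (k + 2)).erase k,
        (1 - ρ ^ (-(j : ℤ)) * Complex.exp (-(j : ℤ) * z)))
  have h0 : ∀ ρ ∈ primitiveRoots k ℂ, (poleFactor k 0 * ∏ j ∈ (Finset.Icc 1 (k + 2)).erase k,
      (1 - ρ ^ (-(j : ℤ)) * Complex.exp (-(j : ℤ) * 0))) =
      k * (k * ((1 - ρ⁻¹) * (1 - (ρ⁻¹) ^ 2))) := by
    intro ρ hρ
    simp only [mul_zero, Complex.exp_zero, mul_one]
    rw [poleFactor_zero, prod_erase_eq hk (hpr ρ hρ)]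
  have hH : AnalyticAt ℂ H 0 := by
    refine Finset.analyticAt_fun_sum _ fun ρ hρ => AnalyticAt.fun_div ?_ ?_ ?_
    · fun_prop
    · refine (analyticAt_poleFactor k).fun_mul (Finset.analyticAt_fun_prod _ fun j _ => ?_)
      fun_prop
    · rw [h0 ρ hρ]
      exact mul_ne_zero hk0 (mul_ne_zero hk0 (hne _ (hinv ρ hρ)))
  have hf : ∀ z, z ≠ 0 → waveIntegrand k (k + 2) n z = z⁻¹ * H z := by
    intro z hz
    simp only [waveIntegrand, H, Finset.mul_sum]
    refine Finset.sum_congr rfl fun ρ hρ => ?_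
    have hkmem : k ∈ Finset.Icc 1 (k + 2) := Finset.mem_Icc.2 ⟨by omega, by omega⟩
    rw [← Finset.mul_prod_erase _ _ hkmem]
    have : 1 - ρ ^ (-(k : ℤ)) * Complex.exp (-(k : ℤ) * z) = z * poleFactor k z := by
      rw [mul_poleFactor, zpow_neg, zpow_natCast, (hpr ρ hρ).pow_eq_one]
      simp
    rw [this, mul_assoc z, div_mul_eq_div_div, div_eq_mul_inv _ z]
    ring
  rw [hW.eq_residue hH hf, Finset.mul_sum]
  refine Finset.sum_nbij' (fun ρ => ρ⁻¹) (fun ρ => ρ⁻¹) hinv hinv (by simp) (by simp) ?_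
  intro ρ hρ
  rw [h0 ρ hρ]
  have := hne _ (hinv ρ hρ)
  simp only [mul_zero, Complex.exp_zero, mul_one, inv_zpow', neg_neg]
  field_simp

/-! ### Finite Fourier expansions of Bernoulli polynomials -/

lemma sum_mul_pow (m : ℕ) (x : ℂ) :
    (x - 1) * ∑ j ∈ Finset.range m, (j : ℂ) * x ^ j =
      m * x ^ m - x * ∑ j ∈ Finset.range m, x ^ j := by
  induction m with
  | zero => simp
  | succ m ih =>
    rw [Finset.sum_range_succ, Finset.sum_range_succ, mul_add, ih]; push_cast; ring

lemma sum_sq_mul_pow (m : ℕ) (x : ℂ) :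
    (x - 1) * ∑ j ∈ Finset.range m, (j : ℂ) ^ 2 * x ^ j =
      m ^ 2 * x ^ m - 2 * x * ∑ j ∈ Finset.range m, (j : ℂ) * x ^ j -
        x * ∑ j ∈ Finset.range m, x ^ j := by
  induction m with
  | zero => simp
  | succ m ih =>
    rw [Finset.sum_range_succ, Finset.sum_range_succ, Finset.sum_range_succ, mul_add, ih]
    push_cast; ring

lemma geom_sum_eq_zero_of_pow_eq_one {m : ℕ} {x : ℂ} (hx : x ^ m = 1) (h1 : x ≠ 1) :
    ∑ j ∈ Finset.range m, x ^ j = 0 := by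
  rw [geom_sum_eq h1, hx, sub_self, zero_div]

lemma sum_mul_pow_eq {m : ℕ} {x : ℂ} (hx : x ^ m = 1) (h1 : x ≠ 1) :
    ∑ j ∈ Finset.range m, (j : ℂ) * x ^ j = m / (x - 1) := by
  rw [eq_div_iff (sub_ne_zero.2 h1), mul_comm, sum_mul_pow, hx,
    geom_sum_eq_zero_of_pow_eq_one hx h1]
  ring

lemma sum_sq_mul_pow_eq {m : ℕ} {x : ℂ} (hx : x ^ m = 1) (h1 : x ≠ 1) :
    ∑ j ∈ Finset.range m, (j : ℂ) ^ 2 * x ^ j =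
      m ^ 2 / (x - 1) - 2 * x * m / (x - 1) ^ 2 := by
  have h : x - 1 ≠ 0 := sub_ne_zero.2 h1
  apply mul_left_cancel₀ h
  rw [sum_sq_mul_pow, hx, geom_sum_eq_zero_of_pow_eq_one hx h1, sum_mul_pow_eq hx h1]
  field_simp
  ring

/-- Finite Fourier expansion of `B₁`. -/
lemma sum_bernoulli_one {m : ℕ} (hm : m ≠ 0) {x : ℂ} (hx : x ^ m = 1) (h1 : x ≠ 1) :
    ∑ j ∈ Finset.range m, ((j : ℂ) / m - 1 / 2) * x ^ j = 1 / (x - 1) := by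
  have hm' : (m : ℂ) ≠ 0 := by exact_mod_cast hm
  have : ∀ j ∈ Finset.range m, ((j : ℂ) / m - 1 / 2) * x ^ j =
      1 / m * (j * x ^ j) - 1 / 2 * x ^ j := fun j _ => by ring
  rw [Finset.sum_congr rfl this, Finset.sum_sub_distrib, ← Finset.mul_sum, ← Finset.mul_sum,
    geom_sum_eq_zero_of_pow_eq_one hx h1, sum_mul_pow_eq hx h1]
  field_simp
  ring

/-- Finite Fourier expansion of `B₂`. -/
lemma sum_bernoulli_two {m : ℕ} (hm : m ≠ 0) {x : ℂ} (hx : x ^ m = 1) (h1 : x ≠ 1) :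
    ∑ j ∈ Finset.range m, (m : ℂ) * (((j : ℂ) / m) ^ 2 - (j : ℂ) / m + 1 / 6) * x ^ j =
      -2 * x / (x - 1) ^ 2 := by
  have hm' : (m : ℂ) ≠ 0 := by exact_mod_cast hm
  have h : x - 1 ≠ 0 := sub_ne_zero.2 h1
  have : ∀ j ∈ Finset.range m,
      (m : ℂ) * (((j : ℂ) / m) ^ 2 - (j : ℂ) / m + 1 / 6) * x ^ j =
      1 / m * (j ^ 2 * x ^ j) - j * x ^ j + m / 6 * x ^ j := fun j _ => by
    field_simp
  rw [Finset.sum_congr rfl this, Finset.sum_add_distrib, Finset.sum_sub_distrib,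
    ← Finset.mul_sum, ← Finset.mul_sum,
    geom_sum_eq_zero_of_pow_eq_one hx h1, sum_mul_pow_eq hx h1, sum_sq_mul_pow_eq hx h1]
  field_simp
  ring

/-- Interchange of the sum over residues with the one defining the Ramanujan sum. -/
lemma sum_mul_ramanujanSum {m : ℕ} (hm : 0 < m) (n : ℤ) (a : ℕ → ℂ) :
    ∑ j ∈ Finset.range m, a j * ramanujanSum m ((j : ℤ) - n) =
      ∑ ρ ∈ primitiveRoots m ℂ, ρ ^ (-n) * ∑ j ∈ Finset.range m, a j * ρ ^ j := by
  simp only [ramanujanSum, Finset.mul_sum]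
  rw [Finset.sum_comm]
  refine Finset.sum_congr rfl fun ρ hρ => Finset.sum_congr rfl fun j _ => ?_
  have h0 : ρ ≠ 0 := ((mem_primitiveRoots hm).1 hρ).ne_zero hm.ne'
  rw [sub_eq_add_neg, zpow_add₀ h0, zpow_natCast]
  ring

/-! ### The substitution `ρ ↦ -ρ` -/

/-- The order of `-ρ` for `ρ` a primitive `k`-th root of unity. -/
def negOrder (k : ℕ) : ℕ := if k % 4 = 0 then k else if k % 4 = 2 then k / 2 else 2 * k

lemma isPrimitiveRoot_neg_of_odd {k : ℕ} (hk : k % 2 = 1) {ρ : ℂ} (hρ : IsPrimitiveRoot ρ k) :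
    IsPrimitiveRoot (-ρ) (2 * k) := by
  have h2 : orderOf (-1 : ℂ) = 2 := by simp [orderOf_neg_one]
  have hc : (orderOf (-1 : ℂ)).Coprime (orderOf ρ) := by
    rw [h2, ← hρ.eq_orderOf]
    exact (Nat.coprime_two_left).2 (Nat.odd_iff.2 hk)
  have := (Commute.all (-1 : ℂ) ρ).orderOf_mul_eq_mul_orderOf_of_coprime hc
  rw [h2, ← hρ.eq_orderOf, neg_one_mul] at this
  rw [← this]
  exact IsPrimitiveRoot.orderOf _

lemma isPrimitiveRoot_half {m : ℕ} (hm : 0 < m) {ρ : ℂ} (hρ : IsPrimitiveRoot ρ (2 * m)) :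
    ρ ^ m = -1 := by
  have h : IsPrimitiveRoot (ρ ^ m) 2 := hρ.pow (by omega) (by ring)
  exact h.eq_neg_one_of_two_right

lemma isPrimitiveRoot_neg {k : ℕ} (hk : 0 < k) {ρ : ℂ} (hρ : IsPrimitiveRoot ρ k) :
    IsPrimitiveRoot (-ρ) (negOrder k) := by
  unfold negOrder
  split_ifs with h0 h2
  · -- `-ρ = ρ ^ (k / 2 + 1)` with `k / 2 + 1` coprime to `k = 4 t`
    obtain ⟨t, rfl⟩ : ∃ t, k = 2 * (2 * t) := ⟨k / 4, by omega⟩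
    have h := isPrimitiveRoot_half (by omega) hρ
    have hneg : -ρ = ρ ^ (2 * t + 1) := by rw [pow_succ, h]; ring
    rw [hneg]
    refine hρ.pow_of_coprime _ ?_
    have h1 : (2 * t + 1).Coprime (2 * t) := by simp
    have h3 : (2 * t + 1).Coprime 2 := by simp
    exact h3.mul_right h1
  · -- `-ρ = ρ ^ (m + 1)` with `k = 2 m`, `m` odd, is the power `(m + 1) / 2` of `ρ ^ 2`
    obtain ⟨t, rfl⟩ : ∃ t, k = 2 * (2 * t + 1) := ⟨k / 4, by omega⟩
    have h := isPrimitiveRoot_half (by omega) hρ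
    have hneg : -ρ = (ρ ^ 2) ^ (t + 1) := by
      rw [← pow_mul, show 2 * (t + 1) = (2 * t + 1) + 1 by ring, pow_succ, h]; ring
    rw [hneg, Nat.mul_div_cancel_left _ (by norm_num)]
    refine (hρ.pow hk rfl).pow_of_coprime _ ?_
    rw [show 2 * t + 1 = t + (t + 1) by ring]
    simp
  · exact isPrimitiveRoot_neg_of_odd (by omega) hρ

lemma negOrder_negOrder (k : ℕ) : negOrder (negOrder k) = k := by
  unfold negOrder
  split_ifs <;> omega

lemma negOrder_ge {k : ℕ} (hk : 3 ≤ k) : 3 ≤ negOrder k := by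
  unfold negOrder
  split_ifs <;> omega

/-- The substitution `ρ ↦ -ρ` in sums over primitive roots. -/
lemma sum_primitiveRoots_negOrder {k : ℕ} (hk : 3 ≤ k) (f : ℂ → ℂ) :
    ∑ σ ∈ primitiveRoots (negOrder k) ℂ, f σ = ∑ ρ ∈ primitiveRoots k ℂ, f (-ρ) := by
  have hl := negOrder_ge hk
  refine Finset.sum_nbij' (fun ρ => -ρ) (fun ρ => -ρ) ?_ ?_ (by simp) (by simp) (by simp)
  · intro σ hσ
    have := isPrimitiveRoot_neg (by omega) ((mem_primitiveRoots (by omega)).1 hσ)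
    rw [negOrder_negOrder] at this
    exact (mem_primitiveRoots (by omega)).2 this
  · intro ρ hρ
    exact (mem_primitiveRoots (by omega)).2
      (isPrimitiveRoot_neg (by omega) ((mem_primitiveRoots (by omega)).1 hρ))

/-! ### The formula for the wave -/

/-- **Proposition 2.5, third identity**: formula for `W_k(k+2,n)`, with
`B₁(x) = x - 1/2`, `B₂(x) = x² - x + 1/6`. -/
theorem wave_k_kplus2
    (W : ℕ → ℕ → ℤ → ℂ)
    (hW : ∀ k N : ℕ, ∀ n : ℤ, 1 ≤ k → 1 ≤ N → IsWave k N n (W k N n)) :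
    ∀ k : ℕ, 3 ≤ k → ∀ n : ℤ, ∀ l : ℕ,
      l = (if k % 4 = 0 then k else if k % 4 = 2 then k / 2 else 2 * k) →
      W k (k + 2) n =
        -(1 / (4 * (k : ℂ) ^ 2)) *
            ∑ j ∈ Finset.range k,
              (3 * ((j : ℂ) / (k : ℂ) - 1 / 2) +
                  (k : ℂ) * (((j : ℂ) / (k : ℂ)) ^ 2 - (j : ℂ) / (k : ℂ) + 1 / 6)) *
                ramanujanSum k ((j : ℤ) - n) -
          ((-1 : ℂ) ^ n / (4 * (k : ℂ) ^ 2)) *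
            ∑ j ∈ Finset.range l,
              ((j : ℂ) / (l : ℂ) - 1 / 2) * ramanujanSum l ((j : ℤ) - n) := by
  intro k hk n l hl
  change l = negOrder k at hl
  subst hl
  have hl3 := negOrder_ge hk
  have hk0 : (k : ℂ) ≠ 0 := by exact_mod_cast (by omega : k ≠ 0)
  rw [residue_eq_sum hk (hW k (k + 2) n (by omega) (by omega)),
    sum_mul_ramanujanSum (by omega), sum_mul_ramanujanSum (by omega),
    sum_primitiveRoots_negOrder hk, Finset.mul_sum, Finset.mul_sum, Finset.mul_sum,
    ← Finset.sum_sub_distrib]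
  refine Finset.sum_congr rfl fun ρ hρ => ?_
  have hp : IsPrimitiveRoot ρ k := (mem_primitiveRoots (by omega)).1 hρ
  have hn := isPrimitiveRoot_neg (by omega) hp
  have h1 : ρ - 1 ≠ 0 := sub_ne_zero.2 (hp.ne_one (by omega))
  have h2 : ρ + 1 ≠ 0 := fun h =>
    hn.ne_one (by omega) (by linear_combination -h)
  have hB := sum_bernoulli_one (by omega) hp.pow_eq_one (sub_ne_zero.1 h1)
  have hB2 := sum_bernoulli_two (by omega) hp.pow_eq_one (sub_ne_zero.1 h1)
  have hBn := sum_bernoulli_one (by omega) hn.pow_eq_one (hn.ne_one (by omega))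
  have hsum : ∑ j ∈ Finset.range k, (3 * ((j : ℂ) / (k : ℂ) - 1 / 2) +
      (k : ℂ) * (((j : ℂ) / (k : ℂ)) ^ 2 - (j : ℂ) / (k : ℂ) + 1 / 6)) * ρ ^ j =
      3 * (1 / (ρ - 1)) + -2 * ρ / (ρ - 1) ^ 2 := by
    rw [← hB, ← hB2, Finset.mul_sum, ← Finset.sum_add_distrib]
    exact Finset.sum_congr rfl fun j _ => by ring
  have hsign : (-1 : ℂ) ^ n * (-ρ) ^ (-n) = ρ ^ (-n) := by
    rw [← neg_one_mul ρ, mul_zpow, ← mul_assoc, ← zpow_add₀ (by norm_num), add_neg_cancel,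
      zpow_zero, one_mul]
  have h3 : -ρ - 1 ≠ 0 := fun h => h2 (by linear_combination -h)
  have h4 : 1 - ρ ≠ 0 := fun h => h1 (by linear_combination -h)
  have h5 : 1 - ρ ^ 2 ≠ 0 := by
    rw [show 1 - ρ ^ 2 = (1 - ρ) * (ρ + 1) by ring]
    exact mul_ne_zero h4 h2
  -- partial fractions in `ρ`
  have hpf : 1 / ((1 - ρ) * (1 - ρ ^ 2)) =
      -(1 / 4) * (3 * (1 / (ρ - 1)) + -2 * ρ / (ρ - 1) ^ 2) - 1 / 4 * (1 / (-ρ - 1)) := by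
    have e1 : ρ - 1 = -(1 - ρ) := by ring
    have e2 : -ρ - 1 = -(ρ + 1) := by ring
    rw [show 1 - ρ ^ 2 = (1 - ρ) * (ρ + 1) by ring, e1, e2]
    field_simp
    ring
  rw [hsum, hBn]
  have : (-1 : ℂ) ^ n / (4 * (k : ℂ) ^ 2) * ((-ρ) ^ (-n) * (1 / (-ρ - 1))) =
      1 / (4 * (k : ℂ) ^ 2) * (ρ ^ (-n) * (1 / (-ρ - 1))) := by
    rw [← hsign]; ring
  rw [this, div_eq_mul_one_div (ρ ^ (-n)), hpf]
  ring

end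
end

section
/- Let A = (a_1, …, a_N) be a finite list of positive integers and k ≥ 1 an integer. Then there exist polynomials w_{k,0}, w_{k,1}, …, w_{k,k−1} ∈ ℚ[x], each of degree at most (#{i : k divides a_i}) − 1, such that W_k(A,n) = w_{k, n mod k}(n) for every n ∈ ℤ; moreover, for every factorization k = b·c with integers b ≥ 1, c ≥ 2 and every 0 ≤ ℓ ≤ b−1, the polynomial identity w_{k,ℓ} + w_{k,ℓ+b} + w_{k,ℓ+2b} + ⋯ + w_{k,ℓ+(c−1)b} = 0 holds. -/
/-!
Group the factors of the integrand according to whether `k ∣ a`. For a primitive `k`-th root of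
unity `ρ` the factor `1 - ρ^{-a} e^{-az}` vanishes at `z = 0` exactly when `k ∣ a`, and then to
first order because `a > 0`. With `m = #{i : k ∣ aᵢ}` this gives, for `z ≠ 0`,
`1 / ∏ᵢ (1 - ρ^{-aᵢ} e^{-aᵢ z}) = z^{-m} G_ρ(z)` with `G_ρ` analytic at `0`
(`exists_isGaloisJet_prod_inv`). By Cauchy's formula the wave vanishes if `m = 0`, and for
`m = M + 1` Leibniz' rule yields
`W_k(A,n) = (1/M!) ∑_{i ≤ M} C(M,i) nⁱ ∑_ρ ρⁿ G_ρ^{(M-i)}(0)`.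

The inner sums depend only on `n mod k`. They are rational: for each `j` the derivatives
`G_ρ^{(j)}(0)` are the images `σ x` of one `x ∈ ℚ(ζ_k)` under the embeddings `σ : ζ ↦ ρ`
(`IsGaloisFamily`),
since this property passes through Leibniz' rule for products, inverses and division by `z`, so each
inner sum is a trace from `ℚ(ζ_k)` to `ℚ`. This gives polynomials of degree at most `M`. Finally,
summing `ρ^(l+ib)` over `i < c` with `k = bc`, `c ≥ 2` gives `ρ^l` times the sum of all `c`-th roots
of unity, which is zero, so the polynomials cancel coefficient by coefficient.
-/

open Finset

noncomputable section

/-- Integrand for the general wave `W_k(A,n)`, where `A` is a list of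
positive integers. -/
def waveIntegrandA (A : List ℕ) (k : ℕ) (n : ℤ) (z : ℂ) : ℂ :=
  ∑ ρ ∈ primitiveRoots k ℂ,
    ρ ^ n * Complex.exp ((n : ℂ) * z) /
      (A.map fun a => 1 - ρ ^ (-(a : ℤ)) * Complex.exp (-(a : ℤ) * z)).prod

/-- `W` is the value of the `k`-th wave `W_k(A,n)`. -/
def IsWaveA (A : List ℕ) (k : ℕ) (n : ℤ) (W : ℂ) : Prop :=
  ∃ ε > (0 : ℝ), ∀ r : ℝ, 0 < r → r < ε →
    (1 / (2 * (Real.pi : ℂ) * Complex.I)) * (∮ z in C(0, r), waveIntegrandA A k n z) = W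

/-! ### Galois-equivariant families indexed by primitive roots of unity -/

/-- Mathlib's instance for its own `ℚ`-algebra structure on the cyclotomic field, restated for the
structure `DivisionRing.toRatAlgebra` that instance search finds; the two agree definitionally. -/
instance isCyclotomicExtension_rat (k : ℕ) [NeZero k] :
    IsCyclotomicExtension {k} ℚ (CyclotomicField k ℚ) :=
  CyclotomicField.isCyclotomicExtension k ℚ

/-- A family `f ρ` of complex numbers, relevant only at primitive `k`-th roots of unity `ρ`, is a
Galois family if some `x` in the `k`-th cyclotomic field has `σ x = f (σ ζ)` for every complex
embedding `σ`, where `ζ` is the chosen primitive `k`-th root of unity in that field. -/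
def IsGaloisFamily (k : ℕ) [NeZero k] (f : ℂ → ℂ) : Prop :=
  ∃ x : CyclotomicField k ℚ, ∀ σ : CyclotomicField k ℚ →ₐ[ℚ] ℂ,
    f (σ (IsCyclotomicExtension.zeta k ℚ (CyclotomicField k ℚ))) = σ x

namespace IsGaloisFamily

variable {k : ℕ} [NeZero k] {f g : ℂ → ℂ}

lemma isPrimitiveRoot_map_zeta (σ : CyclotomicField k ℚ →ₐ[ℚ] ℂ) :
    IsPrimitiveRoot (σ (IsCyclotomicExtension.zeta k ℚ (CyclotomicField k ℚ))) k :=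
  (IsCyclotomicExtension.zeta_spec k ℚ (CyclotomicField k ℚ)).map_of_injective σ.injective

lemma congr (hf : IsGaloisFamily k f) (h : ∀ ρ, IsPrimitiveRoot ρ k → g ρ = f ρ) :
    IsGaloisFamily k g := by
  obtain ⟨x, hx⟩ := hf
  exact ⟨x, fun σ => by rw [h _ (isPrimitiveRoot_map_zeta σ), hx]⟩

lemma ratCast (q : ℚ) : IsGaloisFamily k (fun _ => (q : ℂ)) :=
  ⟨(q : CyclotomicField k ℚ), fun σ => by simp⟩

lemma zpow_root (n : ℤ) : IsGaloisFamily k (fun ρ => ρ ^ n) :=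
  ⟨IsCyclotomicExtension.zeta k ℚ (CyclotomicField k ℚ) ^ n, fun σ => by simp⟩

lemma add (hf : IsGaloisFamily k f) (hg : IsGaloisFamily k g) :
    IsGaloisFamily k (fun ρ => f ρ + g ρ) := by
  obtain ⟨x, hx⟩ := hf
  obtain ⟨y, hy⟩ := hg
  exact ⟨x + y, fun σ => by simp [hx, hy]⟩

lemma sub (hf : IsGaloisFamily k f) (hg : IsGaloisFamily k g) :
    IsGaloisFamily k (fun ρ => f ρ - g ρ) := by
  obtain ⟨x, hx⟩ := hf
  obtain ⟨y, hy⟩ := hg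
  exact ⟨x - y, fun σ => by simp [hx, hy]⟩

lemma mul (hf : IsGaloisFamily k f) (hg : IsGaloisFamily k g) :
    IsGaloisFamily k (fun ρ => f ρ * g ρ) := by
  obtain ⟨x, hx⟩ := hf
  obtain ⟨y, hy⟩ := hg
  exact ⟨x * y, fun σ => by simp [hx, hy]⟩

lemma inv (hf : IsGaloisFamily k f) : IsGaloisFamily k (fun ρ => (f ρ)⁻¹) := by
  obtain ⟨x, hx⟩ := hf
  exact ⟨x⁻¹, fun σ => by simp [hx]⟩

lemma sum {ι : Type*} (s : Finset ι) {F : ι → ℂ → ℂ} (h : ∀ i ∈ s, IsGaloisFamily k (F i)) :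
    IsGaloisFamily k (fun ρ => ∑ i ∈ s, F i ρ) := by
  classical
  induction s using Finset.induction_on with
  | empty => simpa using ratCast (k := k) 0
  | insert a s ha ih =>
    refine ((h a (mem_insert_self a s)).add
      (ih fun i hi => h i (mem_insert_of_mem hi))).congr fun ρ _ => ?_
    rw [sum_insert ha]

/-- The sum of a Galois family is the trace of the underlying cyclotomic number. -/
lemma exists_rat_sum (hf : IsGaloisFamily k f) :
    ∃ q : ℚ, ∑ ρ ∈ primitiveRoots k ℂ, f ρ = (q : ℂ) := by
  obtain ⟨x, hx⟩ := hf
  refine ⟨Algebra.trace ℚ (CyclotomicField k ℚ) x, ?_⟩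
  have hζ := IsCyclotomicExtension.zeta_spec k ℚ (CyclotomicField k ℚ)
  have hirr := Polynomial.cyclotomic.irreducible_rat (NeZero.pos k)
  have : FiniteDimensional ℚ (CyclotomicField k ℚ) :=
    IsCyclotomicExtension.finiteDimensional {k} ℚ _
  have ht := trace_eq_sum_embeddings (K := ℚ) (L := CyclotomicField k ℚ) ℂ (x := x)
  rw [eq_ratCast] at ht
  rw [ht, ← Finset.sum_coe_sort]
  refine (Fintype.sum_equiv (hζ.embeddingsEquivPrimitiveRoots ℂ hirr) _ _ fun σ => ?_).symm
  rw [hζ.embeddingsEquivPrimitiveRoots_apply_coe, hx]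

end IsGaloisFamily

/-! ### Families of analytic germs with Galois-equivariant derivatives -/

/-- A family `F ρ` of functions such that, for primitive `k`-th roots of unity `ρ`, `F ρ` is
analytic at `0`, and each derivative at `0` is a Galois family in `ρ`. -/
def IsGaloisJet (k : ℕ) [NeZero k] (F : ℂ → ℂ → ℂ) : Prop :=
  (∀ ρ, IsPrimitiveRoot ρ k → AnalyticAt ℂ (F ρ) 0) ∧
    ∀ j, IsGaloisFamily k (fun ρ => iteratedDeriv j (F ρ) 0)

namespace IsGaloisJet

variable {k : ℕ} [NeZero k] {F G : ℂ → ℂ → ℂ}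

lemma const {c : ℂ → ℂ} (hc : IsGaloisFamily k c) : IsGaloisJet k (fun ρ _ => c ρ) := by
  refine ⟨fun ρ _ => analyticAt_const, fun j => ?_⟩
  by_cases hj : j = 0
  · simpa [iteratedDeriv_const, hj] using hc
  · simpa [iteratedDeriv_const, hj] using IsGaloisFamily.ratCast (k := k) 0

lemma exp (a : ℤ) : IsGaloisJet k (fun _ z => Complex.exp (a * z)) := by
  refine ⟨fun ρ _ => by fun_prop, fun j => ?_⟩
  refine (IsGaloisFamily.ratCast (k := k) ((a : ℚ) ^ j)).congr fun ρ _ => ?_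
  simp [iteratedDeriv_cexp_const_mul]

lemma sub (hF : IsGaloisJet k F) (hG : IsGaloisJet k G) :
    IsGaloisJet k (fun ρ z => F ρ z - G ρ z) := by
  refine ⟨fun ρ h => (hF.1 ρ h).sub (hG.1 ρ h), fun j => ?_⟩
  refine ((hF.2 j).sub (hG.2 j)).congr fun ρ h => ?_
  exact iteratedDeriv_fun_sub (hF.1 ρ h).contDiffAt (hG.1 ρ h).contDiffAt

lemma mul (hF : IsGaloisJet k F) (hG : IsGaloisJet k G) :
    IsGaloisJet k (fun ρ z => F ρ z * G ρ z) := by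
  refine ⟨fun ρ h => (hF.1 ρ h).mul (hG.1 ρ h), fun j => ?_⟩
  have h : IsGaloisFamily k (fun ρ => ∑ i ∈ range (j + 1),
      ((j.choose i : ℚ) : ℂ) * iteratedDeriv i (F ρ) 0 * iteratedDeriv (j - i) (G ρ) 0) :=
    IsGaloisFamily.sum _ fun i _ => ((IsGaloisFamily.ratCast _).mul (hF.2 i)).mul (hG.2 (j - i))
  refine h.congr fun ρ h => ?_
  rw [iteratedDeriv_fun_mul (hF.1 ρ h).contDiffAt (hG.1 ρ h).contDiffAt]
  simp

/-- Leibniz' rule for `F ρ * (F ρ)⁻¹ = 1` determines the derivatives of `(F ρ)⁻¹` recursively. -/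
lemma inv (hF : IsGaloisJet k F) (h0 : ∀ ρ, IsPrimitiveRoot ρ k → F ρ 0 ≠ 0) :
    IsGaloisJet k (fun ρ z => (F ρ z)⁻¹) := by
  have han : ∀ ρ, IsPrimitiveRoot ρ k → AnalyticAt ℂ (fun z => (F ρ z)⁻¹) 0 :=
    fun ρ h => (hF.1 ρ h).inv (h0 ρ h)
  refine ⟨han, fun j => ?_⟩
  induction j using Nat.strong_induction_on with
  | _ j ih =>
    have hsum : IsGaloisFamily k (fun ρ => ∑ i ∈ range j,
        ((j.choose (i + 1) : ℚ) : ℂ) * iteratedDeriv (i + 1) (F ρ) 0 *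
          iteratedDeriv (j - (i + 1)) (fun z => (F ρ z)⁻¹) 0) :=
      IsGaloisFamily.sum _ fun i hi =>
        ((IsGaloisFamily.ratCast _).mul (hF.2 (i + 1))).mul
          (ih _ (by have := mem_range.1 hi; omega))
    have hone : IsGaloisFamily k (fun _ => (((if j = 0 then 1 else 0 : ℚ)) : ℂ)) :=
      IsGaloisFamily.ratCast _
    refine ((hone.sub hsum).mul (hF.2 0).inv).congr fun ρ h => ?_
    have hev : (fun z => F ρ z * (F ρ z)⁻¹) =ᶠ[nhds 0] fun _ => (1 : ℂ) := by
      filter_upwards [(hF.1 ρ h).continuousAt.eventually_ne (h0 ρ h)] with z hz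
      exact mul_inv_cancel₀ hz
    have hL := hev.iteratedDeriv_eq j
    rw [iteratedDeriv_fun_mul (hF.1 ρ h).contDiffAt (han ρ h).contDiffAt, sum_range_succ',
      iteratedDeriv_const] at hL
    have h00 := h0 ρ h
    simp only [iteratedDeriv_zero, Nat.choose_zero_right, Nat.sub_zero, Nat.cast_one,
      one_mul] at hL ⊢
    rw [eq_mul_inv_iff_mul_eq₀ h00]
    rw [eq_sub_iff_add_eq, mul_comm, add_comm]
    split_ifs at hL ⊢ <;> simpa using hL

/-- The derivatives of `F ρ` at `0` can be read off from those of `z ↦ z * F ρ z`. -/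
lemma of_id_mul (hF : IsGaloisJet k (fun ρ z => z * F ρ z))
    (han : ∀ ρ, IsPrimitiveRoot ρ k → AnalyticAt ℂ (F ρ) 0) : IsGaloisJet k F := by
  refine ⟨han, fun j => ?_⟩
  refine ((IsGaloisFamily.ratCast (k := k) ((j + 1 : ℚ)⁻¹)).mul (hF.2 (j + 1))).congr
    fun ρ h => ?_
  have hL := iteratedDeriv_fun_mul (n := j + 1) (f := fun z : ℂ => z) (x := 0)
    contDiffAt_id (han ρ h).contDiffAt
  have hsingle : ∑ i ∈ range (j + 1 + 1), ((j + 1).choose i : ℂ) *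
      iteratedDeriv i (fun z : ℂ => z) 0 * iteratedDeriv (j + 1 - i) (F ρ) 0 =
      (j + 1) * iteratedDeriv j (F ρ) 0 := by
    rw [Finset.sum_eq_single 1]
    · simp [iteratedDeriv_fun_id_zero]
    · intro i _ hi
      simp [iteratedDeriv_fun_id_zero, hi]
    · intro h1
      simp at h1
  rw [hsingle] at hL
  rw [hL]
  have hj : (j + 1 : ℂ) ≠ 0 := by exact_mod_cast Nat.succ_ne_zero j
  push_cast
  field_simp

end IsGaloisJet

/-! ### The polar part of the integrand -/

/-- For `k ∣ a` the reciprocal factor has a simple pole at `0`; for `k ∤ a` it is analytic there. -/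
lemma exists_isGaloisJet_factor (k : ℕ) [NeZero k] (a : ℕ) (ha : 0 < a) :
    ∃ G : ℂ → ℂ → ℂ, IsGaloisJet k G ∧ ∀ ρ, IsPrimitiveRoot ρ k → ∀ z : ℂ, z ≠ 0 →
      (1 - ρ ^ (-(a : ℤ)) * Complex.exp (-(a : ℤ) * z))⁻¹ =
        (z ^ (if k ∣ a then 1 else 0))⁻¹ * G ρ z := by
  by_cases hka : k ∣ a
  · have hρ : ∀ ρ : ℂ, IsPrimitiveRoot ρ k → ρ ^ (-(a : ℤ)) = 1 := fun ρ h => by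
      rw [zpow_neg, zpow_natCast, (h.pow_eq_one_iff_dvd a).2 hka, inv_one]
    set f : ℂ → ℂ := fun z => 1 - Complex.exp ((-(a : ℤ) : ℤ) * z) with hf
    have hfan : AnalyticAt ℂ f 0 := by fun_prop
    have hf0 : f 0 = 0 := by simp [hf]
    have hmul : ∀ z, z * dslope f 0 z = f z := fun z => by
      simpa [hf0] using sub_smul_dslope f 0 z
    have hjet : IsGaloisJet k (fun _ => dslope f 0) := by
      refine IsGaloisJet.of_id_mul ?_ fun ρ _ => ?_
      · simp only [hmul]
        refine IsGaloisJet.sub (IsGaloisJet.const ?_) (IsGaloisJet.exp _)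
        simpa using IsGaloisFamily.ratCast (k := k) 1
      · obtain ⟨p, hp⟩ := hfan
        exact ⟨_, hp.has_fpower_series_dslope_fslope⟩
    have hne : dslope f 0 0 ≠ 0 := by
      have hd : HasDerivAt f (-(Complex.exp ((-(a : ℤ) : ℤ) * (0 : ℂ)) *
          (((-(a : ℤ) : ℤ) : ℂ) * 1))) 0 :=
        (((hasDerivAt_id (0 : ℂ)).const_mul _).cexp).const_sub 1
      rw [dslope_same, hd.deriv]
      simpa using ha.ne'
    refine ⟨_, hjet.inv fun _ _ => hne, fun ρ h z hz => ?_⟩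
    rw [hρ ρ h, if_pos hka, pow_one, ← mul_inv, hmul, hf, one_mul]
    push_cast
    rfl
  · refine ⟨fun ρ z => (1 - ρ ^ (-(a : ℤ)) * Complex.exp ((-(a : ℤ) : ℤ) * z))⁻¹,
      IsGaloisJet.inv (IsGaloisJet.sub (IsGaloisJet.const ?_)
        ((IsGaloisJet.const (IsGaloisFamily.zpow_root _)).mul (IsGaloisJet.exp _))) ?_,
      fun ρ h z hz => ?_⟩
    · simpa using IsGaloisFamily.ratCast (k := k) 1
    · intro ρ h h0
      apply hka
      rw [← h.pow_eq_one_iff_dvd]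
      simp only [mul_zero, Complex.exp_zero, mul_one, zpow_neg, zpow_natCast, sub_eq_zero] at h0
      rw [← inv_inj, ← h0, inv_one]
    · rw [if_neg hka, pow_zero, inv_one, one_mul]
      push_cast
      rfl

/-- The product has a zero of order `m = #{i : k ∣ aᵢ}` at `0`, and `z^m` times its
reciprocal extends to a Galois-equivariant analytic family. -/
lemma exists_isGaloisJet_prod_inv (k : ℕ) [NeZero k] (A : List ℕ) (hA : ∀ a ∈ A, 0 < a) :
    ∃ G : ℂ → ℂ → ℂ, IsGaloisJet k G ∧ ∀ ρ, IsPrimitiveRoot ρ k → ∀ z : ℂ, z ≠ 0 →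
      ((A.map fun a : ℕ => 1 - ρ ^ (-(a : ℤ)) * Complex.exp (-(a : ℤ) * z)).prod)⁻¹ =
        (z ^ (A.countP (fun a => decide (k ∣ a))))⁻¹ * G ρ z := by
  induction A with
  | nil =>
    refine ⟨fun _ _ => 1, IsGaloisJet.const ?_, fun ρ _ z _ => by simp⟩
    simpa using IsGaloisFamily.ratCast (k := k) 1
  | cons a A ih =>
    obtain ⟨G, hG, hGe⟩ := ih fun b hb => hA b (List.mem_cons_of_mem a hb)
    obtain ⟨H, hH, hHe⟩ := exists_isGaloisJet_factor k a (hA a List.mem_cons_self)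
    refine ⟨_, hG.mul hH, fun ρ h z hz => ?_⟩
    rw [List.map_cons, List.prod_cons, mul_inv, hGe ρ h z hz, hHe ρ h z hz, List.countP_cons,
      pow_add, mul_inv]
    simp only [decide_eq_true_eq]
    ring

/-! ### The residue -/

/-- Cauchy's formula for the residue at `0` of `z^{-m} H(z)` summed over a finite family. -/
lemma wave_eq_of_eq_inv_pow_mul {A : List ℕ} {k : ℕ} {n : ℤ} {W : ℂ} (hW : IsWaveA A k n W)
    (m : ℕ) (H : ℂ → ℂ → ℂ) (hH : ∀ ρ ∈ primitiveRoots k ℂ, AnalyticAt ℂ (H ρ) 0)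
    (hint : ∀ z : ℂ, z ≠ 0 →
      waveIntegrandA A k n z = ∑ ρ ∈ primitiveRoots k ℂ, (z ^ m)⁻¹ * H ρ z) :
    (m = 0 → W = 0) ∧ ∀ M, m = M + 1 →
      W = (M.factorial : ℂ)⁻¹ * ∑ ρ ∈ primitiveRoots k ℂ, iteratedDeriv M (H ρ) 0 := by
  obtain ⟨ε, hε, hW⟩ := hW
  have hev : ∀ᶠ z in nhds (0 : ℂ), ∀ ρ ∈ primitiveRoots k ℂ, AnalyticAt ℂ (H ρ) z :=
    (Filter.eventually_all_finset _).2 fun ρ hρ => (hH ρ hρ).eventually_analyticAt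
  obtain ⟨δ, hδ, hball⟩ := Metric.eventually_nhds_iff_ball.1 hev
  obtain ⟨r, hr0, hr⟩ := exists_between (lt_min hε hδ)
  have hd : ∀ ρ ∈ primitiveRoots k ℂ, DifferentiableOn ℂ (H ρ) (Metric.closedBall 0 r) :=
    fun ρ hρ z hz => (hball z (Metric.closedBall_subset_ball
      (hr.trans_le (min_le_right _ _)) hz) ρ hρ).differentiableAt.differentiableWithinAt
  have hne : ∀ z ∈ Metric.sphere (0 : ℂ) r, z ≠ 0 := fun z hz h0 => by
    rw [h0] at hz
    simp [hr0.ne] at hz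
  have hci : ∀ ρ ∈ primitiveRoots k ℂ, CircleIntegrable (fun z => (z ^ m)⁻¹ * H ρ z) 0 r :=
    fun ρ hρ => ContinuousOn.circleIntegrable hr0.le <|
      ((continuousOn_id.pow m).inv₀ fun z hz => pow_ne_zero m (hne z hz)).mul
        ((hd ρ hρ).continuousOn.mono Metric.sphere_subset_closedBall)
  rw [← hW r hr0 (hr.trans_le (min_le_left _ _)),
    circleIntegral.integral_congr hr0.le (fun z hz => hint z (hne z hz)),
    circleIntegral.integral_fun_sum hci]
  constructor
  · rintro rfl
    rw [Finset.sum_eq_zero, mul_zero]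
    intro ρ hρ
    simpa using (((hd ρ hρ).mono
      Metric.closure_ball_subset_closedBall).diffContOnCl).circleIntegral_eq_zero hr0.le
  · rintro M rfl
    rw [Finset.mul_sum, Finset.mul_sum]
    refine Finset.sum_congr rfl fun ρ hρ => ?_
    have hC := (hd ρ hρ).circleIntegral_one_div_sub_center_pow_smul hr0 M
    simp only [sub_zero, smul_eq_mul, one_div] at hC
    rw [hC]
    have := Complex.two_pi_I_ne_zero
    field_simp

/-! ### Periodicity and cancellation of the polynomials -/

lemma zpow_emod_toNat {k : ℕ} (hk : 1 ≤ k) {ρ : ℂ} (h : IsPrimitiveRoot ρ k) (n : ℤ) :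
    ρ ^ (n % (k : ℤ)).toNat = ρ ^ n := by
  have hk0 : (k : ℤ) ≠ 0 := by exact_mod_cast (Nat.one_le_iff_ne_zero.1 hk)
  have hρ : ρ ≠ 0 := h.ne_zero (by omega)
  rw [← zpow_natCast, Int.toNat_of_nonneg (Int.emod_nonneg n hk0)]
  conv_rhs => rw [← Int.emod_add_mul_ediv n k, zpow_add₀ hρ, zpow_mul, zpow_natCast, h.pow_eq_one,
    one_zpow, mul_one]

lemma sum_pow_progression_eq_zero {b c : ℕ} (hb : 1 ≤ b) (hc : 2 ≤ c) {ρ : ℂ}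
    (h : IsPrimitiveRoot ρ (b * c)) (l : ℕ) : ∑ i ∈ range c, ρ ^ (l + i * b) = 0 := by
  have hp : IsPrimitiveRoot (ρ ^ b) c := h.pow (by positivity) rfl
  have hs := hp.geom_sum_eq_zero (by omega)
  calc ∑ i ∈ range c, ρ ^ (l + i * b) = ρ ^ l * ∑ i ∈ range c, (ρ ^ b) ^ i := by
        rw [Finset.mul_sum]
        exact Finset.sum_congr rfl fun i _ => by rw [pow_add, mul_comm i b, pow_mul]
    _ = 0 := by rw [hs, mul_zero]

/-- **Proposition 2.8**: each general wave `W_k(A,·)` is given by `k` rational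
polynomials of degree at most `#{i : k ∣ aᵢ} - 1`, selected according to
`n mod k`, and for every factorization `k = b·c` with `c ≥ 2` the polynomials
in each congruence class mod `b` sum to zero. -/
theorem general_wave_polynomials
    (W : List ℕ → ℕ → ℤ → ℂ)
    (hW : ∀ A : List ℕ, ∀ k : ℕ, ∀ n : ℤ, 1 ≤ k → IsWaveA A k n (W A k n))
    (A : List ℕ) (hA : ∀ a ∈ A, 0 < a) (k : ℕ) (hk : 1 ≤ k) :
    ∃ w : ℕ → Polynomial ℚ,
      (∀ j : ℕ, j < k → (w j).natDegree ≤ A.countP (fun a => decide (k ∣ a)) - 1) ∧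
      (∀ n : ℤ, W A k n = (((w (n % (k : ℤ)).toNat).eval (n : ℚ) : ℚ) : ℂ)) ∧
      (∀ b c : ℕ, 1 ≤ b → 2 ≤ c → k = b * c → ∀ l : ℕ, l < b →
        ∑ i ∈ Finset.range c, w (l + i * b) = 0) := by
  have : NeZero k := ⟨by omega⟩
  obtain ⟨G, hG, hGe⟩ := exists_isGaloisJet_prod_inv k A hA
  set m := A.countP (fun a => decide (k ∣ a)) with hm
  have hprim : ∀ ρ ∈ primitiveRoots k ℂ, IsPrimitiveRoot ρ k := fun ρ hρ =>
    (mem_primitiveRoots (by omega)).1 hρ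
  -- The integrand's product ranges over the integer casts of the entries of `A`.
  have hcast : ∀ f : ℤ → ℂ, (List.map f (do let a ← A; pure (a : ℤ))).prod =
      (A.map fun a : ℕ => f a).prod := fun f => by
    simp only [List.pure_def, List.bind_eq_flatMap, ← List.map_eq_flatMap, List.map_map]
    rfl
  have hEan : ∀ n : ℤ, AnalyticAt ℂ (fun z : ℂ => Complex.exp ((n : ℂ) * z)) 0 := fun n => by
    fun_prop
  have hres := fun n : ℤ => wave_eq_of_eq_inv_pow_mul (hW A k n hk) m
    (fun ρ z => ρ ^ n * (Complex.exp ((n : ℂ) * z) * G ρ z))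
    (fun ρ hρ => analyticAt_const.mul ((hEan n).mul (hG.1 ρ (hprim ρ hρ))))
    (fun z hz => Finset.sum_congr rfl fun ρ hρ => by
      rw [div_eq_mul_inv, hcast, hGe ρ (hprim ρ hρ) z hz]
      ring)
  rcases Nat.eq_zero_or_eq_succ_pred m with h0 | hM
  · exact ⟨fun _ => 0, fun j _ => by simp, fun n => by simp [(hres n).1 h0], by simp⟩
  set M := m.pred with hMdef
  have hq : ∀ i j : ℕ, ∃ q : ℚ, ∑ ρ ∈ primitiveRoots k ℂ,
      ρ ^ j * iteratedDeriv (M - i) (G ρ) 0 = (q : ℂ) := fun i j => by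
    simpa using ((IsGaloisFamily.zpow_root (k := k) j).mul (hG.2 (M - i))).exists_rat_sum
  choose q hq using hq
  refine ⟨fun j => ∑ i ∈ range (M + 1),
    Polynomial.monomial i ((M.factorial : ℚ)⁻¹ * M.choose i * q i j), fun j _ => ?_, fun n => ?_,
    fun b c hb hc hbc l _ => ?_⟩
  · refine Polynomial.natDegree_sum_le_of_forall_le _ _ fun i hi => ?_
    refine (Polynomial.natDegree_monomial_le _).trans ?_
    have := mem_range.1 hi
    omega
  · rw [(hres n).2 M hM, Polynomial.eval_finsetSum]
    simp only [Polynomial.eval_monomial]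
    push_cast
    simp only [← hq]
    have hD : ∀ ρ ∈ primitiveRoots k ℂ, iteratedDeriv M
        (fun z => ρ ^ n * (Complex.exp ((n : ℂ) * z) * G ρ z)) 0 =
        ∑ i ∈ range (M + 1), (M.choose i : ℂ) * (n : ℂ) ^ i *
          (ρ ^ (n % (k : ℤ)).toNat * iteratedDeriv (M - i) (G ρ) 0) := fun ρ hρ => by
      rw [iteratedDeriv_const_mul_field, iteratedDeriv_fun_mul (hEan n).contDiffAt
        (hG.1 ρ (hprim ρ hρ)).contDiffAt, zpow_emod_toNat hk (hprim ρ hρ), Finset.mul_sum]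
      refine Finset.sum_congr rfl fun i _ => ?_
      simp only [iteratedDeriv_cexp_const_mul, mul_zero, Complex.exp_zero, mul_one]
      ring
    rw [Finset.sum_congr rfl hD, Finset.sum_comm, Finset.mul_sum]
    refine Finset.sum_congr rfl fun i _ => ?_
    rw [← Finset.mul_sum]
    ring
  · rw [Finset.sum_comm]
    refine Finset.sum_eq_zero fun i _ => ?_
    rw [← map_sum, ← Finset.mul_sum]
    have hz : ∑ j ∈ range c, q i (l + j * b) = 0 := by
      have hz' : ((∑ j ∈ range c, q i (l + j * b) : ℚ) : ℂ) = 0 := by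
        push_cast
        simp only [← hq]
        rw [Finset.sum_comm]
        refine Finset.sum_eq_zero fun ρ hρ => ?_
        rw [← Finset.sum_mul, sum_pow_progression_eq_zero hb hc (hbc ▸ hprim ρ hρ), zero_mul]
      exact_mod_cast hz'
    rw [hz, mul_zero, map_zero]

end
end
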